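/- arXiv:2108.07904 — 7 statements merged into one kernel-verified Lean document; each statement's English description precedes it below -/
import Mathlib

section
/- Let ρ(t,x) be a classical solution of the PDE ∂_t ρ(t,x) = 2(ρ(t)*ρ(t))(2x) − ρ(t,x) for t ≥ 0 and x ≥ 0, with initial condition ρ(0,·) a probability density on [0,∞) with finite mean μ. Then the mean is conserved: d/dt ∫_{[0,∞)} x ρ(t,x) dx = 0 for all t ≥ 0, so ∫_{[0,∞)} x ρ(t,x) dx = μ for all t ≥ 0. -/
/-!
If `X, Y` are independent with density `f`, then `2 (f ⋆ f)(2x)` is the density of the average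
`(X + Y) / 2`, which has the same mean as `X`. So the gain and loss terms of the equation have equal
first moments, and the derivative of the mean is zero. Analytically: almost everywhere
`u * (f ⋆ f) u = ((x f) ⋆ f + f ⋆ (x f)) u`, and the integral of a convolution of integrable
functions is the product of the integrals. The density `ρ t`, given on `[0, ∞)`, is extended by zero
to `ℝ`, so that the interval integral becomes a convolution on the line.
-/

open MeasureTheory

open scoped Convolution

/-- The first moment of `f ⋆ f` is `2 (∫ f) (∫ x f)`: the mean of a sum of two independent
variables with density `f`. -/
lemma integral_id_mul_convolution_self {f : ℝ → ℝ} (hf : Integrable f)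
    (hxf : Integrable fun x => x * f x) :
    ∫ u, u * (∫ y, f y * f (u - y)) = 2 * (∫ x, f x) * ∫ x, x * f x := by
  have h1 := hxf.integrable_convolution (ContinuousLinearMap.mul ℝ ℝ) hf
  have h2 := hf.integrable_convolution (ContinuousLinearMap.mul ℝ ℝ) hxf
  have e1 := hxf.ae_convolution_exists (ContinuousLinearMap.mul ℝ ℝ) hf
  have e2 := hf.ae_convolution_exists (ContinuousLinearMap.mul ℝ ℝ) hxf
  have i1 := integral_convolution (ContinuousLinearMap.mul ℝ ℝ) hxf hf
  have i2 := integral_convolution (ContinuousLinearMap.mul ℝ ℝ) hf hxf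
  have key : ∀ᵐ u : ℝ, u * (∫ y, f y * f (u - y)) =
      ((fun x => x * f x) ⋆[ContinuousLinearMap.mul ℝ ℝ] f) u +
      (f ⋆[ContinuousLinearMap.mul ℝ ℝ] (fun x => x * f x)) u := by
    filter_upwards [e1, e2] with u hu1 hu2
    rw [convolution_def, convolution_def, ← integral_add hu1 hu2, ← integral_const_mul]
    refine integral_congr_ae (Filter.Eventually.of_forall fun y => ?_)
    simp only [ContinuousLinearMap.mul_apply']
    ring
  rw [integral_congr_ae key, integral_add h1 h2, i1, i2]
  simp only [ContinuousLinearMap.mul_apply']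
  ring

/-- The zero extension of `g` from `[0, ∞)` turns the truncated convolution integral over `[0, u]`
into the full one. -/
lemma integral_indicator_mul_indicator (g : ℝ → ℝ) {u : ℝ} (hu : 0 ≤ u) :
    ∫ y, (Set.Ici (0:ℝ)).indicator g y * (Set.Ici (0:ℝ)).indicator g (u - y) =
      ∫ y in (0:ℝ)..u, g y * g (u - y) := by
  rw [intervalIntegral.integral_of_le hu, ← integral_Icc_eq_integral_Ioc,
    ← integral_indicator measurableSet_Icc]
  congr 1
  ext y
  by_cases h0 : 0 ≤ y <;> by_cases h1 : y ≤ u <;> simp [Set.indicator, h0, h1]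

/-- The first moment of the gain term: if `g` has mass one on `[0, ∞)`, the average of two
independent copies has the same mean as one copy. -/
lemma integral_gain_eq (g : ℝ → ℝ) (hg : IntegrableOn g (Set.Ici 0))
    (hxg : IntegrableOn (fun x => x * g x) (Set.Ici 0))
    (hmass : ∫ x in Set.Ici (0:ℝ), g x = 1) :
    ∫ x in Set.Ici (0:ℝ), x * (2 * ∫ y in (0:ℝ)..(2*x), g y * g (2*x - y)) =
      ∫ x in Set.Ici (0:ℝ), x * g x := by
  set f := (Set.Ici (0:ℝ)).indicator g with hf
  have hxf : (fun x => x * f x) = (Set.Ici (0:ℝ)).indicator fun x => x * g x := by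
    ext x
    by_cases h : 0 ≤ x <;> simp [hf, Set.indicator, h]
  have hm := integral_id_mul_convolution_self (f := f)
    (hg.integrable_indicator measurableSet_Ici)
    (by rw [hxf]; exact hxg.integrable_indicator measurableSet_Ici)
  rw [hxf, integral_indicator measurableSet_Ici, hf, integral_indicator measurableSet_Ici, hmass,
    ← hf] at hm
  have hs := Measure.integral_comp_mul_left (fun u => u * ∫ y, f y * f (u - y)) 2
  rw [hm] at hs
  have hl : ∫ x in Set.Ici (0:ℝ), x * (2 * ∫ y in (0:ℝ)..(2*x), g y * g (2*x - y)) =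
      ∫ x, 2 * x * ∫ y, f y * f (2 * x - y) := by
    rw [← integral_indicator measurableSet_Ici]
    congr 1
    ext x
    by_cases h : 0 ≤ x
    · rw [Set.indicator_of_mem (Set.mem_Ici.2 h),
        ← integral_indicator_mul_indicator g (by positivity : 0 ≤ 2 * x)]
      ring
    · rw [Set.indicator_of_notMem (by simpa using h)]
      have hz : ∀ y, f y * f (2 * x - y) = 0 := by
        intro y
        by_cases hy : 0 ≤ y
        · have : ¬ y ≤ 2 * x := by linarith
          simp [hf, Set.indicator, this]
        · simp [hf, Set.indicator, hy]
      simp [hz]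
  rw [hl, hs]
  norm_num
  ring

/-- For a classical solution `ρ(t,x)` of
`∂ₜ ρ(t,x) = 2(ρ(t)*ρ(t))(2x) - ρ(t,x)` on `t ≥ 0`, `x ≥ 0`, with `ρ(0,·)` a probability
density on `[0,∞)` with finite mean `μ`, the mean is conserved:
`d/dt ∫ x ρ(t,x) dx = 0`, so `∫ x ρ(t,x) dx = μ` for all `t ≥ 0`. -/
theorem mean_conservation (ρ : ℝ → ℝ → ℝ) (μ : ℝ)
    (hnonneg : ∀ t ≥ (0:ℝ), ∀ x ≥ (0:ℝ), 0 ≤ ρ t x)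
    (hPDE : ∀ t ≥ (0:ℝ), ∀ x ≥ (0:ℝ), HasDerivAt (fun s => ρ s x)
      (2 * (∫ y in (0:ℝ)..(2*x), ρ t y * ρ t (2*x - y)) - ρ t x) t)
    (hmass : ∀ t ≥ (0:ℝ), ∫ x in Set.Ici (0:ℝ), ρ t x = 1)
    (hinit_mean : ∫ x in Set.Ici (0:ℝ), x * ρ 0 x = μ)
    (hint : ∀ t ≥ (0:ℝ), IntegrableOn (fun x => x * ρ t x) (Set.Ici 0))
    (hint2 : ∀ t ≥ (0:ℝ), IntegrableOn
      (fun x => x * (2 * ∫ y in (0:ℝ)..(2*x), ρ t y * ρ t (2*x - y))) (Set.Ici 0))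
    (hdiff : ∀ t ≥ (0:ℝ), HasDerivAt (fun s => ∫ x in Set.Ici (0:ℝ), x * ρ s x)
      (∫ x in Set.Ici (0:ℝ),
        x * (2 * (∫ y in (0:ℝ)..(2*x), ρ t y * ρ t (2*x - y)) - ρ t x)) t) :
    ∀ t ≥ (0:ℝ), HasDerivAt (fun s => ∫ x in Set.Ici (0:ℝ), x * ρ s x) 0 t ∧
      ∫ x in Set.Ici (0:ℝ), x * ρ t x = μ := by
  have hderiv : ∀ t ≥ (0:ℝ), HasDerivAt (fun s => ∫ x in Set.Ici (0:ℝ), x * ρ s x) 0 t := by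
    intro t ht
    -- A non-integrable function would have integral `0`, not `1`.
    have hρ : IntegrableOn (ρ t) (Set.Ici 0) := by
      by_contra h
      have h1 := hmass t ht
      rw [integral_undef h] at h1
      exact zero_ne_one h1
    have h := hdiff t ht
    simp only [mul_sub] at h
    rwa [integral_sub (hint2 t ht) (hint t ht),
      integral_gain_eq (ρ t) hρ (hint t ht) (hmass t ht), sub_self] at h
  intro t ht
  refine ⟨hderiv t ht, ?_⟩
  rw [← hinit_mean]
  exact constant_of_has_deriv_right_zero (f := fun s => ∫ x in Set.Ici (0:ℝ), x * ρ s x)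
    (fun s hs => (hderiv s hs.1).continuousAt.continuousWithinAt)
    (fun s hs => (hderiv s hs.1).hasDerivWithinAt) t ⟨ht, le_rfl⟩
end

section
/- Let ρ(t,x) be a classical solution of the PDE ∂_t ρ(t,x) = 2(ρ(t)*ρ(t))(2x) − ρ(t,x) for t ≥ 0 and x ≥ 0, with initial condition ρ(0,·) a probability density on [0,∞) with mean μ > 0. Then the Gini index G[ρ(t)] = (1/(2μ)) ∬_{[0,∞)²} ρ(t,x)ρ(t,y)|x−y| dx dy satisfies d/dt G[ρ(t)] = −(1/μ) ∭_{[0,∞)³} ρ(t,v)ρ(t,w)ρ(t,y) ( (|v−y| + |w−y|)/2 − |(v+w)/2 − y| ) dv dw dy ≤ 0; in particular G[ρ(t)] is non-increasing in t. -/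
open MeasureTheory

/-!
Fix `t`, let `F` be `ρ t` extended by zero to `ℝ`, let `G x = 2 (F * F)(2x)`, and let
`H x = ∫ F(y) |x - y| dy`. By hypothesis the derivative of the Gini index is `1/(2μ)` times
`∬ ((G - F)(x) F(y) + F(x) (G - F)(y)) |x - y| dx dy`, which by the symmetry of the kernel is
`2 (∫ G H - ∫ F H)`.

If `V`, `W` are independent with density `F`, then `G` is the density of `(V + W)/2`; analytically
this is a shear followed by the dilation `u = 2x` (`midDensity_integral`). Hence
`∫ G H = ∬ F(v) F(w) H((v + w)/2)`, while `∫ F = 1` gives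
`∫ F H = ∬ F(v) F(w) (H v + H w)/2`. The difference `∫ F H - ∫ G H` is therefore the triple integral
in the statement (`gini_dissipation`), and it is nonnegative because `c ↦ |c - y|` is convex.

The integrability needed for Fubini comes from the finite mass and first moment of `F`: these are
integrable because their Bochner integrals, `1` and `μ`, are nonzero. The bound
`0 ≤ H((v + w)/2) ≤ (H v + H w)/2` handles the midpoint term.
-/

/-- The density `x ↦ 2 (F * F)(2x)` of the midpoint of two independent points with density `F`. -/
noncomputable def midDensity (F : ℝ → ℝ) (x : ℝ) : ℝ := 2 * ∫ z, F z * F (2 * x - z)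

/-- The potential `x ↦ ∫ F(y) |x - y| dy`. -/
noncomputable def absPotential (F : ℝ → ℝ) (x : ℝ) : ℝ := ∫ y, F y * |x - y|

theorem abs_midpoint_sub_le (v w y : ℝ) : |(v + w) / 2 - y| ≤ (|v - y| + |w - y|) / 2 := by
  have h := abs_add_le (v - y) (w - y)
  have e : (v + w) / 2 - y = ((v - y) + (w - y)) / 2 := by ring
  rw [e, abs_div, abs_two]
  linarith

theorem setIntegral_Ici_eq {φ ψ : ℝ → ℝ} (h1 : ∀ x, 0 ≤ x → φ x = ψ x)
    (h2 : ∀ x, x < 0 → ψ x = 0) : ∫ x in Set.Ici (0:ℝ), φ x = ∫ x, ψ x := by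
  rw [← integral_indicator measurableSet_Ici]
  congr 1
  funext x
  by_cases hx : 0 ≤ x
  · rw [Set.indicator_of_mem (Set.mem_Ici.2 hx), h1 x hx]
  · rw [Set.indicator_of_notMem (by simpa using hx), h2 x (not_le.1 hx)]

/-- `midDensity F` is the density of the pushforward of `F ⊗ F` under `(v, w) ↦ (v + w) / 2`. -/
theorem midDensity_integral {F h : ℝ → ℝ}
    (hI : Integrable (fun p : ℝ × ℝ => F p.1 * F p.2 * h ((p.1 + p.2) / 2))) :
    Integrable (fun x => midDensity F x * h x) ∧
      ∫ x, midDensity F x * h x = ∫ p : ℝ × ℝ, F p.1 * F p.2 * h ((p.1 + p.2) / 2) := by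
  -- The shear `(z, w) ↦ (z, z + w)` turns the integrand into `F z * F (u - z) * h (u / 2)`.
  let e := MeasurableEquiv.shearAddRight ℝ
  have he : MeasurePreserving e (volume : Measure (ℝ × ℝ)) volume :=
    measurePreserving_prod_add volume volume
  set Ψ : ℝ × ℝ → ℝ := fun p => F p.1 * F (p.2 - p.1) * h (p.2 / 2) with hΨ
  have hcomp : Ψ ∘ e = fun p : ℝ × ℝ => F p.1 * F p.2 * h ((p.1 + p.2) / 2) := by
    funext p
    simp [hΨ, e, MeasurableEquiv.shearAddRight]
  have hΨI : Integrable Ψ := by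
    rw [← he.integrable_comp_emb e.measurableEmbedding, hcomp]
    exact hI
  have hΨint : ∫ p, Ψ p = ∫ p : ℝ × ℝ, F p.1 * F p.2 * h ((p.1 + p.2) / 2) := by
    rw [← he.integral_comp e.measurableEmbedding Ψ]
    exact congrArg (fun f : ℝ × ℝ → ℝ => ∫ p, f p) hcomp
  have hin : Integrable (fun u => ∫ z, Ψ (z, u)) := by
    exact hΨI.integral_prod_right
  have hE : (fun x => midDensity F x * h x) = fun x => 2 * (fun u => ∫ z, Ψ (z, u)) (2 * x) := by
    funext x
    simp only [hΨ, midDensity]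
    rw [integral_mul_const, mul_div_cancel_left₀ x (two_ne_zero), mul_assoc]
  rw [hE]
  refine ⟨(hin.comp_mul_left' two_ne_zero).const_mul 2, ?_⟩
  rw [integral_const_mul, Measure.integral_comp_mul_left (fun u => ∫ z, Ψ (z, u)), ← hΨint]
  have := integral_prod_symm (μ := volume) (ν := volume) Ψ hΨI
  rw [Measure.volume_eq_prod, this]
  simp

theorem integrable_mul_abs_sub {F : ℝ → ℝ} (h0 : Integrable F)
    (h1 : Integrable (fun x => F x * x)) (c : ℝ) : Integrable (fun y => F y * |c - y|) := by
  have := ((h0.mul_const c).sub h1).norm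
  refine Integrable.mono this (h0.aestronglyMeasurable.mul (by fun_prop)) (ae_of_all _ fun y => ?_)
  simp [← mul_sub]

theorem integrable_prod_mul_abs_sub {F G : ℝ → ℝ} (F0 : Integrable F)
    (F1 : Integrable (fun x => F x * x)) (G0 : Integrable G)
    (G1 : Integrable (fun x => G x * x)) :
    Integrable (fun p : ℝ × ℝ => F p.1 * G p.2 * |p.1 - p.2|) := by
  have h := ((F1.mul_prod G0).sub (F0.mul_prod G1)).norm
  refine Integrable.mono h ((F0.mul_prod G0).aestronglyMeasurable.mul
    (by fun_prop)) (ae_of_all _ fun p => le_of_eq ?_)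
  have e : F p.1 * p.1 * G p.2 - F p.1 * (G p.2 * p.2) = F p.1 * G p.2 * (p.1 - p.2) := by ring
  simp only [Pi.sub_apply, Real.norm_eq_abs]
  rw [e, abs_abs, abs_mul, abs_mul _ (p.1 - p.2), abs_abs]

theorem absPotential_continuous {F : ℝ → ℝ} (h0 : Integrable F)
    (h1 : Integrable (fun x => F x * x)) : Continuous (absPotential F) := by
  have : LipschitzWith (Real.toNNReal (∫ y, |F y|)) (absPotential F) := by
    refine LipschitzWith.of_dist_le' fun a b => ?_
    rw [Real.dist_eq, Real.dist_eq]
    unfold absPotential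
    rw [← integral_sub (integrable_mul_abs_sub h0 h1 a) (integrable_mul_abs_sub h0 h1 b),
      ← integral_mul_const, ← Real.norm_eq_abs]
    refine norm_integral_le_of_norm_le (h0.norm.mul_const _) (ae_of_all _ fun y => ?_)
    rw [← mul_sub, norm_mul]
    refine mul_le_mul_of_nonneg_left ?_ (norm_nonneg _)
    have := abs_abs_sub_abs_le_abs_sub (a - y) (b - y)
    simpa using this
  exact this.continuous

/-- The derivative of `∬ F(x) F(y) |x - y|` along the flow `∂ₜ F = midDensity F - F` is minus twice
the convexity defect of the absolute value. -/
theorem gini_dissipation {F : ℝ → ℝ} (hF : ∀ x, 0 ≤ F x) (h0 : Integrable F)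
    (h1 : Integrable (fun x => F x * x)) (hm : ∫ x, F x = 1) :
    ∫ x, ∫ y, ((midDensity F x - F x) * F y + F x * (midDensity F y - F y)) * |x - y| =
      -2 * ∫ v, ∫ w, ∫ y, F v * F w * F y * ((|v - y| + |w - y|) / 2 - |(v + w) / 2 - y|) := by
  set G := midDensity F with hG
  set H := absPotential F with hH
  have hK := integrable_mul_abs_sub h0 h1
  have hHpos : ∀ x, 0 ≤ H x := fun x =>
    integral_nonneg fun y => mul_nonneg (hF y) (abs_nonneg _)
  have hHmid : ∀ v w, H ((v + w) / 2) ≤ (H v + H w) / 2 := by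
    intro v w
    simp only [hH, absPotential]
    rw [← integral_add (hK v) (hK w), ← integral_div]
    refine integral_mono (hK _) (((hK v).add (hK w)).div_const 2) fun y => ?_
    have := mul_le_mul_of_nonneg_left (abs_midpoint_sub_le v w y) (hF y)
    simp only
    linarith
  have hFF := integrable_prod_mul_abs_sub h0 h1 h0 h1
  have hFFeq : ∀ x, ∫ y, F x * F y * |x - y| = F x * H x := by
    intro x
    simp only [mul_assoc, integral_const_mul, hH, absPotential]
  have hFH : Integrable (fun x => F x * H x) := by
    have := hFF.integral_prod_left
    simpa only [hFFeq] using this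
  have hP1 : Integrable (fun p : ℝ × ℝ => (F p.1 * H p.1) * F p.2) := hFH.mul_prod h0
  have hP2 : Integrable (fun p : ℝ × ℝ => F p.1 * (F p.2 * H p.2)) := h0.mul_prod hFH
  have hP3 : Integrable (fun p : ℝ × ℝ => F p.1 * F p.2 * H ((p.1 + p.2) / 2)) := by
    refine Integrable.mono ((hP1.add hP2).div_const 2) ((h0.mul_prod h0).aestronglyMeasurable.mul
      ((absPotential_continuous h0 h1).comp (by fun_prop :
        Continuous fun p : ℝ × ℝ => (p.1 + p.2) / 2)).aestronglyMeasurable)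
      (ae_of_all _ fun p => ?_)
    have hq := mul_nonneg (hF p.1) (hF p.2)
    have h3 := mul_le_mul_of_nonneg_left (hHmid p.1 p.2) hq
    simp only [Pi.add_apply]
    rw [Real.norm_of_nonneg (mul_nonneg hq (hHpos _))]
    refine le_trans (le_trans h3 (le_of_eq ?_)) (le_abs_self _)
    ring
  have hG0 : Integrable G := by
    have := (midDensity_integral (F := F) (h := fun _ => 1)
      (by simp only [mul_one]; exact h0.mul_prod h0)).1
    simpa using this
  have hG1 : Integrable (fun x => G x * x) := by
    refine (midDensity_integral (F := F) (h := fun x => x) ?_).1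
    refine (((h1.mul_prod h0).add (h0.mul_prod h1)).div_const 2).congr (ae_of_all _ fun p => ?_)
    simp only [Pi.add_apply]
    ring
  obtain ⟨hGH, hGHeq⟩ := midDensity_integral hP3
  have hGF := integrable_prod_mul_abs_sub hG0 hG1 h0 h1
  have hFG := integrable_prod_mul_abs_sub h0 h1 hG0 hG1
  have iFF : ∫ p : ℝ × ℝ, F p.1 * F p.2 * |p.1 - p.2| = ∫ x, F x * H x := by
    rw [Measure.volume_eq_prod, integral_prod _ hFF]
    simp only [hFFeq]
  have iGF : ∫ p : ℝ × ℝ, G p.1 * F p.2 * |p.1 - p.2| = ∫ x, G x * H x := by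
    rw [Measure.volume_eq_prod, integral_prod _ hGF]
    simp only [mul_assoc, integral_const_mul, hH, absPotential]
  have iFG : ∫ p : ℝ × ℝ, F p.1 * G p.2 * |p.1 - p.2| = ∫ x, G x * H x := by
    rw [Measure.volume_eq_prod, integral_prod_symm _ hFG]
    congr 1
    funext x
    simp only [hH, absPotential]
    rw [← integral_const_mul]
    congr 1
    funext y
    rw [abs_sub_comm]
    ring
  have hL : ∫ x, ∫ y, ((G x - F x) * F y + F x * (G y - F y)) * |x - y| =
      2 * (∫ x, G x * H x) - 2 * ∫ x, F x * H x := by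
    have key : (fun p : ℝ × ℝ => ((G p.1 - F p.1) * F p.2 + F p.1 * (G p.2 - F p.2)) * |p.1 - p.2|)
        = fun p => (G p.1 * F p.2 * |p.1 - p.2| + F p.1 * G p.2 * |p.1 - p.2|)
          - 2 * (F p.1 * F p.2 * |p.1 - p.2|) := by
      funext p
      ring
    have hsum : Integrable (fun p : ℝ × ℝ =>
        G p.1 * F p.2 * |p.1 - p.2| + F p.1 * G p.2 * |p.1 - p.2|) := hGF.add hFG
    have hi := hsum.sub (hFF.const_mul 2)
    have hi' : Integrable (fun p : ℝ × ℝ =>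
        ((G p.1 - F p.1) * F p.2 + F p.1 * (G p.2 - F p.2)) * |p.1 - p.2|) := by
      rw [key]
      exact hi
    have h2 := integral_prod _ hi'
    simp only at h2
    rw [← h2, key, ← Measure.volume_eq_prod, integral_sub hsum (hFF.const_mul 2),
      integral_add hGF hFG, integral_const_mul, iGF, iFG, iFF]
    ring
  have hin : ∀ v w, ∫ y, F v * F w * F y * ((|v - y| + |w - y|) / 2 - |(v + w) / 2 - y|) =
      ((F v * H v) * F w + F v * (F w * H w)) / 2 - F v * F w * H ((v + w) / 2) := by
    intro v w
    have e : (fun y => F v * F w * F y * ((|v - y| + |w - y|) / 2 - |(v + w) / 2 - y|)) =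
        fun y => F v * F w * ((F y * |v - y| + F y * |w - y|) / 2 - F y * |(v + w) / 2 - y|) := by
      funext y
      ring
    have hsum : Integrable (fun y => (F y * |v - y| + F y * |w - y|) / 2) :=
      ((hK v).add (hK w)).div_const 2
    rw [e, integral_const_mul, integral_sub hsum (hK _),
      integral_div, integral_add (hK v) (hK w)]
    simp only [hH, absPotential]
    ring
  have hR : ∫ v, ∫ w, ∫ y, F v * F w * F y * ((|v - y| + |w - y|) / 2 - |(v + w) / 2 - y|) =
      (∫ x, F x * H x) - ∫ x, G x * H x := by
    simp only [hin]
    have hsum : Integrable (fun p : ℝ × ℝ =>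
        (F p.1 * H p.1 * F p.2 + F p.1 * (F p.2 * H p.2)) / 2) := (hP1.add hP2).div_const 2
    have h2 := integral_prod _ (hsum.sub hP3)
    simp only [Pi.sub_apply] at h2
    rw [← h2, ← Measure.volume_eq_prod, integral_sub hsum hP3, integral_div,
      integral_add hP1 hP2, hGHeq]
    have e1 : ∫ p : ℝ × ℝ, (F p.1 * H p.1) * F p.2 = ∫ x, F x * H x := by
      rw [Measure.volume_eq_prod, integral_prod_mul (fun x => F x * H x) F, hm, mul_one]
    have e2 : ∫ p : ℝ × ℝ, F p.1 * (F p.2 * H p.2) = ∫ x, F x * H x := by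
      rw [Measure.volume_eq_prod, integral_prod_mul F (fun x => F x * H x), hm, one_mul]
    rw [e1, e2]
    ring
  rw [hL, hR]
  ring

/-- The version of `gini_dissipation` for a density on the half-line. -/
theorem gini_dissipation_Ici {f : ℝ → ℝ} {μ : ℝ} (hμ : 0 < μ) (hf : ∀ x ≥ (0:ℝ), 0 ≤ f x)
    (hmass : ∫ x in Set.Ici (0:ℝ), f x = 1) (hmean : ∫ x in Set.Ici (0:ℝ), x * f x = μ) :
    ∫ x in Set.Ici (0:ℝ), ∫ y in Set.Ici (0:ℝ),
        ((2 * (∫ z in (0:ℝ)..(2*x), f z * f (2*x - z)) - f x) * f y +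
          f x * (2 * (∫ z in (0:ℝ)..(2*y), f z * f (2*y - z)) - f y)) * |x - y| =
      -2 * ∫ v in Set.Ici (0:ℝ), ∫ w in Set.Ici (0:ℝ), ∫ y in Set.Ici (0:ℝ),
          f v * f w * f y * ((|v - y| + |w - y|)/2 - |(v + w)/2 - y|) := by
  set F : ℝ → ℝ := (Set.Ici (0:ℝ)).indicator f with hFdef
  have Fp : ∀ x, 0 ≤ x → F x = f x := fun x hx => Set.indicator_of_mem (Set.mem_Ici.2 hx) f
  have Fn : ∀ x, x < 0 → F x = 0 := fun x hx => Set.indicator_of_notMem (by simpa using hx) f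
  have hF : ∀ x, 0 ≤ F x := Set.indicator_nonneg hf
  -- A function that is not integrable has Bochner integral `0`, which is neither `1` nor `μ`.
  have i0 : IntegrableOn f (Set.Ici 0) := by
    by_contra h
    rw [integral_undef h] at hmass
    exact zero_ne_one hmass
  have i1 : IntegrableOn (fun x => x * f x) (Set.Ici 0) := by
    by_contra h
    rw [integral_undef h] at hmean
    exact hμ.ne hmean
  have h0 : Integrable F := i0.integrable_indicator measurableSet_Ici
  have h1 : Integrable (fun x => F x * x) := by
    refine (i1.integrable_indicator measurableSet_Ici).congr (ae_of_all _ fun x => ?_)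
    simp only [hFdef, Set.indicator_apply]
    split_ifs <;> ring
  have hm : ∫ x, F x = 1 := by
    rw [← hmass]
    exact (setIntegral_Ici_eq (fun x hx => (Fp x hx).symm) Fn).symm
  have Gp : ∀ x, 0 ≤ x → 2 * (∫ z in (0:ℝ)..(2*x), f z * f (2*x - z)) = midDensity F x := by
    intro x hx
    rw [intervalIntegral.integral_of_le (by linarith), ← integral_Icc_eq_integral_Ioc,
      ← integral_indicator measurableSet_Icc, midDensity]
    congr 2
    funext z
    by_cases hz : z ∈ Set.Icc 0 (2 * x)
    · rw [Set.indicator_of_mem hz, Fp z hz.1, Fp _ (by linarith [hz.2])]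
    · rw [Set.indicator_of_notMem hz]
      by_cases hz0 : 0 ≤ z
      · have : 2 * x < z := by
          by_contra hh
          exact hz ⟨hz0, not_lt.1 hh⟩
        rw [Fn (2 * x - z) (by linarith), mul_zero]
      · rw [Fn z (not_le.1 hz0), zero_mul]
  have Gn : ∀ x, x < 0 → midDensity F x = 0 := by
    intro x hx
    have : ∀ z, F z * F (2 * x - z) = 0 := by
      intro z
      by_cases hz0 : 0 ≤ z
      · rw [Fn (2 * x - z) (by linarith), mul_zero]
      · rw [Fn z (not_le.1 hz0), zero_mul]
    simp [midDensity, this]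
  have hD := gini_dissipation hF h0 h1 hm
  convert hD using 1
  · refine setIntegral_Ici_eq (fun x hx => ?_) (fun x hx => ?_)
    · refine setIntegral_Ici_eq (fun y hy => ?_) (fun y hy => ?_)
      · rw [Gp x hx, Gp y hy, Fp x hx, Fp y hy]
      · simp [Fn y hy, Gn y hy]
    · simp [Fn x hx, Gn x hx]
  · congr 1
    refine setIntegral_Ici_eq (fun v hv => ?_) (fun v hv => by simp [Fn v hv])
    refine setIntegral_Ici_eq (fun w hw => ?_) (fun w hw => by simp [Fn w hw])
    refine setIntegral_Ici_eq (fun y hy => ?_) (fun y hy => by simp [Fn y hy])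
    rw [Fp v hv, Fp w hw, Fp y hy]

/-- For a classical solution `ρ(t,x)` of
`∂ₜ ρ(t,x) = 2(ρ(t)*ρ(t))(2x) - ρ(t,x)` on `t ≥ 0`, `x ≥ 0`, with `ρ(0,·)` a probability
density on `[0,∞)` with mean `μ > 0`, the Gini index
`G[ρ(t)] = (1/(2μ)) ∬ ρ(t,x)ρ(t,y)|x-y| dx dy` satisfies
`d/dt G[ρ(t)] = -(1/μ) ∭ ρ(t,v)ρ(t,w)ρ(t,y) ((|v-y|+|w-y|)/2 - |(v+w)/2-y|) dv dw dy ≤ 0`;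
in particular `G[ρ(t)]` is non-increasing in `t`. -/
theorem gini_nonincreasing (ρ : ℝ → ℝ → ℝ) (μ : ℝ) (hμ : 0 < μ)
    (hnonneg : ∀ t ≥ (0:ℝ), ∀ x ≥ (0:ℝ), 0 ≤ ρ t x)
    (hPDE : ∀ t ≥ (0:ℝ), ∀ x ≥ (0:ℝ), HasDerivAt (fun s => ρ s x)
      (2 * (∫ y in (0:ℝ)..(2*x), ρ t y * ρ t (2*x - y)) - ρ t x) t)
    (hmass : ∀ t ≥ (0:ℝ), ∫ x in Set.Ici (0:ℝ), ρ t x = 1)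
    (hmean : ∀ t ≥ (0:ℝ), ∫ x in Set.Ici (0:ℝ), x * ρ t x = μ)
    (hint : ∀ t ≥ (0:ℝ), Integrable (fun p : ℝ × ℝ => ρ t p.1 * ρ t p.2 * |p.1 - p.2|)
      ((volume.restrict (Set.Ici 0)).prod (volume.restrict (Set.Ici 0))))
    (hdiff : ∀ t ≥ (0:ℝ), HasDerivAt
      (fun s => (1/(2*μ)) *
        ∫ x in Set.Ici (0:ℝ), ∫ y in Set.Ici (0:ℝ), ρ s x * ρ s y * |x - y|)
      ((1/(2*μ)) * ∫ x in Set.Ici (0:ℝ), ∫ y in Set.Ici (0:ℝ),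
        ((2 * (∫ z in (0:ℝ)..(2*x), ρ t z * ρ t (2*x - z)) - ρ t x) * ρ t y +
          ρ t x * (2 * (∫ z in (0:ℝ)..(2*y), ρ t z * ρ t (2*y - z)) - ρ t y)) * |x - y|) t) :
    ∀ t ≥ (0:ℝ),
      HasDerivAt
        (fun s => (1/(2*μ)) *
          ∫ x in Set.Ici (0:ℝ), ∫ y in Set.Ici (0:ℝ), ρ s x * ρ s y * |x - y|)
        (-(1/μ) * ∫ v in Set.Ici (0:ℝ), ∫ w in Set.Ici (0:ℝ), ∫ y in Set.Ici (0:ℝ),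
          ρ t v * ρ t w * ρ t y * ((|v - y| + |w - y|)/2 - |(v + w)/2 - y|)) t ∧
      -(1/μ) * (∫ v in Set.Ici (0:ℝ), ∫ w in Set.Ici (0:ℝ), ∫ y in Set.Ici (0:ℝ),
          ρ t v * ρ t w * ρ t y * ((|v - y| + |w - y|)/2 - |(v + w)/2 - y|)) ≤ 0 ∧
      ∀ s, 0 ≤ s → s ≤ t →
        (1/(2*μ)) * (∫ x in Set.Ici (0:ℝ), ∫ y in Set.Ici (0:ℝ), ρ t x * ρ t y * |x - y|) ≤
        (1/(2*μ)) * (∫ x in Set.Ici (0:ℝ), ∫ y in Set.Ici (0:ℝ), ρ s x * ρ s y * |x - y|) := by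
  have hder : ∀ t ≥ (0:ℝ), HasDerivAt
      (fun s => (1/(2*μ)) *
        ∫ x in Set.Ici (0:ℝ), ∫ y in Set.Ici (0:ℝ), ρ s x * ρ s y * |x - y|)
      (-(1/μ) * ∫ v in Set.Ici (0:ℝ), ∫ w in Set.Ici (0:ℝ), ∫ y in Set.Ici (0:ℝ),
        ρ t v * ρ t w * ρ t y * ((|v - y| + |w - y|)/2 - |(v + w)/2 - y|)) t := by
    intro t ht
    have h := hdiff t ht
    rw [gini_dissipation_Ici hμ (hnonneg t ht) (hmass t ht) (hmean t ht)] at h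
    refine h.congr_deriv ?_
    field_simp
  have hneg : ∀ t ≥ (0:ℝ), -(1/μ) * (∫ v in Set.Ici (0:ℝ), ∫ w in Set.Ici (0:ℝ),
      ∫ y in Set.Ici (0:ℝ),
        ρ t v * ρ t w * ρ t y * ((|v - y| + |w - y|)/2 - |(v + w)/2 - y|)) ≤ 0 := by
    intro t ht
    refine mul_nonpos_of_nonpos_of_nonneg (by simpa using hμ.le) ?_
    refine setIntegral_nonneg measurableSet_Ici fun v hv => ?_
    refine setIntegral_nonneg measurableSet_Ici fun w hw => ?_
    refine setIntegral_nonneg measurableSet_Ici fun y hy => ?_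
    exact mul_nonneg (mul_nonneg (mul_nonneg (hnonneg t ht v hv) (hnonneg t ht w hw))
      (hnonneg t ht y hy)) (sub_nonneg.2 (abs_midpoint_sub_le v w y))
  have hanti := antitoneOn_of_hasDerivWithinAt_nonpos (convex_Ici (0:ℝ))
    (fun t ht => (hder t ht).continuousAt.continuousWithinAt)
    (fun t ht => (hder t (interior_subset ht)).hasDerivWithinAt)
    (fun t ht => hneg t (interior_subset ht))
  intro t ht
  refine ⟨hder t ht, hneg t ht, fun s hs hst => hanti hs ht hst⟩
end

section
/- Let ρ(t,x) be a classical solution of the PDE ∂_t ρ(t,x) = 2(ρ(t)*ρ(t))(2x) − ρ(t,x) for t ≥ 0, with initial condition ρ(0,·) a log-concave probability density on [0,∞) with mean μ > 0. Then the Gini index decays exponentially: G[ρ(t)] ≤ G[ρ(0)] e^{−t/14434} for all t ≥ 0. -/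
open MeasureTheory

/-!
Let `νₜ` be the law with density `ρ(t)`, let `g(t) = ∬ |x - y| dνₜ dνₜ`, and let `M` be the supremum
of `ρ(0)`. Two bounds on `g` combine to the claim.

* Short times. The gain term is the law of the mean of two independent draws from `νₜ`, so
  `g'(t) = -2 D(νₜ)`, where `D(ν)` is the expected loss of distance to a third point `c` when `a`
  and `b` are replaced by their mean (`integral_derivative_eq`). A law with density at most `M` has
  `D ≥ 1 / (72 M)`, because among three points the smallest gap is at least `1 / (12 M)` with
  probability at least `1/2` (`dissipation_ge`). As `eᵗ ρ(t, x)` increases in `t`, `νₜ ≥ e⁻ᵗ ν₀`,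
  and `D` is cubic, so `g(t) ≤ g(0) - (1 - e⁻³ᵗ) / (108 M)` (`meanDist_drop`).
* Long times. Averaging halves the variance while the mean is conserved, so the variance decays
  exponentially (`variance_bound`), and `g ≤ sqrt (2 Var)`. Nothing is assumed about differentiating
  second moments; the decay comes instead from the monotonicity of `eᵗ ρ(t, x)` and a Grönwall
  argument over short time steps (`moment_bound`).

Log-concavity enters only at time zero: it bounds the variance of `ν₀` by `1200 / M²`
(`logConcave_sup_and_spread`). Hence `g(t) ≤ (49 / M) e^(-9t/40)`, on the scale `1 / M` of the
short-time drop, and `exp_bound_of_two_bounds` carries out the numerical comparison.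
-/

open scoped ENNReal

/-! ### The averaging operator on densities and laws -/

/-- The measure on `ℝ` carried by `[0,∞)` with density `f` there. -/
noncomputable def giniLaw (f : ℝ → ℝ) : Measure ℝ :=
  (volume.restrict (Set.Ici 0)).withDensity (fun x => ENNReal.ofReal (f x))

/-- The density `2 (f * f)(2x)` of the mean of two independent variables with density `f` on
`[0,∞)`, as a Bochner integral; where the convolution diverges its value is the junk value `0`. -/
noncomputable def gainDensity (f : ℝ → ℝ) (x : ℝ) : ℝ :=
  2 * ∫ y in (0:ℝ)..(2*x), f y * f (2*x - y)

/-- The law of the mean of two independent variables with law `ν`. -/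
noncomputable def averageLaw (ν : Measure ℝ) : Measure ℝ :=
  (ν.prod ν).map (fun p => (p.1 + p.2) / 2)

lemma map_half_withDensity {g : ℝ → ℝ≥0∞} (hg : AEMeasurable g) :
    (volume.withDensity g).map (fun x => x / 2) = volume.withDensity (fun x => 2 * g (2 * x)) := by
  have hqmp : Measure.QuasiMeasurePreserving (fun x : ℝ => 2 * x) volume volume := by
    refine ⟨by fun_prop, ?_⟩
    rw [Real.map_volume_mul_left two_ne_zero]
    exact Measure.smul_absolutelyContinuous
  have hg2 : AEMeasurable (fun x => g (2 * x)) := hg.comp_quasiMeasurePreserving hqmp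
  have hint : ∀ F : ℝ → ℝ≥0∞, ∫⁻ x, F (2 * x) = 2⁻¹ * ∫⁻ x, F x := by
    intro F
    have h := lintegral_map_equiv (μ := (volume : Measure ℝ)) F
      (Homeomorph.mulLeft₀ (2:ℝ) two_ne_zero).toMeasurableEquiv
    simp only [Homeomorph.toMeasurableEquiv_coe, Homeomorph.coe_mulLeft₀] at h
    rw [← h, Real.map_volume_mul_left two_ne_zero, lintegral_smul_measure]
    congr 1
    rw [abs_of_pos (by norm_num), ENNReal.ofReal_inv_of_pos (by norm_num)]
    simp
  refine Measure.ext_of_lintegral _ fun φ hφ => ?_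
  rw [lintegral_map hφ (by fun_prop), lintegral_withDensity_eq_lintegral_mul₀ hg (by fun_prop),
    lintegral_withDensity_eq_lintegral_mul₀ (by fun_prop) (by fun_prop)]
  simp only [Pi.mul_apply]
  have h := hint (fun x => g x * φ (x / 2))
  have h2 : ∀ x : ℝ, 2 * x / 2 = x := fun x => by ring
  simp only [h2] at h
  simp_rw [mul_assoc]
  rw [lintegral_const_mul'' _ (by fun_prop), h, ← mul_assoc,
    ENNReal.mul_inv_cancel (by norm_num) (by norm_num), one_mul]

lemma averageLaw_withDensity {g : ℝ → ℝ≥0∞} (hg : AEMeasurable g) :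
    averageLaw (volume.withDensity g) =
      volume.withDensity (fun x => 2 * ∫⁻ y, g y * g (2 * x - y)) := by
  have h1 : averageLaw (volume.withDensity g) =
      ((volume.withDensity g) ∗ (volume.withDensity g)).map (fun x => x / 2) := by
    rw [averageLaw, Measure.conv, Measure.map_map (by fun_prop) (by fun_prop)]
    rfl
  rw [h1, conv_withDensity_eq_mlconvolution₀ hg hg, map_half_withDensity (by fun_prop)]
  congr 1
  ext x
  simp only [lconvolution_def]
  congr 2
  ext y
  congr 2
  ring

instance (ν : Measure ℝ) [IsProbabilityMeasure ν] : IsProbabilityMeasure (averageLaw ν) :=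
  Measure.isProbabilityMeasure_map (by fun_prop)

lemma lintegral_averageLaw (ν : Measure ℝ) [SFinite ν] {φ : ℝ → ℝ≥0∞} (hφ : Measurable φ) :
    ∫⁻ x, φ x ∂(averageLaw ν) = ∫⁻ p : ℝ × ℝ, φ ((p.1 + p.2) / 2) ∂(ν.prod ν) := by
  rw [averageLaw, lintegral_map hφ (by fun_prop)]

lemma giniLaw_eq (f : ℝ → ℝ) :
    giniLaw f = volume.withDensity
      ((Set.Ici (0:ℝ)).indicator (fun x => ENNReal.ofReal (f x))) := by
  rw [giniLaw, withDensity_indicator measurableSet_Ici]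

section
variable {f : ℝ → ℝ}

lemma indicator_conv (hf0 : ∀ x ≥ (0:ℝ), 0 ≤ f x) (x : ℝ) :
    ∫⁻ y, (Set.Ici (0:ℝ)).indicator (fun x => ENNReal.ofReal (f x)) y *
        (Set.Ici (0:ℝ)).indicator (fun x => ENNReal.ofReal (f x)) (2 * x - y) =
      ∫⁻ y in Set.Icc 0 (2 * x), ENNReal.ofReal (f y * f (2 * x - y)) := by
  rw [← lintegral_indicator measurableSet_Icc]
  congr 1
  ext y
  by_cases h1 : 0 ≤ y <;> by_cases h2 : y ≤ 2 * x
  · rw [Set.indicator_of_mem (by simpa using h1),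
      Set.indicator_of_mem (by simpa using h2), Set.indicator_of_mem (by simp [h1, h2]),
      ENNReal.ofReal_mul (hf0 y h1)]
  · simp [h2]
  · simp [h1]
  · simp [h1]

lemma aemeasurable_conv (hf : AEStronglyMeasurable f (volume.restrict (Set.Ici 0))) (x : ℝ) :
    AEStronglyMeasurable (fun y => f y * f (2 * x - y))
      (volume.restrict (Set.Icc 0 (2 * x))) := by
  have h1 : AEStronglyMeasurable f (volume.restrict (Set.Icc 0 (2 * x))) :=
    hf.mono_measure (Measure.restrict_mono Set.Icc_subset_Ici_self le_rfl)
  refine h1.mul ?_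
  have hmp : MeasurePreserving (fun y : ℝ => 2 * x - y)
      (volume.restrict (Set.Icc 0 (2 * x))) (volume.restrict (Set.Icc 0 (2 * x))) := by
    have h := (Measure.measurePreserving_sub_left (volume : Measure ℝ) (2 * x)).restrict_preimage
      (measurableSet_Icc (a := (0:ℝ)) (b := 2 * x))
    have e : (fun y : ℝ => 2 * x - y) ⁻¹' Set.Icc 0 (2 * x) = Set.Icc 0 (2 * x) := by
      ext y; simp
    rwa [e] at h
  exact h1.comp_measurePreserving hmp

lemma gainDensity_nonneg (hf0 : ∀ x ≥ (0:ℝ), 0 ≤ f x) {x : ℝ} (hx : 0 ≤ x) :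
    0 ≤ gainDensity f x := by
  refine mul_nonneg zero_le_two (intervalIntegral.integral_nonneg (by linarith) fun y hy => ?_)
  exact mul_nonneg (hf0 _ hy.1) (hf0 _ (by linarith [hy.2]))

lemma integrable_of_mass (hm : ∫ x in Set.Ici (0:ℝ), f x = 1) :
    Integrable f (volume.restrict (Set.Ici 0)) := by
  by_contra h
  rw [integral_undef h] at hm
  exact zero_ne_one hm

lemma isProbabilityMeasure_giniLaw (hf0 : ∀ x ≥ (0:ℝ), 0 ≤ f x)
    (hm : ∫ x in Set.Ici (0:ℝ), f x = 1) : IsProbabilityMeasure (giniLaw f) := by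
  have hi := integrable_of_mass hm
  constructor
  rw [giniLaw, withDensity_apply _ MeasurableSet.univ, Measure.restrict_univ,
    ← ofReal_integral_eq_lintegral_ofReal hi, hm, ENNReal.ofReal_one]
  exact (ae_restrict_iff' measurableSet_Ici).2 (ae_of_all _ hf0)

lemma aemeasurable_indicator_ofReal (hm : ∫ x in Set.Ici (0:ℝ), f x = 1) :
    AEMeasurable ((Set.Ici (0:ℝ)).indicator (fun x => ENNReal.ofReal (f x))) := by
  rw [aemeasurable_indicator_iff measurableSet_Ici]
  exact (integrable_of_mass hm).1.aemeasurable.ennreal_ofReal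

lemma aemeasurable_lconv {g : ℝ → ℝ≥0∞} (hg : AEMeasurable g) :
    AEMeasurable (fun x : ℝ => 2 * ∫⁻ y, g y * g (2 * x - y)) := by
  have h := aemeasurable_lconvolution hg hg
  have hqmp : Measure.QuasiMeasurePreserving (fun x : ℝ => 2 * x) volume volume := by
    refine ⟨by fun_prop, ?_⟩
    rw [Real.map_volume_mul_left two_ne_zero]
    exact Measure.smul_absolutelyContinuous
  have h2 := (h.comp_quasiMeasurePreserving hqmp).const_mul 2
  convert h2 using 2 with x
  simp only [Function.comp, lconvolution_def]
  congr 2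
  ext y
  congr 2
  ring

/-- The convolution integral defining `gainDensity f x` may diverge at exceptional points, where
the Bochner integral is `0`; these form a null set because the convolution has finite mass. -/
lemma ae_integrable_conv (hf0 : ∀ x ≥ (0:ℝ), 0 ≤ f x)
    (hm : ∫ x in Set.Ici (0:ℝ), f x = 1) :
    ∀ᵐ x : ℝ, IntegrableOn (fun y => f y * f (2 * x - y)) (Set.Icc 0 (2 * x)) := by
  have hi := integrable_of_mass hm
  have := isProbabilityMeasure_giniLaw hf0 hm
  have hgm := aemeasurable_indicator_ofReal hm
  have h1 : averageLaw (giniLaw f) Set.univ = 1 := measure_univ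
  rw [giniLaw_eq, averageLaw_withDensity hgm, withDensity_apply _ MeasurableSet.univ,
    Measure.restrict_univ] at h1
  have h2 := ae_lt_top' (aemeasurable_lconv hgm) (by rw [h1]; exact ENNReal.one_ne_top)
  filter_upwards [h2] with x hx
  refine ⟨aemeasurable_conv hi.1 x, ?_⟩
  rw [hasFiniteIntegral_iff_ofReal]
  · rw [← indicator_conv hf0]
    by_contra hcon
    rw [not_lt, top_le_iff] at hcon
    simp [hcon] at hx
  · exact (ae_restrict_iff' measurableSet_Icc).2 (ae_of_all _ fun y hy =>
      mul_nonneg (hf0 _ hy.1) (hf0 _ (by linarith [hy.2])))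

lemma indicator_gainDensity_ae (hf0 : ∀ x ≥ (0:ℝ), 0 ≤ f x)
    (hm : ∫ x in Set.Ici (0:ℝ), f x = 1) :
    (Set.Ici (0:ℝ)).indicator (fun x => ENNReal.ofReal (gainDensity f x)) =ᵐ[volume]
      fun x => 2 * ∫⁻ y, (Set.Ici (0:ℝ)).indicator (fun x => ENNReal.ofReal (f x)) y *
        (Set.Ici (0:ℝ)).indicator (fun x => ENNReal.ofReal (f x)) (2 * x - y) := by
  filter_upwards [ae_integrable_conv hf0 hm] with x hx
  rw [indicator_conv hf0]
  by_cases h0 : 0 ≤ x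
  · rw [Set.indicator_of_mem (by simpa using h0), gainDensity,
      intervalIntegral.integral_of_le (by linarith), ← integral_Icc_eq_integral_Ioc,
      ENNReal.ofReal_mul zero_le_two, ofReal_integral_eq_lintegral_ofReal hx]
    · simp
    · exact (ae_restrict_iff' measurableSet_Icc).2 (ae_of_all _ fun y hy =>
        mul_nonneg (hf0 _ hy.1) (hf0 _ (by linarith [hy.2])))
  · rw [Set.indicator_of_notMem (by simpa using h0), Set.Icc_eq_empty (by linarith)]
    simp

/-- The gain term of the equation is the law of the mean of two independent draws. -/
lemma giniLaw_gainDensity (hf0 : ∀ x ≥ (0:ℝ), 0 ≤ f x)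
    (hm : ∫ x in Set.Ici (0:ℝ), f x = 1) :
    giniLaw (gainDensity f) = averageLaw (giniLaw f) := by
  rw [giniLaw_eq f, averageLaw_withDensity (aemeasurable_indicator_ofReal hm), giniLaw_eq]
  exact withDensity_congr_ae (indicator_gainDensity_ae hf0 hm)

lemma aemeasurable_ofReal_gainDensity (hf0 : ∀ x ≥ (0:ℝ), 0 ≤ f x)
    (hm : ∫ x in Set.Ici (0:ℝ), f x = 1) :
    AEMeasurable (fun x => ENNReal.ofReal (gainDensity f x))
      (volume.restrict (Set.Ici (0:ℝ))) := by
  rw [← aemeasurable_indicator_iff measurableSet_Ici]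
  exact (aemeasurable_lconv (aemeasurable_indicator_ofReal hm)).congr
    (indicator_gainDensity_ae hf0 hm).symm
end

/-! ### Growth along the averaging equation -/

lemma ae_nonneg_giniLaw (f : ℝ → ℝ) : ∀ᵐ x ∂(giniLaw f), 0 ≤ x :=
  withDensity_absolutelyContinuous _ _ (ae_restrict_mem measurableSet_Ici)

/-- A nonnegative pointwise solution of the averaging equation on `[0,∞)` with unit mass and
mean `μ`. -/
structure IsAveragingSolution (ρ : ℝ → ℝ → ℝ) (μ : ℝ) : Prop where
  nonneg : ∀ t ≥ (0:ℝ), ∀ x ≥ (0:ℝ), 0 ≤ ρ t x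
  pde : ∀ t ≥ (0:ℝ), ∀ x ≥ (0:ℝ),
    HasDerivAt (fun s => ρ s x) (gainDensity (ρ t) x - ρ t x) t
  mass : ∀ t ≥ (0:ℝ), ∫ x in Set.Ici (0:ℝ), ρ t x = 1
  mean_pos : 0 < μ
  mean : ∀ t ≥ (0:ℝ), ∫ x in Set.Ici (0:ℝ), x * ρ t x = μ

namespace IsAveragingSolution
variable {ρ : ℝ → ℝ → ℝ} {μ : ℝ} (S : IsAveragingSolution ρ μ)
include S

lemma prob {t : ℝ} (ht : 0 ≤ t) : IsProbabilityMeasure (giniLaw (ρ t)) :=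
  isProbabilityMeasure_giniLaw (S.nonneg t ht) (S.mass t ht)

lemma hasDerivAt_exp {t x : ℝ} (ht : 0 ≤ t) (hx : 0 ≤ x) :
    HasDerivAt (fun s => Real.exp s * ρ s x) (Real.exp t * gainDensity (ρ t) x) t := by
  refine ((Real.hasDerivAt_exp t).mul (S.pde t ht x hx)).congr_deriv ?_
  ring

lemma exp_mono {s t x : ℝ} (hs : 0 ≤ s) (hst : s ≤ t) (hx : 0 ≤ x) :
    Real.exp s * ρ s x ≤ Real.exp t * ρ t x := by
  refine monotoneOn_of_deriv_nonneg (convex_Ici (0:ℝ))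
    (f := fun s => Real.exp s * ρ s x)
    (fun r hr => (S.hasDerivAt_exp hr hx).continuousAt.continuousWithinAt)
    (fun r hr => ?_) (fun r hr => ?_) hs (hs.trans hst) hst
  · rw [interior_Ici] at hr
    exact (S.hasDerivAt_exp (le_of_lt hr) hx).differentiableAt.differentiableWithinAt
  · rw [interior_Ici] at hr
    rw [(S.hasDerivAt_exp (le_of_lt hr) hx).deriv]
    exact mul_nonneg (Real.exp_pos _).le (gainDensity_nonneg (S.nonneg r (le_of_lt hr)) hx)

/-- Since `eˢ ρ s x` increases in `s`, so does `e²ˢ` times the gain term; integrability at the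
later time excludes junk values at the earlier one. -/
lemma gain_mono {s t x : ℝ} (hs : 0 ≤ s) (hst : s ≤ t) (hx : 0 ≤ x)
    (hi : IntegrableOn (fun y => ρ t y * ρ t (2 * x - y)) (Set.Icc 0 (2 * x))) :
    Real.exp (2 * s) * gainDensity (ρ s) x ≤ Real.exp (2 * t) * gainDensity (ρ t) x := by
  have ht := hs.trans hst
  have key : ∀ y ∈ Set.Icc (0:ℝ) (2 * x), Real.exp (2 * s) * (ρ s y * ρ s (2 * x - y)) ≤
      Real.exp (2 * t) * (ρ t y * ρ t (2 * x - y)) := by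
    intro y hy
    have h1 := S.exp_mono hs hst hy.1
    have h2 := S.exp_mono hs hst (x := 2 * x - y) (by linarith [hy.2])
    have h3 := mul_le_mul h1 h2
      (mul_nonneg (Real.exp_pos _).le (S.nonneg s hs _ (by linarith [hy.2])))
      (mul_nonneg (Real.exp_pos _).le (S.nonneg t ht _ hy.1))
    rw [two_mul s, two_mul t, Real.exp_add, Real.exp_add]
    linarith
  have h2x : 0 ≤ 2 * x := by linarith
  simp only [gainDensity]
  rw [intervalIntegral.integral_of_le h2x, intervalIntegral.integral_of_le h2x,
    ← integral_Icc_eq_integral_Ioc, ← integral_Icc_eq_integral_Ioc]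
  have h := setIntegral_mono_on (μ := volume) (s := Set.Icc (0:ℝ) (2 * x))
    (f := fun y => Real.exp (2 * s) * (ρ s y * ρ s (2 * x - y)))
    (g := fun y => Real.exp (2 * t) * (ρ t y * ρ t (2 * x - y))) ?_
    (hi.const_mul _) measurableSet_Icc key
  · rw [integral_const_mul, integral_const_mul] at h
    linarith
  · refine Integrable.mono' (hi.const_mul (Real.exp (2 * t)))
      ((aemeasurable_conv (integrable_of_mass (S.mass s hs)).1 x).const_mul _) ?_
    refine (ae_restrict_iff' measurableSet_Icc).2 (ae_of_all _ fun y hy => ?_)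
    rw [Real.norm_of_nonneg (mul_nonneg (Real.exp_pos _).le (mul_nonneg (S.nonneg s hs _ hy.1)
      (S.nonneg s hs _ (by linarith [hy.2]))))]
    exact key y hy

/-- Mean value inequality for `eˢ ρ s x` on `[s, t]`; the gain at intermediate times is bounded by
the gain at the right end point through `gain_mono`. -/
lemma exp_growth {s t x : ℝ} (hs : 0 ≤ s) (hst : s ≤ t) (hx : 0 ≤ x)
    (hi : IntegrableOn (fun y => ρ t y * ρ t (2 * x - y)) (Set.Icc 0 (2 * x))) :
    Real.exp t * ρ t x ≤ Real.exp s * ρ s x +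
      (t - s) * Real.exp (t - s) * Real.exp t * gainDensity (ρ t) x := by
  have h := Convex.image_sub_le_mul_sub_of_deriv_le (convex_Icc s t)
    (f := fun s => Real.exp s * ρ s x)
    (fun r hr => (S.hasDerivAt_exp (hs.trans hr.1) hx).continuousAt.continuousWithinAt)
    (fun r hr => ?_) (C := Real.exp (t - s) * Real.exp t * gainDensity (ρ t) x)
    (fun r hr => ?_) s ⟨le_rfl, hst⟩ t ⟨hst, le_rfl⟩ hst
  · linarith
  · rw [interior_Icc] at hr
    exact (S.hasDerivAt_exp (hs.trans hr.1.le) hx).differentiableAt.differentiableWithinAt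
  · rw [interior_Icc] at hr
    have hr0 := hs.trans hr.1.le
    rw [(S.hasDerivAt_exp hr0 hx).deriv]
    have h1 := S.gain_mono hr0 hr.2.le hx hi
    have h2 : Real.exp r * gainDensity (ρ r) x =
        Real.exp (-r) * (Real.exp (2 * r) * gainDensity (ρ r) x) := by
      rw [← mul_assoc, ← Real.exp_add]; ring_nf
    have h3 : Real.exp (t - s) * Real.exp t * gainDensity (ρ t) x =
        Real.exp (-s) * (Real.exp (2 * t) * gainDensity (ρ t) x) := by
      rw [← mul_assoc, ← Real.exp_add, ← Real.exp_add]; ring_nf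
    rw [h2, h3]
    refine mul_le_mul (Real.exp_le_exp.2 (by linarith [hr.1])) h1 ?_ (Real.exp_pos _).le
    exact mul_nonneg (Real.exp_pos _).le (gainDensity_nonneg (S.nonneg r hr0) hx)

lemma smul_le {t : ℝ} (ht : 0 ≤ t) :
    ENNReal.ofReal (Real.exp (-t)) • giniLaw (ρ 0) ≤ giniLaw (ρ t) := by
  rw [giniLaw, giniLaw, ← withDensity_smul' _ _ ENNReal.ofReal_ne_top]
  refine withDensity_mono ((ae_restrict_iff' measurableSet_Ici).2 (ae_of_all _ fun x hx => ?_))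
  simp only [Pi.smul_apply, smul_eq_mul]
  rw [← ENNReal.ofReal_mul (Real.exp_pos _).le]
  refine ENNReal.ofReal_le_ofReal ?_
  have h := S.exp_mono le_rfl ht hx
  rw [Real.exp_zero, one_mul] at h
  calc _ ≤ Real.exp (-t) * (Real.exp t * ρ t x) := by gcongr
    _ = ρ t x := by rw [← mul_assoc, ← Real.exp_add]; simp

lemma lintegral_giniLaw {t : ℝ} (ht : 0 ≤ t) {φ : ℝ → ℝ≥0∞} (hφ : Measurable φ) :
    ∫⁻ x, φ x ∂(giniLaw (ρ t)) = ∫⁻ x in Set.Ici 0, ENNReal.ofReal (ρ t x) * φ x := by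
  rw [giniLaw, lintegral_withDensity_eq_lintegral_mul₀ _ hφ.aemeasurable]
  · rfl
  · exact (integrable_of_mass (S.mass t ht)).1.aemeasurable.ennreal_ofReal

/-- `exp_growth` integrated against a test function, with no differentiation under the integral. -/
lemma lintegral_growth {s t : ℝ} (hs : 0 ≤ s) (hst : s ≤ t) {φ : ℝ → ℝ≥0∞}
    (hφ : Measurable φ) :
    ENNReal.ofReal (Real.exp t) * ∫⁻ x, φ x ∂(giniLaw (ρ t)) ≤
      ENNReal.ofReal (Real.exp s) * ∫⁻ x, φ x ∂(giniLaw (ρ s)) +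
      ENNReal.ofReal ((t - s) * Real.exp (t - s) * Real.exp t) *
        ∫⁻ x, φ x ∂(averageLaw (giniLaw (ρ t))) := by
  have ht := hs.trans hst
  have hmt := aemeasurable_ofReal_gainDensity (S.nonneg t ht) (S.mass t ht)
  have hms := (integrable_of_mass (S.mass s hs)).1.aemeasurable.ennreal_ofReal
  have hc : 0 ≤ (t - s) * Real.exp (t - s) * Real.exp t :=
    mul_nonneg (mul_nonneg (by linarith) (Real.exp_pos _).le) (Real.exp_pos _).le
  rw [← giniLaw_gainDensity (S.nonneg t ht) (S.mass t ht), S.lintegral_giniLaw ht hφ,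
    S.lintegral_giniLaw hs hφ, giniLaw, lintegral_withDensity_eq_lintegral_mul₀ hmt
    hφ.aemeasurable, ← lintegral_const_mul' _ _ ENNReal.ofReal_ne_top,
    ← lintegral_const_mul' _ _ ENNReal.ofReal_ne_top,
    ← lintegral_const_mul' _ _ ENNReal.ofReal_ne_top, ← lintegral_add_left' (by fun_prop)]
  refine lintegral_mono_ae ((ae_restrict_iff' measurableSet_Ici).2 ?_)
  filter_upwards [ae_integrable_conv (S.nonneg t ht) (S.mass t ht)] with x hx hx0
  have h := S.exp_growth hs hst hx0 hx
  simp only [Pi.mul_apply, ← mul_assoc]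
  rw [← add_mul]
  gcongr
  rw [← ENNReal.ofReal_mul (Real.exp_pos _).le, ← ENNReal.ofReal_mul (Real.exp_pos _).le,
    ← ENNReal.ofReal_mul hc, ← ENNReal.ofReal_add
      (mul_nonneg (Real.exp_pos _).le (S.nonneg s hs x hx0))
      (mul_nonneg hc (gainDensity_nonneg (S.nonneg t ht) hx0))]
  exact ENNReal.ofReal_le_ofReal h

lemma integrable_id {t : ℝ} (ht : 0 ≤ t) : Integrable (fun x => x) (giniLaw (ρ t)) := by
  rw [giniLaw, integrable_withDensity_iff_integrable_smul₀'
    (integrable_of_mass (S.mass t ht)).1.aemeasurable.ennreal_ofReal (by simp)]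
  have h : Integrable (fun x => x * ρ t x) (volume.restrict (Set.Ici 0)) := by
    by_contra h
    have h2 := S.mean t ht
    rw [integral_undef h] at h2
    exact S.mean_pos.ne h2
  refine h.congr ((ae_restrict_iff' measurableSet_Ici).2 (ae_of_all _ fun x hx => ?_))
  simp only [smul_eq_mul]
  rw [ENNReal.toReal_ofReal (S.nonneg t ht x hx), mul_comm]

lemma integral_id {t : ℝ} (ht : 0 ≤ t) : ∫ x, x ∂(giniLaw (ρ t)) = μ := by
  rw [giniLaw, integral_withDensity_eq_integral_toReal_smul₀
    (integrable_of_mass (S.mass t ht)).1.aemeasurable.ennreal_ofReal (by simp), ← S.mean t ht]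
  refine setIntegral_congr_fun measurableSet_Ici fun x hx => ?_
  simp only [smul_eq_mul]
  rw [ENNReal.toReal_ofReal (S.nonneg t ht x hx), mul_comm]

end IsAveragingSolution

/-! ### Decay of the variance -/

/-- Convexity of the truncated square `x² / (1 + x / r)`, written as `r x² / (r + x)`. -/
lemma trunc_sq_midpoint {r a b : ℝ} (hr : 0 < r) (ha : 0 ≤ a) (hb : 0 ≤ b) :
    r * ((a + b) / 2) ^ 2 / (r + (a + b) / 2) ≤
      (r * a ^ 2 / (r + a) + r * b ^ 2 / (r + b)) / 2 := by
  rw [div_add_div _ _ (by positivity) (by positivity), div_div, div_le_div_iff₀ (by positivity)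
    (by positivity)]
  have h : (r * a ^ 2 * (r + b) + (r + a) * (r * b ^ 2)) * (r + (a + b) / 2) -
      r * ((a + b) / 2) ^ 2 * ((r + a) * (r + b) * 2) = r ^ 3 * (a - b) ^ 2 / 2 := by ring
  have h2 : 0 ≤ r ^ 3 * (a - b) ^ 2 / 2 := by positivity
  linarith

namespace IsAveragingSolution
variable {ρ : ℝ → ℝ → ℝ} {μ : ℝ} (S : IsAveragingSolution ρ μ)
include S

/-- A discrete Grönwall argument: if averaging multiplies the finite functional `∫ φ` by at most
`κ`, then along the solution it grows at most like `exp ((11/10 κ - 1) t)`. The factor `11/10`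
absorbs the error of time steps of length at most `1/100`. -/
lemma moment_bound {φ : ℝ → ℝ≥0∞} (hφ : Measurable φ) {κ : ℝ} (hκ0 : 0 < κ) (hκ1 : κ ≤ 1)
    (hfin : ∀ t ≥ (0:ℝ), ∫⁻ x, φ x ∂(giniLaw (ρ t)) ≠ ⊤)
    (hκ : ∀ t ≥ (0:ℝ), ∫⁻ x, φ x ∂(averageLaw (giniLaw (ρ t))) ≤
      ENNReal.ofReal κ * ∫⁻ x, φ x ∂(giniLaw (ρ t))) {t : ℝ} (ht : 0 ≤ t) :
    (∫⁻ x, φ x ∂(giniLaw (ρ t))).toReal ≤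
      Real.exp ((11/10 * κ - 1) * t) * (∫⁻ x, φ x ∂(giniLaw (ρ 0))).toReal := by
  set F : ℝ → ℝ := fun t => (∫⁻ x, φ x ∂(giniLaw (ρ t))).toReal with hF
  have hF0 : ∀ t, 0 ≤ F t := fun t => ENNReal.toReal_nonneg
  have step : ∀ s h : ℝ, 0 ≤ s → 0 ≤ h → h ≤ 1/100 →
      Real.exp (s + h) * F (s + h) ≤ Real.exp (11/10 * κ * h) * (Real.exp s * F s) := by
    intro s h hs hh hh1
    have hsh : 0 ≤ s + h := by linarith
    have h1 := S.lintegral_growth hs (show s ≤ s + h by linarith) hφ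
    have h2 := h1.trans (add_le_add_right (mul_le_mul_right (hκ _ hsh) _) _)
    rw [add_sub_cancel_left] at h2
    have h3 := ENNReal.toReal_mono (by
      simp [ENNReal.mul_eq_top, hfin s hs, hfin _ hsh]) h2
    have hc : 0 ≤ h * Real.exp h * Real.exp (s + h) := by positivity
    rw [ENNReal.toReal_add (by simp [ENNReal.mul_eq_top, hfin s hs])
      (by simp [ENNReal.mul_eq_top, hfin _ hsh]), ENNReal.toReal_mul, ENNReal.toReal_mul,
      ENNReal.toReal_mul, ENNReal.toReal_mul, ENNReal.toReal_ofReal (Real.exp_pos _).le,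
      ENNReal.toReal_ofReal (Real.exp_pos _).le, ENNReal.toReal_ofReal hκ0.le,
      ENNReal.toReal_ofReal hc] at h3
    have h3' : Real.exp (s + h) * F (s + h) * (1 - κ * (h * Real.exp h)) ≤
        Real.exp s * F s := by
      simp only [hF]; linarith
    have he : Real.exp h ≤ 102/100 := by
      have := Real.exp_bound_div_one_sub_of_interval hh (by linarith)
      refine this.trans ?_
      rw [div_le_iff₀ (by linarith)]
      linarith
    have hu : 0 ≤ Real.exp (s + h) * F (s + h) := mul_nonneg (Real.exp_pos _).le (hF0 _)
    have h4 : 1 ≤ Real.exp (11/10 * κ * h) * (1 - κ * (h * Real.exp h)) := by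
      have hkh : 0 ≤ κ * h := by positivity
      have a1 : 11/10 * κ * h + 1 ≤ Real.exp (11/10 * κ * h) := Real.add_one_le_exp _
      have a2 : 1 - 102/100 * (κ * h) ≤ 1 - κ * (h * Real.exp h) := by nlinarith
      have a3 : κ * h ≤ 1/100 := by nlinarith
      calc (1:ℝ) ≤ (11/10 * κ * h + 1) * (1 - 102/100 * (κ * h)) := by nlinarith
        _ ≤ _ := mul_le_mul a1 a2 (by linarith) (Real.exp_pos _).le
    calc Real.exp (s + h) * F (s + h) = Real.exp (s + h) * F (s + h) * 1 := (mul_one _).symm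
      _ ≤ Real.exp (s + h) * F (s + h) *
          (Real.exp (11/10 * κ * h) * (1 - κ * (h * Real.exp h))) := by gcongr
      _ = Real.exp (11/10 * κ * h) *
          (Real.exp (s + h) * F (s + h) * (1 - κ * (h * Real.exp h))) := by ring
      _ ≤ _ := by gcongr
  obtain ⟨n, hn⟩ := exists_nat_gt (100 * t)
  have hn0 : (0:ℝ) < n := lt_of_le_of_lt (by linarith) hn
  set h := t / n with hh
  have hh0 : 0 ≤ h := by positivity
  have hh1 : h ≤ 1/100 := by
    rw [hh, div_le_iff₀ hn0]; linarith
  have iter : ∀ k : ℕ, Real.exp (k * h) * F (k * h) ≤ Real.exp (11/10 * κ * (k * h)) * F 0 := by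
    intro k
    induction k with
    | zero => simp
    | succ k ih =>
      have h1 := step (k * h) h (by positivity) hh0 hh1
      have e : ((k + 1 : ℕ) : ℝ) * h = k * h + h := by push_cast; ring
      rw [e]
      refine h1.trans ?_
      calc _ ≤ Real.exp (11/10 * κ * h) * (Real.exp (11/10 * κ * (k * h)) * F 0) := by gcongr
        _ = _ := by rw [← mul_assoc, ← Real.exp_add]; ring_nf
  have hfinal := iter n
  have e : (n:ℝ) * h = t := by rw [hh]; field_simp
  rw [e] at hfinal
  have e2 : Real.exp ((11/10 * κ - 1) * t) = Real.exp (-t) * Real.exp (11/10 * κ * t) := by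
    rw [← Real.exp_add]; ring_nf
  change F t ≤ _ * F 0
  calc F t = Real.exp (-t) * (Real.exp t * F t) := by rw [← mul_assoc, ← Real.exp_add]; simp
    _ ≤ Real.exp (-t) * (Real.exp (11/10 * κ * t) * F 0) := by gcongr
    _ = _ := by rw [e2]; ring

/-- The truncated squares `r x² / (r + x)` grow linearly, so their moments are finite a priori, and
by convexity averaging does not increase them: `moment_bound` with `κ = 1` bounds them uniformly in
`r`, and Fatou's lemma gives the second moment. -/
lemma second_moment_lt_top (h0 : ∫⁻ x, ENNReal.ofReal (x ^ 2) ∂(giniLaw (ρ 0)) ≠ ⊤)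
    {t : ℝ} (ht : 0 ≤ t) : ∫⁻ x, ENNReal.ofReal (x ^ 2) ∂(giniLaw (ρ t)) < ⊤ := by
  set φ : ℕ → ℝ → ℝ≥0∞ := fun n x =>
    ENNReal.ofReal (((n:ℝ) + 1) * x ^ 2 / ((n + 1) + x)) with hφ
  have hφm : ∀ n, Measurable (φ n) := fun n => by simp only [hφ]; fun_prop
  have hle : ∀ n, ∀ x : ℝ, 0 ≤ x → φ n x ≤ ENNReal.ofReal (x ^ 2) := by
    intro n x hx
    refine ENNReal.ofReal_le_ofReal ?_
    rw [div_le_iff₀ (by positivity)]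
    nlinarith [pow_nonneg hx 3]
  have hfin : ∀ n, ∀ t ≥ (0:ℝ), ∫⁻ x, φ n x ∂(giniLaw (ρ t)) ≠ ⊤ := by
    intro n t ht
    have h1 : ∫⁻ x, φ n x ∂(giniLaw (ρ t)) ≤
        ∫⁻ x, ENNReal.ofReal (((n:ℝ) + 1) * x) ∂(giniLaw (ρ t)) := by
      refine lintegral_mono_ae ?_
      filter_upwards [ae_nonneg_giniLaw (ρ t)] with x hx
      refine ENNReal.ofReal_le_ofReal ?_
      rw [div_le_iff₀ (by positivity)]
      have : 0 ≤ ((n:ℝ) + 1) * x * (n + 1) := by positivity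
      linarith
    refine (h1.trans_lt ?_).ne
    have h2 := ((S.integrable_id ht).const_mul ((n:ℝ) + 1))
    rw [← ofReal_integral_eq_lintegral_ofReal h2]
    · exact ENNReal.ofReal_lt_top
    · filter_upwards [ae_nonneg_giniLaw (ρ t)] with x hx
      simp only [Pi.zero_apply]
      positivity
  have hav : ∀ n, ∀ t ≥ (0:ℝ), ∫⁻ x, φ n x ∂(averageLaw (giniLaw (ρ t))) ≤
      ENNReal.ofReal 1 * ∫⁻ x, φ n x ∂(giniLaw (ρ t)) := by
    intro n t ht
    have := S.prob ht
    rw [lintegral_averageLaw _ (hφm n), lintegral_prod _ (by have := hφm n; fun_prop),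
      ENNReal.ofReal_one, one_mul]
    calc _ ≤ ∫⁻ x, ∫⁻ y, (φ n x + φ n y) / 2 ∂(giniLaw (ρ t)) ∂(giniLaw (ρ t)) := by
          refine lintegral_mono_ae ?_
          filter_upwards [ae_nonneg_giniLaw (ρ t)] with x hx
          refine lintegral_mono_ae ?_
          filter_upwards [ae_nonneg_giniLaw (ρ t)] with y hy
          have h2 : (2:ℝ≥0∞) = ENNReal.ofReal 2 := by simp
          simp only [hφ]
          rw [← ENNReal.ofReal_add (by positivity) (by positivity), h2,
            ← ENNReal.ofReal_div_of_pos two_pos]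
          exact ENNReal.ofReal_le_ofReal (trunc_sq_midpoint (by positivity) hx hy)
      _ = _ := by
          have hm := hφm n
          simp only [ENNReal.div_eq_inv_mul, mul_add]
          have e : ∀ x, ∫⁻ y, (2⁻¹ * φ n x + 2⁻¹ * φ n y) ∂(giniLaw (ρ t)) =
              2⁻¹ * φ n x + 2⁻¹ * ∫⁻ y, φ n y ∂(giniLaw (ρ t)) := by
            intro x
            rw [lintegral_add_left (by fun_prop), lintegral_const, measure_univ, mul_one,
              lintegral_const_mul _ hm]
          simp only [e]
          rw [lintegral_add_left (by fun_prop), lintegral_const, measure_univ, mul_one,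
            lintegral_const_mul _ hm, ← add_mul, ENNReal.inv_two_add_inv_two, one_mul]
  set C := Real.exp ((11/10 * 1 - 1) * t) *
    (∫⁻ x, ENNReal.ofReal (x ^ 2) ∂(giniLaw (ρ 0))).toReal with hC
  have hbd : ∀ n, ∫⁻ x, φ n x ∂(giniLaw (ρ t)) ≤ ENNReal.ofReal C := by
    intro n
    have h1 := S.moment_bound (hφm n) one_pos le_rfl (hfin n) (hav n) ht
    rw [← ENNReal.ofReal_toReal (hfin n t ht)]
    refine ENNReal.ofReal_le_ofReal (h1.trans ?_)
    refine mul_le_mul_of_nonneg_left (ENNReal.toReal_mono h0 (lintegral_mono_ae ?_))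
      (Real.exp_pos _).le
    filter_upwards [ae_nonneg_giniLaw (ρ 0)] with x hx
    exact hle n x hx
  have hlim : ∀ x, 0 ≤ x → Filter.liminf (fun n => φ n x) Filter.atTop =
      ENNReal.ofReal (x ^ 2) := by
    intro x hx
    refine Filter.Tendsto.liminf_eq (ENNReal.tendsto_ofReal ?_)
    have h1 : Filter.Tendsto (fun n : ℕ => x / ((n:ℝ) + 1)) Filter.atTop (nhds 0) :=
      tendsto_const_nhds.div_atTop
        (Filter.tendsto_atTop_add_const_right _ _ tendsto_natCast_atTop_atTop)
    have h2 : Filter.Tendsto (fun n : ℕ => x ^ 2 / (1 + x / ((n:ℝ) + 1))) Filter.atTop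
        (nhds (x ^ 2 / (1 + 0))) :=
      tendsto_const_nhds.div (tendsto_const_nhds.add h1) (by norm_num)
    rw [add_zero, div_one] at h2
    refine h2.congr fun n => ?_
    field_simp
  calc ∫⁻ x, ENNReal.ofReal (x ^ 2) ∂(giniLaw (ρ t))
      = ∫⁻ x, Filter.liminf (fun n => φ n x) Filter.atTop ∂(giniLaw (ρ t)) := by
        refine lintegral_congr_ae ?_
        filter_upwards [ae_nonneg_giniLaw (ρ t)] with x hx
        exact (hlim x hx).symm
    _ ≤ Filter.liminf (fun n => ∫⁻ x, φ n x ∂(giniLaw (ρ t))) Filter.atTop :=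
        lintegral_liminf_le hφm
    _ ≤ Filter.liminf (fun _ : ℕ => ENNReal.ofReal C) Filter.atTop :=
        Filter.liminf_le_liminf (Filter.Eventually.of_forall hbd)
    _ < ⊤ := by simp

lemma integrable_sq (h0 : ∫⁻ x, ENNReal.ofReal (x ^ 2) ∂(giniLaw (ρ 0)) ≠ ⊤)
    {t : ℝ} (ht : 0 ≤ t) : Integrable (fun x => (x - μ) ^ 2) (giniLaw (ρ t)) := by
  have := S.prob ht
  have h1 : Integrable (fun x : ℝ => x ^ 2) (giniLaw (ρ t)) := by
    refine ⟨by fun_prop, ?_⟩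
    rw [hasFiniteIntegral_iff_ofReal (ae_of_all _ fun x => sq_nonneg x)]
    exact S.second_moment_lt_top h0 ht
  have h2 := (h1.sub ((S.integrable_id ht).const_mul (2 * μ))).add (integrable_const (μ ^ 2))
  refine h2.congr (ae_of_all _ fun x => ?_)
  simp only [Pi.add_apply, Pi.sub_apply]
  ring

/-- Averaging halves the variance, so `moment_bound` applies with `κ = 1/2`. -/
lemma variance_bound (h0 : ∫⁻ x, ENNReal.ofReal (x ^ 2) ∂(giniLaw (ρ 0)) ≠ ⊤)
    {t : ℝ} (ht : 0 ≤ t) : ∫ x, (x - μ) ^ 2 ∂(giniLaw (ρ t)) ≤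
      Real.exp (-(9/20 * t)) * ∫ x, (x - μ) ^ 2 ∂(giniLaw (ρ 0)) := by
  set φ : ℝ → ℝ≥0∞ := fun x => ENNReal.ofReal ((x - μ) ^ 2) with hφ
  have hφm : Measurable φ := by simp only [hφ]; fun_prop
  have hint : ∀ t ≥ (0:ℝ), ENNReal.ofReal (∫ x, (x - μ) ^ 2 ∂(giniLaw (ρ t))) =
      ∫⁻ x, φ x ∂(giniLaw (ρ t)) := fun t ht =>
    ofReal_integral_eq_lintegral_ofReal (S.integrable_sq h0 ht)
      (ae_of_all _ fun x => sq_nonneg _)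
  have hreal : ∀ t ≥ (0:ℝ), ∫ x, (x - μ) ^ 2 ∂(giniLaw (ρ t)) =
      (∫⁻ x, φ x ∂(giniLaw (ρ t))).toReal := fun t ht => by
    rw [← hint t ht, ENNReal.toReal_ofReal (integral_nonneg fun x => sq_nonneg _)]
  have hav : ∀ t ≥ (0:ℝ), ∫⁻ x, φ x ∂(averageLaw (giniLaw (ρ t))) ≤
      ENNReal.ofReal (1/2) * ∫⁻ x, φ x ∂(giniLaw (ρ t)) := by
    intro t ht
    have := S.prob ht
    have hsq := S.integrable_sq h0 ht
    have hid : Integrable (fun x => x - μ) (giniLaw (ρ t)) :=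
      (S.integrable_id ht).sub (integrable_const μ)
    have hzero : ∫ x, (x - μ) ∂(giniLaw (ρ t)) = 0 := by
      rw [integral_sub (S.integrable_id ht) (integrable_const μ), S.integral_id ht]
      simp
    have hA := (hsq.comp_fst (giniLaw (ρ t))).const_mul (1/4)
    have hB := (hsq.comp_snd (giniLaw (ρ t))).const_mul (1/4)
    have hAB := (hid.mul_prod hid).const_mul (1/2)
    have e : ∀ p : ℝ × ℝ, ((p.1 + p.2) / 2 - μ) ^ 2 =
        1/4 * (p.1 - μ) ^ 2 + 1/4 * (p.2 - μ) ^ 2 + 1/2 * ((p.1 - μ) * (p.2 - μ)) := by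
      intro p; ring
    have hall : Integrable (fun p : ℝ × ℝ => ((p.1 + p.2) / 2 - μ) ^ 2)
        ((giniLaw (ρ t)).prod (giniLaw (ρ t))) :=
      ((hA.add hB).add hAB).congr (ae_of_all _ fun p => (e p).symm)
    rw [lintegral_averageLaw _ hφm, ← hint t ht, ← ENNReal.ofReal_mul (by norm_num),
      ← ofReal_integral_eq_lintegral_ofReal hall (ae_of_all _ fun p => sq_nonneg _)]
    refine ENNReal.ofReal_le_ofReal (le_of_eq ?_)
    simp only [e]
    have hA' : Integrable (fun p : ℝ × ℝ => 1/4 * (p.1 - μ) ^ 2 + 1/4 * (p.2 - μ) ^ 2)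
      ((giniLaw (ρ t)).prod (giniLaw (ρ t))) := hA.add hB
    rw [integral_add hA' hAB, integral_add hA hB, integral_const_mul,
      integral_const_mul, integral_const_mul,
      integral_prod_mul (fun x => x - μ) (fun x => x - μ), hzero,
      integral_fun_fst (fun x => (x - μ) ^ 2), integral_fun_snd (fun x => (x - μ) ^ 2)]
    simp
    ring
  have h := S.moment_bound hφm (κ := 1/2) (by norm_num) (by norm_num)
    (fun t ht => by rw [← hint t ht]; exact ENNReal.ofReal_ne_top) hav ht
  rw [← hreal t ht, ← hreal 0 le_rfl] at h
  convert h using 3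
  ring

end IsAveragingSolution

/-! ### Dissipation of the mean distance -/

/-- The integrand of the dissipation: the loss of distance to `c` when `a` and `b` are replaced by
their mean. It vanishes unless `c` lies between `a` and `b`, where it is the distance from `c` to the
nearer of the two. -/
noncomputable def distLoss (a b c : ℝ) : ℝ := (|a - c| + |b - c|) / 2 - |(a + b) / 2 - c|

/-- The expected loss of distance to a third point under averaging, for three independent points
with law `ν`. -/
noncomputable def dissipation (ν : Measure ℝ) : ℝ≥0∞ :=
  ∫⁻ a, ∫⁻ b, ∫⁻ c, ENNReal.ofReal (distLoss a b c) ∂ν ∂ν ∂ν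

/-- The expected distance of independent points with laws `ν` and `ν'`. -/
noncomputable def meanDist (ν ν' : Measure ℝ) : ℝ≥0∞ :=
  ∫⁻ x, ∫⁻ y, ENNReal.ofReal |x - y| ∂ν' ∂ν

lemma distLoss_nonneg (a b c : ℝ) : 0 ≤ distLoss a b c := by
  have h : |(a + b) / 2 - c| = |(a - c) + (b - c)| / 2 := by
    rw [← abs_two, ← abs_div, abs_two]; ring_nf
  rw [distLoss, h]
  linarith [abs_add_le (a - c) (b - c)]

section
variable (ν ν' : Measure ℝ) [IsProbabilityMeasure ν] [IsProbabilityMeasure ν']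

lemma meanDist_averageLaw_add_dissipation :
    meanDist (averageLaw ν) ν + dissipation ν = meanDist ν ν := by
  have hm : Measurable (fun p : ℝ × ℝ => ∫⁻ y, ENNReal.ofReal |(p.1 + p.2) / 2 - y| ∂ν) :=
    Measurable.lintegral_prod_right' (f := fun q : (ℝ × ℝ) × ℝ =>
      ENNReal.ofReal |(q.1.1 + q.1.2) / 2 - q.2|) (by fun_prop)
  have hA : Measurable (fun a : ℝ => ∫⁻ y, ENNReal.ofReal |a - y| ∂ν) :=
    Measurable.lintegral_prod_right' (f := fun q : ℝ × ℝ =>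
      ENNReal.ofReal |q.1 - q.2|) (by fun_prop)
  have hm1 : Measurable (fun a : ℝ =>
      ∫⁻ b, ∫⁻ y, ENNReal.ofReal |(a + b) / 2 - y| ∂ν ∂ν) := hm.lintegral_prod_right'
  rw [meanDist, lintegral_averageLaw ν hA, lintegral_prod _ hm.aemeasurable, dissipation,
    ← lintegral_add_left hm1]
  have e1 : ∀ a b : ℝ, (∫⁻ y, ENNReal.ofReal |(a + b) / 2 - y| ∂ν) +
      (∫⁻ c, ENNReal.ofReal (distLoss a b c) ∂ν) =
      2⁻¹ * (∫⁻ y, ENNReal.ofReal |a - y| ∂ν) + 2⁻¹ * (∫⁻ y, ENNReal.ofReal |b - y| ∂ν) := by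
    intro a b
    rw [← lintegral_add_left (by fun_prop), ← lintegral_const_mul _ (by fun_prop),
      ← lintegral_const_mul _ (by fun_prop), ← lintegral_add_left (by fun_prop)]
    refine lintegral_congr fun c => ?_
    have h2 : (2⁻¹:ℝ≥0∞) = ENNReal.ofReal (2⁻¹) := by
      rw [ENNReal.ofReal_inv_of_pos two_pos]; simp
    rw [h2, ← ENNReal.ofReal_mul (by norm_num), ← ENNReal.ofReal_mul (by norm_num),
      ← ENNReal.ofReal_add (abs_nonneg _) (distLoss_nonneg _ _ _),
      ← ENNReal.ofReal_add (by positivity) (by positivity), distLoss]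
    congr 1
    ring
  have e2 : ∀ a : ℝ, (∫⁻ b, ∫⁻ y, ENNReal.ofReal |(a + b) / 2 - y| ∂ν ∂ν) +
      (∫⁻ b, ∫⁻ c, ENNReal.ofReal (distLoss a b c) ∂ν ∂ν) =
      2⁻¹ * (∫⁻ y, ENNReal.ofReal |a - y| ∂ν) + 2⁻¹ * meanDist ν ν := by
    intro a
    have hma : Measurable (fun b => ∫⁻ y, ENNReal.ofReal |(a + b) / 2 - y| ∂ν) :=
      hm.comp measurable_prodMk_left
    rw [← lintegral_add_left hma]
    rw [lintegral_congr (e1 a), lintegral_add_left (by fun_prop), lintegral_const, measure_univ,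
      mul_one, lintegral_const_mul _ hA, meanDist]
  rw [lintegral_congr e2, lintegral_add_left (by fun_prop), lintegral_const, measure_univ,
    mul_one, lintegral_const_mul _ hA]
  change 2⁻¹ * meanDist ν ν + _ = _
  rw [← add_mul, ENNReal.inv_two_add_inv_two, one_mul, meanDist]

lemma integrable_id_averageLaw (h : Integrable (fun x => x) ν) :
    Integrable (fun x => x) (averageLaw ν) := by
  rw [averageLaw, integrable_map_measure (by fun_prop) (by fun_prop)]
  exact ((h.comp_fst ν).add (h.comp_snd ν)).div_const 2

variable {ν ν'}

lemma integrable_dist (h : Integrable (fun x => x) ν) (h' : Integrable (fun x => x) ν') :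
    Integrable (fun p : ℝ × ℝ => |p.1 - p.2|) (ν.prod ν') :=
  ((h.comp_fst ν').sub (h'.comp_snd ν)).abs

lemma integrable_dist_right (h : Integrable (fun x => x) ν) (x : ℝ) :
    Integrable (fun y => |x - y|) ν :=
  ((integrable_const x).sub h).abs

lemma ofReal_integral_dist (h : Integrable (fun x => x) ν) (h' : Integrable (fun x => x) ν') :
    ENNReal.ofReal (∫ x, ∫ y, |x - y| ∂ν' ∂ν) = meanDist ν ν' := by
  have hi := integrable_dist h h'
  rw [← integral_prod (fun p : ℝ × ℝ => |p.1 - p.2|) hi,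
    ofReal_integral_eq_lintegral_ofReal hi (ae_of_all _ fun p => abs_nonneg _),
    lintegral_prod _ (by fun_prop), meanDist]

lemma integral_dist_comm (h : Integrable (fun x => x) ν) (h' : Integrable (fun x => x) ν') :
    ∫ x, ∫ y, |x - y| ∂ν ∂ν' = ∫ x, ∫ y, |x - y| ∂ν' ∂ν := by
  rw [integral_integral_swap (integrable_dist h' h)]
  simp only [abs_sub_comm]

lemma integral_averageLaw_dist (h : Integrable (fun x => x) ν) :
    ∫ x, ∫ y, |x - y| ∂ν ∂(averageLaw ν) =
      ∫ x, ∫ y, |x - y| ∂ν ∂ν - (dissipation ν).toReal := by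
  have e := meanDist_averageLaw_add_dissipation ν
  rw [← ofReal_integral_dist (integrable_id_averageLaw ν h) h, ← ofReal_integral_dist h h] at e
  have hfin : dissipation ν ≠ ⊤ := by
    intro hcon
    rw [hcon, add_top] at e
    exact ENNReal.ofReal_ne_top e.symm
  have e2 := congrArg ENNReal.toReal e
  rw [ENNReal.toReal_add ENNReal.ofReal_ne_top hfin,
    ENNReal.toReal_ofReal (integral_nonneg fun x => integral_nonneg fun y => abs_nonneg _),
    ENNReal.toReal_ofReal (integral_nonneg fun x => integral_nonneg fun y => abs_nonneg _)] at e2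
  linarith

lemma dissipation_ne_top (h : Integrable (fun x => x) ν) : dissipation ν ≠ ⊤ := by
  have e := meanDist_averageLaw_add_dissipation ν
  rw [← ofReal_integral_dist h h] at e
  intro hcon
  rw [hcon, add_top] at e
  exact ENNReal.ofReal_ne_top e.symm

end

lemma dissipation_smul_le {ν ν' : Measure ℝ} {c : ℝ≥0∞} (hc : c ≠ ⊤) (h : c • ν ≤ ν') :
    c ^ 3 * dissipation ν ≤ dissipation ν' := by
  have e : c ^ 3 * dissipation ν = dissipation (c • ν) := by
    simp only [dissipation, lintegral_smul_measure, smul_eq_mul]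
    rw [lintegral_const_mul' _ _ hc]
    have : ∀ a, ∫⁻ b, c * ∫⁻ d, ENNReal.ofReal (distLoss a b d) ∂ν ∂ν =
        c * ∫⁻ b, ∫⁻ d, ENNReal.ofReal (distLoss a b d) ∂ν ∂ν := fun a =>
      lintegral_const_mul' _ _ hc
    simp only [this]
    rw [lintegral_const_mul' _ _ hc]
    ring
  rw [e]
  exact lintegral_mono' h fun a => lintegral_mono' h fun b => lintegral_mono' h fun d => le_rfl

/-- Of the three terms, the one singling out the middle point equals the smallest gap. -/
lemma distLoss_sum_ge {r a b c : ℝ} (hab : r ≤ |a - b|) (hbc : r ≤ |b - c|)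
    (hac : r ≤ |a - c|) : r ≤ distLoss a b c + distLoss a c b + distLoss b c a := by
  simp only [distLoss]
  rcases abs_cases (a - b) with h1 | h1 <;> rcases abs_cases (b - c) with h2 | h2 <;>
  rcases abs_cases (a - c) with h3 | h3 <;> rcases abs_cases ((a + b) / 2 - c) with h4 | h4 <;>
  rcases abs_cases ((a + c) / 2 - b) with h5 | h5 <;>
  rcases abs_cases ((b + c) / 2 - a) with h6 | h6 <;>
  rw [h4.1, h5.1, h6.1, abs_sub_comm c b, abs_sub_comm b a, abs_sub_comm c a, h1.1, h2.1, h3.1] <;>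
  rw [h1.1] at hab <;> rw [h2.1] at hbc <;> rw [h3.1] at hac <;> linarith

/-- By `distLoss_sum_ge`, symmetrising the dissipation bounds it below by a third of the expected
smallest gap among three points. A law with density at most `M` gives a gap below `r` for a given
pair with probability at most `2 M r`; the choice `r = 1 / (12 M)` gives the constant. -/
lemma dissipation_ge {ν : Measure ℝ} [IsProbabilityMeasure ν] {M : ℝ} (hM : 0 < M)
    (hν : ν ≤ ENNReal.ofReal M • volume) :
    ENNReal.ofReal (1 / (72 * M)) ≤ dissipation ν := by
  set H : ℝ → ℝ → ℝ → ℝ≥0∞ := fun a b c => ENNReal.ofReal (distLoss a b c) with hH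
  set r : ℝ := 1 / (12 * M) with hr
  have hr0 : 0 < r := by positivity
  have mInner : ∀ k : ℝ → ℝ → ℝ → ℝ≥0∞, Measurable (fun p : (ℝ × ℝ) × ℝ => k p.1.1 p.1.2 p.2) →
      Measurable (fun p : ℝ × ℝ => ∫⁻ c, k p.1 p.2 c ∂ν) := fun k hk =>
    Measurable.lintegral_prod_right' (f := fun p : (ℝ × ℝ) × ℝ => k p.1.1 p.1.2 p.2) hk
  have mOuter : ∀ k : ℝ → ℝ → ℝ → ℝ≥0∞, Measurable (fun p : (ℝ × ℝ) × ℝ => k p.1.1 p.1.2 p.2) →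
      Measurable (fun a => ∫⁻ b, ∫⁻ c, k a b c ∂ν ∂ν) := fun k hk =>
    (mInner k hk).lintegral_prod_right'
  have hadd : ∀ k l : ℝ → ℝ → ℝ → ℝ≥0∞,
      Measurable (fun p : (ℝ × ℝ) × ℝ => k p.1.1 p.1.2 p.2) →
      ∫⁻ a, ∫⁻ b, ∫⁻ c, (k a b c + l a b c) ∂ν ∂ν ∂ν =
      ∫⁻ a, ∫⁻ b, ∫⁻ c, k a b c ∂ν ∂ν ∂ν + ∫⁻ a, ∫⁻ b, ∫⁻ c, l a b c ∂ν ∂ν ∂ν := by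
    intro k l hk
    rw [← lintegral_add_left (mOuter k hk)]
    refine lintegral_congr fun a => ?_
    have m1 : Measurable (fun b => ∫⁻ c, k a b c ∂ν) := (mInner k hk).comp measurable_prodMk_left
    rw [← lintegral_add_left m1]
    refine lintegral_congr fun b => ?_
    have m2 : Measurable (fun c => k a b c) :=
      hk.comp (measurable_prodMk_left (x := (a, b)))
    rw [← lintegral_add_left m2]
  have hH1 : Measurable (fun p : (ℝ × ℝ) × ℝ => H p.1.1 p.1.2 p.2) := by
    simp only [hH, distLoss]; fun_prop
  have hH2 : Measurable (fun p : (ℝ × ℝ) × ℝ => H p.1.1 p.2 p.1.2) := by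
    simp only [hH, distLoss]; fun_prop
  have hH3 : Measurable (fun p : (ℝ × ℝ) × ℝ => H p.1.2 p.2 p.1.1) := by
    simp only [hH, distLoss]; fun_prop
  have s2 : ∫⁻ a, ∫⁻ b, ∫⁻ c, H a c b ∂ν ∂ν ∂ν = dissipation ν := by
    refine lintegral_congr fun a => ?_
    exact lintegral_lintegral_swap
      (hH2.comp (f := fun q : ℝ × ℝ => ((a, q.1), q.2)) (by fun_prop)).aemeasurable
  have s3 : ∫⁻ a, ∫⁻ b, ∫⁻ c, H b c a ∂ν ∂ν ∂ν = dissipation ν := by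
    rw [← s2]
    exact lintegral_lintegral_swap (mInner (fun a b c => H b c a) hH3).aemeasurable
  -- `B x y` penalises pairs closer than `r`
  set B : ℝ → ℝ → ℝ≥0∞ := fun x y =>
    (Metric.ball x r).indicator (fun _ => ENNReal.ofReal r) y with hB
  have hBm : Measurable (fun p : ℝ × ℝ => B p.1 p.2) := by
    have hs : MeasurableSet {p : ℝ × ℝ | dist p.2 p.1 < r} :=
      measurableSet_lt (by fun_prop) (by fun_prop)
    exact (measurable_const (a := ENNReal.ofReal r)).indicator hs
  have hBint : ∀ x, ∫⁻ y, B x y ∂ν ≤ ENNReal.ofReal (2 * M * r ^ 2) := by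
    intro x
    simp only [hB]
    rw [lintegral_indicator_const Metric.isOpen_ball.measurableSet]
    calc _ ≤ ENNReal.ofReal r * ((ENNReal.ofReal M • (volume : Measure ℝ)) (Metric.ball x r)) := by
          gcongr
      _ = _ := by
          rw [Measure.smul_apply, Real.volume_ball, smul_eq_mul, ← ENNReal.ofReal_mul hM.le,
            ← ENNReal.ofReal_mul hr0.le]
          congr 1
          ring
  have hpt : ∀ a b c, ENNReal.ofReal r ≤
      (H a b c + H a c b + H b c a) + (B a b + (B b c + B a c)) := by
    intro a b c
    by_cases h1 : r ≤ |a - b|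
    · by_cases h2 : r ≤ |b - c|
      · by_cases h3 : r ≤ |a - c|
        · refine le_add_right ?_
          simp only [hH]
          rw [← ENNReal.ofReal_add (distLoss_nonneg _ _ _) (distLoss_nonneg _ _ _),
            ← ENNReal.ofReal_add (add_nonneg (distLoss_nonneg _ _ _) (distLoss_nonneg _ _ _))
              (distLoss_nonneg _ _ _)]
          exact ENNReal.ofReal_le_ofReal (distLoss_sum_ge h1 h2 h3)
        · refine le_add_left (le_add_left (le_add_left ?_))
          simp only [hB]
          rw [Set.indicator_of_mem]
          rwa [Metric.mem_ball, Real.dist_eq, abs_sub_comm, ← not_le]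
      · refine le_add_left (le_add_left (le_add_right ?_))
        simp only [hB]
        rw [Set.indicator_of_mem]
        rwa [Metric.mem_ball, Real.dist_eq, abs_sub_comm, ← not_le]
    · refine le_add_left (le_add_right ?_)
      simp only [hB]
      rw [Set.indicator_of_mem]
      rwa [Metric.mem_ball, Real.dist_eq, abs_sub_comm, ← not_le]
  have hB1 : ∫⁻ a, ∫⁻ b, ∫⁻ _c, B a b ∂ν ∂ν ∂ν ≤ ENNReal.ofReal (2 * M * r ^ 2) := by
    simp only [lintegral_const, measure_univ, mul_one]
    refine (lintegral_mono hBint).trans ?_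
    simp
  have hB2 : ∫⁻ _a, ∫⁻ b, ∫⁻ c, B b c ∂ν ∂ν ∂ν ≤ ENNReal.ofReal (2 * M * r ^ 2) := by
    refine (lintegral_mono fun a => lintegral_mono hBint).trans ?_
    simp
  have hB3 : ∫⁻ a, ∫⁻ _b, ∫⁻ c, B a c ∂ν ∂ν ∂ν ≤ ENNReal.ofReal (2 * M * r ^ 2) := by
    refine (lintegral_mono fun a => lintegral_mono fun b => hBint a).trans ?_
    simp
  have hBm1 : Measurable (fun p : (ℝ × ℝ) × ℝ => B p.1.1 p.1.2) :=
    hBm.comp (f := fun p : (ℝ × ℝ) × ℝ => (p.1.1, p.1.2)) (by fun_prop)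
  have hBm2 : Measurable (fun p : (ℝ × ℝ) × ℝ => B p.1.2 p.2) :=
    hBm.comp (f := fun p : (ℝ × ℝ) × ℝ => (p.1.2, p.2)) (by fun_prop)
  have htot : ENNReal.ofReal r ≤ 3 * dissipation ν + 3 * ENNReal.ofReal (2 * M * r ^ 2) := by
    calc ENNReal.ofReal r = ∫⁻ _a, ∫⁻ _b, ∫⁻ _c, ENNReal.ofReal r ∂ν ∂ν ∂ν := by simp
      _ ≤ ∫⁻ a, ∫⁻ b, ∫⁻ c,
          ((H a b c + H a c b + H b c a) + (B a b + (B b c + B a c))) ∂ν ∂ν ∂ν :=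
        lintegral_mono fun a => lintegral_mono fun b => lintegral_mono fun c => hpt a b c
      _ ≤ (dissipation ν + dissipation ν + dissipation ν) +
          (ENNReal.ofReal (2 * M * r ^ 2) +
            (ENNReal.ofReal (2 * M * r ^ 2) + ENNReal.ofReal (2 * M * r ^ 2))) := by
        rw [hadd (fun a b c => H a b c + H a c b + H b c a)
            (fun a b c => B a b + (B b c + B a c)) ((hH1.add hH2).add hH3),
          hadd (fun a b c => H a b c + H a c b) (fun a b c => H b c a) (hH1.add hH2),
          hadd (fun a b c => H a b c) (fun a b c => H a c b) hH1, s2, s3,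
          hadd (fun a b _ => B a b) (fun a b c => B b c + B a c) hBm1,
          hadd (fun _ b c => B b c) (fun a _ c => B a c) hBm2]
        exact add_le_add le_rfl (add_le_add hB1 (add_le_add hB2 hB3))
      _ = _ := by ring
  by_cases htop : dissipation ν = ⊤
  · rw [htop]; exact le_top
  have h3 := ENNReal.toReal_mono (by simp [ENNReal.mul_eq_top, htop]) htot
  rw [ENNReal.toReal_add (by simp [ENNReal.mul_eq_top, htop]) (by simp [ENNReal.mul_eq_top]),
    ENNReal.toReal_mul, ENNReal.toReal_mul, ENNReal.toReal_ofReal hr0.le,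
    ENNReal.toReal_ofReal (by positivity)] at h3
  rw [ENNReal.ofReal_le_iff_le_toReal htop]
  have e1 : M * r ^ 2 = r / 12 := by rw [hr]; field_simp
  have e2 : 1 / (72 * M) = r / 6 := by rw [hr]; field_simp; ring
  rw [e2]
  simp only [ENNReal.toReal_ofNat] at h3
  linarith

section
variable {f : ℝ → ℝ}

lemma integral_giniLaw (hf0 : ∀ x ≥ (0:ℝ), 0 ≤ f x)
    (hfm : AEMeasurable (fun x => ENNReal.ofReal (f x)) (volume.restrict (Set.Ici (0:ℝ))))
    (G : ℝ → ℝ) : ∫ x, G x ∂(giniLaw f) = ∫ x in Set.Ici (0:ℝ), f x * G x := by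
  rw [giniLaw, integral_withDensity_eq_integral_toReal_smul₀ hfm (by simp)]
  refine setIntegral_congr_fun measurableSet_Ici fun x hx => ?_
  simp only [smul_eq_mul]
  rw [ENNReal.toReal_ofReal (hf0 x hx)]

lemma integrable_giniLaw (hf0 : ∀ x ≥ (0:ℝ), 0 ≤ f x)
    (hfm : AEMeasurable (fun x => ENNReal.ofReal (f x)) (volume.restrict (Set.Ici (0:ℝ))))
    {G : ℝ → ℝ} (h : Integrable G (giniLaw f)) :
    Integrable (fun x => f x * G x) (volume.restrict (Set.Ici (0:ℝ))) := by
  rw [giniLaw, integrable_withDensity_iff_integrable_smul₀' hfm (by simp)] at h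
  refine h.congr ((ae_restrict_iff' measurableSet_Ici).2 (ae_of_all _ fun x hx => ?_))
  simp only [smul_eq_mul]
  rw [ENNReal.toReal_ofReal (hf0 x hx)]

lemma integral_mul_mul_dist (hf0 : ∀ x ≥ (0:ℝ), 0 ≤ f x)
    (hm : ∫ x in Set.Ici (0:ℝ), f x = 1) :
    ∫ x in Set.Ici (0:ℝ), ∫ y in Set.Ici (0:ℝ), f x * f y * |x - y| =
      ∫ x, ∫ y, |x - y| ∂(giniLaw f) ∂(giniLaw f) := by
  have hfm := (integrable_of_mass hm).1.aemeasurable.ennreal_ofReal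
  rw [integral_giniLaw hf0 hfm]
  congr 1
  ext x
  rw [integral_giniLaw hf0 hfm, ← integral_const_mul]
  congr 1
  ext y
  ring

/-- The time derivative of `∬ ρ ρ |x - y|` along the equation is minus twice the dissipation. -/
lemma integral_derivative_eq (hf0 : ∀ x ≥ (0:ℝ), 0 ≤ f x)
    (hm : ∫ x in Set.Ici (0:ℝ), f x = 1) (hid : Integrable (fun x => x) (giniLaw f)) :
    ∫ x in Set.Ici (0:ℝ), ∫ y in Set.Ici (0:ℝ),
        ((gainDensity f x - f x) * f y + f x * (gainDensity f y - f y)) * |x - y| =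
      -2 * (dissipation (giniLaw f)).toReal := by
  have hp := isProbabilityMeasure_giniLaw hf0 hm
  have hfm := (integrable_of_mass hm).1.aemeasurable.ennreal_ofReal
  have hQm := aemeasurable_ofReal_gainDensity hf0 hm
  have hQ0 : ∀ x ≥ (0:ℝ), 0 ≤ gainDensity f x := fun x hx => gainDensity_nonneg hf0 hx
  have hQ := giniLaw_gainDensity hf0 hm
  have hidQ := integrable_id_averageLaw _ hid
  set ν := giniLaw f with hν
  set A : ℝ → ℝ := fun x => ∫ y, |x - y| ∂ν with hA
  set B : ℝ → ℝ := fun x => ∫ y, |x - y| ∂(averageLaw ν) with hB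
  have inner : ∀ x, ∫ y in Set.Ici (0:ℝ),
      ((gainDensity f x - f x) * f y + f x * (gainDensity f y - f y)) * |x - y| =
      (gainDensity f x * A x - f x * A x) + (f x * B x - f x * A x) := by
    intro x
    have i1 := integrable_giniLaw hf0 hfm (integrable_dist_right hid x)
    have i2 := integrable_giniLaw hQ0 hQm (G := fun y => |x - y|)
      (by rw [hQ]; exact integrable_dist_right hidQ x)
    have eA : A x = ∫ y in Set.Ici (0:ℝ), f y * |x - y| := integral_giniLaw hf0 hfm _
    have eB : B x = ∫ y in Set.Ici (0:ℝ), gainDensity f y * |x - y| := by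
      simp only [hB]; rw [← hQ]; exact integral_giniLaw hQ0 hQm _
    have e : ∀ y, ((gainDensity f x - f x) * f y + f x * (gainDensity f y - f y)) * |x - y| =
        (gainDensity f x - f x - f x) * (f y * |x - y|) +
          f x * (gainDensity f y * |x - y|) := by intro y; ring
    simp only [e]
    rw [integral_add (i1.const_mul _) (i2.const_mul _), integral_const_mul, integral_const_mul,
      ← eA, ← eB]
    ring
  simp only [inner]
  have jA : Integrable A ν := (integrable_dist hid hid).integral_prod_left
  have jAQ : Integrable A (averageLaw ν) := (integrable_dist hidQ hid).integral_prod_left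
  have jB : Integrable B ν := (integrable_dist hid hidQ).integral_prod_left
  have k1 := integrable_giniLaw hf0 hfm jA
  have k2 := integrable_giniLaw hQ0 hQm (G := A) (by rw [hQ]; exact jAQ)
  have k3 := integrable_giniLaw hf0 hfm jB
  have k21 : Integrable (fun x => gainDensity f x * A x - f x * A x)
    (volume.restrict (Set.Ici (0:ℝ))) := k2.sub k1
  have k31 : Integrable (fun x => f x * B x - f x * A x)
    (volume.restrict (Set.Ici (0:ℝ))) := k3.sub k1
  rw [integral_add k21 k31, integral_sub k2 k1, integral_sub k3 k1,
    ← integral_giniLaw hf0 hfm, ← integral_giniLaw hf0 hfm, ← integral_giniLaw hQ0 hQm, hQ]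
  have c1 : ∫ x, A x ∂(averageLaw ν) = ∫ x, A x ∂ν - (dissipation ν).toReal :=
    integral_averageLaw_dist hid
  have c2 : ∫ x, B x ∂ν = ∫ x, A x ∂(averageLaw ν) := integral_dist_comm hidQ hid
  rw [← hν, c2, c1]
  ring

end

/-! ### Log-concave densities -/

section
variable {f : ℝ → ℝ}

/-- A density on `[0,∞)` cannot exceed `c` on an interval longer than `1 / c`. -/
lemma length_mul_le_one (hf0 : ∀ x ≥ (0:ℝ), 0 ≤ f x) (hm : ∫ x in Set.Ici (0:ℝ), f x = 1)
    {a b c : ℝ} (ha : 0 ≤ a) (hab : a ≤ b) (h : ∀ y ∈ Set.Icc a b, c ≤ f y) :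
    (b - a) * c ≤ 1 := by
  have hi := integrable_of_mass hm
  have hsub : Set.Icc a b ⊆ Set.Ici (0:ℝ) := fun y hy => ha.trans hy.1
  have h1 : ∫ _y in Set.Icc a b, c ≤ ∫ y in Set.Icc a b, f y :=
    setIntegral_mono_on (by simp) (hi.mono_measure (Measure.restrict_mono hsub le_rfl))
      measurableSet_Icc h
  have h2 : ∫ y in Set.Icc a b, f y ≤ ∫ y in Set.Ici (0:ℝ), f y :=
    setIntegral_mono_set hi ((ae_restrict_iff' measurableSet_Ici).2 (ae_of_all _ hf0))
      (LE.le.eventuallyLE hsub)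
  rw [setIntegral_const, Real.volume_real_Icc_of_le hab, smul_eq_mul] at h1
  linarith

/-- Log-concavity between a high point `x₀` and a lower level `k` reached at `x` keeps `f` above
`f x₀ ^ (1 - θ) * k ^ θ` on the first `θ`-fraction of the segment, whose mass is at most one. -/
lemma logConcave_segment (hf0 : ∀ x ≥ (0:ℝ), 0 ≤ f x) (hm : ∫ x in Set.Ici (0:ℝ), f x = 1)
    (hl : ∀ x ≥ (0:ℝ), ∀ y ≥ (0:ℝ), ∀ lam : ℝ, 0 ≤ lam → lam ≤ 1 →
      f x ^ lam * f y ^ (1 - lam) ≤ f (lam * x + (1 - lam) * y))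
    {x₀ x k θ : ℝ} (hx₀ : 0 ≤ x₀) (hx : 0 ≤ x) (hk : 0 < k) (hk₀ : k ≤ f x₀) (hkx : k ≤ f x)
    (hθ0 : 0 ≤ θ) (hθ1 : θ ≤ 1) :
    θ * |x - x₀| * (f x₀ ^ (1 - θ) * k ^ θ) ≤ 1 := by
  have hN : 0 < f x₀ := hk.trans_le hk₀
  have key : ∀ s, 0 ≤ s → s ≤ θ → f x₀ ^ (1 - θ) * k ^ θ ≤ f (x₀ + s * (x - x₀)) := by
    intro s hs0 hsθ
    have h := hl x₀ hx₀ x hx (1 - s) (by linarith) (by linarith)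
    rw [show (1 - s) * x₀ + (1 - (1 - s)) * x = x₀ + s * (x - x₀) by ring,
      show 1 - (1 - s) = s by ring] at h
    refine le_trans ?_ h
    rw [show 1 - s = (1 - θ) + (θ - s) by ring, Real.rpow_add hN, mul_assoc]
    gcongr
    calc k ^ θ = k ^ (θ - s) * k ^ s := by rw [← Real.rpow_add hk]; congr 1; ring
      _ ≤ _ := by
        gcongr
  rcases lt_trichotomy x x₀ with hlt | heq | hlt
  · have h := length_mul_le_one hf0 hm (a := x₀ + θ * (x - x₀)) (b := x₀)
      (c := f x₀ ^ (1 - θ) * k ^ θ) (by nlinarith) (by nlinarith) (by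
        rintro y ⟨h1, h2⟩
        have := key ((x₀ - y) / (x₀ - x)) (div_nonneg (by linarith) (by linarith))
          ((div_le_iff₀ (by linarith)).2 (by linarith))
        rwa [show x₀ + (x₀ - y) / (x₀ - x) * (x - x₀) = y by
          have : x₀ - x ≠ 0 := by linarith
          field_simp; ring] at this)
    rw [abs_of_neg (by linarith)]
    convert h using 2
    ring
  · simp [heq]
  · have h := length_mul_le_one hf0 hm (a := x₀) (b := x₀ + θ * (x - x₀))
      (c := f x₀ ^ (1 - θ) * k ^ θ) hx₀ (by nlinarith) (by
        rintro y ⟨h1, h2⟩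
        have := key ((y - x₀) / (x - x₀)) (div_nonneg (by linarith) (by linarith))
          ((div_le_iff₀ (by linarith)).2 (by linarith))
        rwa [show x₀ + (y - x₀) / (x - x₀) * (x - x₀) = y by
          have : x - x₀ ≠ 0 := by linarith
          field_simp; ring] at this)
    rw [abs_of_pos (by linarith)]
    convert h using 2
    ring

lemma exists_two_pos (hm : ∫ x in Set.Ici (0:ℝ), f x = 1) (hf0 : ∀ x ≥ (0:ℝ), 0 ≤ f x) :
    ∃ p q : ℝ, 0 ≤ p ∧ p < q ∧ 0 < f p ∧ 0 < f q := by
  have hpos : ∀ x ≥ (0:ℝ), f x ≠ 0 → 0 < f x := fun x hx h => lt_of_le_of_ne (hf0 x hx) h.symm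
  by_contra! hcon
  have hs : Set.Subsingleton {x : ℝ | 0 ≤ x ∧ f x ≠ 0} := by
    rintro a ⟨ha, ha'⟩ b ⟨hb, hb'⟩
    rcases lt_trichotomy a b with h | h | h
    · exact absurd (hpos b hb hb') (not_lt.2 (hcon a b ha h (hpos a ha ha')))
    · exact h
    · exact absurd (hpos a ha ha') (not_lt.2 (hcon b a hb h (hpos b hb hb')))
  have h0 : (fun x => f x) =ᵐ[volume.restrict (Set.Ici (0:ℝ))] fun _ => 0 := by
    rw [Filter.EventuallyEq, ae_restrict_iff' measurableSet_Ici]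
    refine measure_mono_null ?_ (hs.measure_zero volume)
    intro x hx
    simpa using hx
  rw [integral_congr_ae h0] at hm
  simp at hm

lemma logConcave_bddAbove (hf0 : ∀ x ≥ (0:ℝ), 0 ≤ f x) (hm : ∫ x in Set.Ici (0:ℝ), f x = 1)
    (hl : ∀ x ≥ (0:ℝ), ∀ y ≥ (0:ℝ), ∀ lam : ℝ, 0 ≤ lam → lam ≤ 1 →
      f x ^ lam * f y ^ (1 - lam) ≤ f (lam * x + (1 - lam) * y)) :
    BddAbove (f '' Set.Ici 0) := by
  obtain ⟨p, q, hp, hpq, hfp, hfq⟩ := exists_two_pos hm hf0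
  set m := min (f p) (f q) with hmdef
  have hm0 : 0 < m := lt_min hfp hfq
  refine ⟨max m (16 / (m * (q - p) ^ 2)), ?_⟩
  rintro _ ⟨z, hz, rfl⟩
  rcases le_total (f z) m with h | h
  · exact h.trans (le_max_left _ _)
  refine le_trans ?_ (le_max_right _ _)
  obtain ⟨w, hw0, hmw, hdist⟩ : ∃ w, 0 ≤ w ∧ m ≤ f w ∧ (q - p) / 2 ≤ |w - z| := by
    rcases le_total z ((p + q) / 2) with h | h
    · exact ⟨q, by linarith, min_le_right _ _, le_trans (by linarith) (le_abs_self _)⟩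
    · exact ⟨p, hp, min_le_left _ _, le_trans (by linarith) (neg_le_abs _)⟩
  have hseg := logConcave_segment hf0 hm hl hz hw0 hm0 h hmw (θ := 1 / 2) (by norm_num)
    (by norm_num)
  have hfz : 0 < f z := hm0.trans_le h
  set A := f z ^ (1 - 1 / 2 : ℝ) * m ^ (1 / 2 : ℝ) with hA
  have hA0 : 0 ≤ A := by positivity
  have hA2 : A ^ 2 = f z * m := by
    rw [hA, mul_pow, ← Real.rpow_natCast, ← Real.rpow_natCast, ← Real.rpow_mul hfz.le,
      ← Real.rpow_mul hm0.le]
    norm_num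
  have h1 : (q - p) / 4 * A ≤ 1 := by nlinarith
  have h2 : ((q - p) / 4 * A) ^ 2 ≤ 1 := pow_le_one₀ (by
    have : 0 < q - p := by linarith
    positivity) h1
  rw [mul_pow, hA2] at h2
  have : 0 < q - p := by linarith
  rw [le_div_iff₀ (by positivity)]
  linarith

/-- Polynomial tail of a log-concave density around a point where it nearly attains its
supremum. -/
lemma logConcave_tail (hf0 : ∀ x ≥ (0:ℝ), 0 ≤ f x) (hm : ∫ x in Set.Ici (0:ℝ), f x = 1)
    (hl : ∀ x ≥ (0:ℝ), ∀ y ≥ (0:ℝ), ∀ lam : ℝ, 0 ≤ lam → lam ≤ 1 →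
      f x ^ lam * f y ^ (1 - lam) ≤ f (lam * x + (1 - lam) * y))
    {x₀ x : ℝ} (hx₀ : 0 ≤ x₀) (hN : 0 < f x₀) (hx : 0 ≤ x) (hle : f x ≤ 10 / 9 * f x₀) :
    f x * (x - x₀) ^ 2 ≤ 303 / f x₀ * (1 + (f x₀ * (x - x₀)) ^ 2)⁻¹ := by
  rcases (hf0 x hx).eq_or_lt with h0 | h0
  · rw [← h0]
    have : 0 ≤ 303 / f x₀ * (1 + (f x₀ * (x - x₀)) ^ 2)⁻¹ := by positivity
    linarith
  set N := f x₀ with hNdef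
  set φ := f x / N with hφ
  set v := N * |x - x₀| with hv
  have hv0 : 0 ≤ v := by positivity
  have hφ0 : 0 < φ := by positivity
  have hφ1 : φ ≤ 10 / 9 := by rw [hφ, div_le_iff₀ hN]; exact hle
  have hv2 : (N * (x - x₀)) ^ 2 = v ^ 2 := by rw [hv, mul_pow, mul_pow, sq_abs]
  suffices h : φ * (v ^ 2 * (1 + v ^ 2)) ≤ 303 by
    rw [hv2, ← div_eq_mul_inv, le_div_iff₀ (by positivity), le_div_iff₀ hN]
    have e : f x * (x - x₀) ^ 2 * (1 + v ^ 2) * N = φ * (v ^ 2 * (1 + v ^ 2)) := by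
      rw [← hv2, hφ]
      field_simp
    linarith
  rcases le_or_gt v 4 with h4 | h4
  · have : v ^ 2 ≤ 16 := by nlinarith
    calc φ * (v ^ 2 * (1 + v ^ 2)) ≤ 10 / 9 * (16 * (1 + 16)) := by gcongr
      _ ≤ 303 := by norm_num
  · -- with `k = min (f x) N` and `θ = 1/4` the segment bound reads `v ^ 4 * (k / N) ≤ 256`
    have hk0 : 0 < min (f x) N := lt_min h0 hN
    have hseg := logConcave_segment hf0 hm hl hx₀ hx hk0 (min_le_right _ _) (min_le_left _ _)
      (θ := 1 / 4) (by norm_num) (by norm_num)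
    rw [← hNdef] at hseg
    have hpow := pow_le_one₀ (n := 4) (by positivity) hseg
    have e4 : (1 / 4 * |x - x₀| * (N ^ (1 - 1 / 4 : ℝ) * min (f x) N ^ (1 / 4 : ℝ))) ^ 4 =
        |x - x₀| ^ 4 * (N ^ 3 * min (f x) N) / 256 := by
      have a1 : (N ^ (1 - 1 / 4 : ℝ)) ^ 4 = N ^ 3 := by
        rw [← Real.rpow_natCast, ← Real.rpow_mul hN.le, ← Real.rpow_natCast]
        norm_num
      have a2 : (min (f x) N ^ (1 / 4 : ℝ)) ^ 4 = min (f x) N := by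
        rw [← Real.rpow_natCast, ← Real.rpow_mul hk0.le]
        norm_num
      rw [mul_pow, mul_pow, mul_pow, a1, a2]
      ring
    rw [e4] at hpow
    rcases le_total N (f x) with hc | hc
    · exfalso
      rw [min_eq_right hc] at hpow
      have : v ^ 4 ≤ 256 := by
        rw [hv, mul_pow]
        linarith
      have : (4:ℝ) ^ 4 < v ^ 4 := by gcongr
      linarith
    · rw [min_eq_left hc] at hpow
      have h5 : v ^ 4 * φ ≤ 256 := by
        have : v ^ 4 * φ = |x - x₀| ^ 4 * (N ^ 3 * f x) := by
          rw [hv, hφ]; field_simp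
        linarith
      have h6 : 16 * (φ * v ^ 2) ≤ φ * v ^ 4 := by
        have : 0 ≤ φ * v ^ 2 * (v ^ 2 - 16) := by
          have : 0 ≤ v ^ 2 - 16 := by nlinarith
          positivity
        linarith
      linarith

/-- For a log-concave density on `[0,∞)` the supremum `M` and the spread around a near-maximum
point are related by a universal constant. -/
lemma logConcave_sup_and_spread (hf0 : ∀ x ≥ (0:ℝ), 0 ≤ f x)
    (hm : ∫ x in Set.Ici (0:ℝ), f x = 1)
    (hl : ∀ x ≥ (0:ℝ), ∀ y ≥ (0:ℝ), ∀ lam : ℝ, 0 ≤ lam → lam ≤ 1 →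
      f x ^ lam * f y ^ (1 - lam) ≤ f (lam * x + (1 - lam) * y)) :
    ∃ M > 0, giniLaw f ≤ ENNReal.ofReal M • volume ∧
      ∃ x₀, ∫⁻ x, ENNReal.ofReal ((x - x₀) ^ 2) ∂(giniLaw f) ≤ ENNReal.ofReal (1200 / M ^ 2) := by
  have hb := logConcave_bddAbove hf0 hm hl
  set M := sSup (f '' Set.Ici 0) with hM
  have hle : ∀ x ≥ (0:ℝ), f x ≤ M := fun x hx => le_csSup hb ⟨x, hx, rfl⟩
  obtain ⟨p, q, hp, -, hfp, -⟩ := exists_two_pos hm hf0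
  have hM0 : 0 < M := hfp.trans_le (hle p hp)
  have hfm := (integrable_of_mass hm).1.aemeasurable.ennreal_ofReal
  refine ⟨M, hM0, ?_, ?_⟩
  · calc giniLaw f ≤ (volume.restrict (Set.Ici (0:ℝ))).withDensity (fun _ => ENNReal.ofReal M) :=
        withDensity_mono ((ae_restrict_iff' measurableSet_Ici).2
          (ae_of_all _ fun x hx => ENNReal.ofReal_le_ofReal (hle x hx)))
      _ = ENNReal.ofReal M • volume.restrict (Set.Ici (0:ℝ)) := withDensity_const _
      _ ≤ _ := by
        gcongr
        exact Measure.restrict_le_self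
  · obtain ⟨_, ⟨x₀, hx₀, rfl⟩, hN⟩ := exists_lt_of_lt_csSup (Set.nonempty_Ici.image f)
      (show 9 / 10 * M < M by linarith)
    have hx₀ : 0 ≤ x₀ := hx₀
    have hN0 : 0 < f x₀ := by linarith
    refine ⟨x₀, ?_⟩
    set N := f x₀ with hNdef
    have hint : Integrable (fun x : ℝ => 303 / N * (1 + (N * (x - x₀)) ^ 2)⁻¹) :=
      ((integrable_inv_one_add_sq.comp_mul_left' hN0.ne').comp_sub_right x₀).const_mul _
    have hval : ∫ x : ℝ, 303 / N * (1 + (N * (x - x₀)) ^ 2)⁻¹ = 303 * Real.pi / N ^ 2 := by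
      rw [integral_const_mul, integral_sub_right_eq_self (fun x => (1 + (N * x) ^ 2)⁻¹) x₀,
        Measure.integral_comp_mul_left (fun x : ℝ => (1 + x ^ 2)⁻¹) N,
        integral_univ_inv_one_add_sq, abs_of_pos (by positivity), smul_eq_mul]
      field_simp
    rw [giniLaw, lintegral_withDensity_eq_lintegral_mul₀ hfm (by fun_prop)]
    calc _ ≤ ∫⁻ x in Set.Ici (0:ℝ), ENNReal.ofReal (303 / N * (1 + (N * (x - x₀)) ^ 2)⁻¹) := by
          refine setLIntegral_mono' measurableSet_Ici fun x hx => ?_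
          rw [Pi.mul_apply, ← ENNReal.ofReal_mul (hf0 x hx)]
          exact ENNReal.ofReal_le_ofReal (logConcave_tail hf0 hm hl hx₀ hN0 hx
            ((hle x hx).trans (by linarith)))
      _ ≤ ∫⁻ x, ENNReal.ofReal (303 / N * (1 + (N * (x - x₀)) ^ 2)⁻¹) :=
        setLIntegral_le_lintegral _ _
      _ = ENNReal.ofReal (303 * Real.pi / N ^ 2) := by
        rw [← hval, ofReal_integral_eq_lintegral_ofReal hint (ae_of_all _ fun x => by positivity)]
      _ ≤ _ := by
        refine ENNReal.ofReal_le_ofReal ?_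
        rw [div_le_div_iff₀ (by positivity) (by positivity)]
        have h1 := Real.pi_lt_d2
        have h2 : (9 / 10 * M) ^ 2 ≤ N ^ 2 := by gcongr
        have h3 : 0 < M ^ 2 := by positivity
        nlinarith

end

/-! ### Decay of the mean distance -/

/-- The short-time and long-time bounds combine to the rate `1 / 14434`. For `t ≤ 1` the
accumulated dissipation suffices, and for later times either it still does or the second-moment bound has taken over. -/
lemma exp_bound_of_two_bounds {M D G t : ℝ} (hM : 0 < M) (ht : 0 ≤ t) (hD0 : 0 ≤ D)
    (hD : D ≤ 49 / M) (h1 : G ≤ D - (1 - Real.exp (-(3 * t))) / (108 * M))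
    (h2 : G ≤ 49 / M * Real.exp (-(9 / 40 * t))) : G ≤ D * Real.exp (-(t / 14434)) := by
  have hdM : D * M ≤ 49 := (le_div_iff₀ hM).1 hD
  -- a linear drop is enough
  have lin : G ≤ D - D * t / 14434 → G ≤ D * Real.exp (-(t / 14434)) := by
    intro h
    have := Real.add_one_le_exp (-(t / 14434))
    nlinarith
  have hexp : Real.exp (-(3 * t)) * (1 + 3 * t) ≤ 1 := by
    have h := Real.add_one_le_exp (3 * t)
    calc _ ≤ Real.exp (-(3 * t)) * Real.exp (3 * t) := by gcongr; linarith
      _ = 1 := by rw [← Real.exp_add]; simp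
  have he0 := Real.exp_pos (-(3 * t))
  rcases le_total t 1 with ht1 | ht1
  · apply lin
    have h3 : 3 * t / 4 ≤ 1 - Real.exp (-(3 * t)) := by
      have : Real.exp (-(3 * t)) ≤ 1 / (1 + 3 * t) := by
        rw [le_div_iff₀ (by linarith)]; exact hexp
      have : 1 / (1 + 3 * t) ≤ 1 - 3 * t / 4 := by
        rw [div_le_iff₀ (by linarith)]; nlinarith
      linarith
    have h4 : D * t / 14434 ≤ (1 - Real.exp (-(3 * t))) / (108 * M) := by
      rw [div_le_div_iff₀ (by norm_num) (by positivity)]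
      nlinarith
    linarith
  · have h3 : 3 / 4 ≤ 1 - Real.exp (-(3 * t)) := by nlinarith
    rcases le_total (t * (D * M)) 100 with hc | hc
    · apply lin
      have h4 : D * t / 14434 ≤ (1 - Real.exp (-(3 * t))) / (108 * M) := by
        rw [div_le_div_iff₀ (by norm_num) (by positivity)]
        nlinarith
      linarith
    · refine h2.trans ?_
      have hd0 : 0 < D * M := by nlinarith
      set d := D * M with hd
      -- `exp z ≥ e z` at `z = 22.4 / d` beats the constant `49 / d`
      have hz : 22.4 / d ≤ t * (9 / 40 - 1 / 14434) := by
        rw [div_le_iff₀ hd0]; nlinarith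
      have hez : 49 / d ≤ Real.exp (t * (9 / 40 - 1 / 14434)) := by
        have h5 := Real.add_one_le_exp (22.4 / d - 1)
        have h6 : Real.exp (22.4 / d) = Real.exp (22.4 / d - 1) * Real.exp 1 := by
          rw [← Real.exp_add]; congr 1; ring
        have h7 := Real.exp_one_gt_d9
        have h8 := Real.exp_le_exp.2 hz
        have h9 : 0 < 22.4 / d := by positivity
        have h10 : 49 / d = 22.4 / d * (49 / 22.4) := by field_simp
        nlinarith
      have h11 : Real.exp (-(t / 14434)) =
          Real.exp (-(9 / 40 * t)) * Real.exp (t * (9 / 40 - 1 / 14434)) := by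
        rw [← Real.exp_add]; congr 1; ring
      have h12 : D * (49 / d) = 49 / M := by
        have : D ≠ 0 := by rintro rfl; simp [hd] at hd0
        rw [hd]; field_simp
      rw [h11, ← h12]
      calc D * (49 / d) * Real.exp (-(9 / 40 * t))
          ≤ D * Real.exp (t * (9 / 40 - 1 / 14434)) * Real.exp (-(9 / 40 * t)) := by gcongr
        _ = _ := by ring

lemma dist_le_young {ε : ℝ} (hε : 0 < ε) (μ x y : ℝ) : |x - y| ≤
    ((ε + (x - μ) ^ 2 / ε) / 2 + (y - μ) ^ 2 * (1 / (2 * ε))) - (y - μ) * ((x - μ) / ε) := by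
  have h : |x - y| ≤ (ε + (x - y) ^ 2 / ε) / 2 := by
    have e : (ε + (x - y) ^ 2 / ε) / 2 - |x - y| = (ε - |x - y|) ^ 2 / (2 * ε) := by
      have := sq_abs (x - y)
      field_simp
      rw [← sq_abs (x - y)]
      ring
    have : 0 ≤ (ε - |x - y|) ^ 2 / (2 * ε) := by positivity
    linarith
  refine h.trans (le_of_eq ?_)
  field_simp
  ring

/-- If `ν` has mean `μ`, then `∬ (x - y)²` is twice the variance, and Young's inequality
`|x - y| ≤ (ε + (x - y)² / ε) / 2` passes to the mean distance. -/
lemma integral_dist_le_of_variance {ν : Measure ℝ} [IsProbabilityMeasure ν] {μ ε : ℝ}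
    (hε : 0 < ε) (hid : Integrable (fun x : ℝ => x) ν) (hidμ : ∫ x, x ∂ν = μ)
    (hi : Integrable (fun x => (x - μ) ^ 2) ν) (hV : 2 * ∫ x, (x - μ) ^ 2 ∂ν ≤ ε ^ 2) :
    ∫ x, ∫ y, |x - y| ∂ν ∂ν ≤ ε := by
  set V := ∫ x, (x - μ) ^ 2 ∂ν with hVdef
  have hc : Integrable (fun x : ℝ => x - μ) ν := hid.sub (integrable_const _)
  have hc0 : ∫ x, (x - μ) ∂ν = 0 := by
    rw [integral_sub hid (integrable_const _), hidμ]; simp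
  have hin : ∀ x : ℝ, ∫ y, |x - y| ∂ν ≤ (x - μ) ^ 2 * (1 / (2 * ε)) + (ε / 2 + V / (2 * ε)) := by
    intro x
    have i1 : Integrable (fun y : ℝ =>
        (ε + (x - μ) ^ 2 / ε) / 2 + (y - μ) ^ 2 * (1 / (2 * ε))) ν :=
      (integrable_const _).add (hi.mul_const _)
    have i2 : Integrable (fun y : ℝ => (y - μ) * ((x - μ) / ε)) ν := hc.mul_const _
    have i0 : Integrable (fun y : ℝ => x - y) ν := (integrable_const x).sub hid
    have i3 : Integrable (fun y : ℝ => ((ε + (x - μ) ^ 2 / ε) / 2 +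
        (y - μ) ^ 2 * (1 / (2 * ε))) - (y - μ) * ((x - μ) / ε)) ν := i1.sub i2
    calc ∫ y, |x - y| ∂ν ≤ ∫ y, (((ε + (x - μ) ^ 2 / ε) / 2 + (y - μ) ^ 2 * (1 / (2 * ε))) -
          (y - μ) * ((x - μ) / ε)) ∂ν :=
        integral_mono i0.abs i3 (dist_le_young hε μ x)
      _ = _ := by
        rw [integral_sub i1 i2, integral_add (integrable_const _) (hi.mul_const _),
          integral_mul_const, integral_mul_const, hc0]
        simp only [integral_const, probReal_univ, one_smul, ← hVdef]
        field_simp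
        ring
  calc ∫ x, ∫ y, |x - y| ∂ν ∂ν
      ≤ ∫ x, ((x - μ) ^ 2 * (1 / (2 * ε)) + (ε / 2 + V / (2 * ε))) ∂ν :=
        integral_mono_of_nonneg (ae_of_all _ fun _ => integral_nonneg fun _ => abs_nonneg _)
          ((hi.mul_const _).add (integrable_const _)) (ae_of_all _ hin)
    _ = ε / 2 + (2 * V) / (2 * ε) := by
        rw [integral_add (hi.mul_const _) (integrable_const _), integral_mul_const]
        simp only [integral_const, probReal_univ, one_smul, ← hVdef]
        ring
    _ ≤ ε / 2 + ε ^ 2 / (2 * ε) := by gcongr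
    _ = ε := by field_simp; ring

namespace IsAveragingSolution
variable {ρ : ℝ → ℝ → ℝ} {μ : ℝ} (S : IsAveragingSolution ρ μ)
include S

/-- A second moment bound about any point gives finiteness and a variance bound. -/
lemma initial_variance {x₀ C : ℝ} (hC : 0 ≤ C)
    (h : ∫⁻ x, ENNReal.ofReal ((x - x₀) ^ 2) ∂(giniLaw (ρ 0)) ≤ ENNReal.ofReal C) :
    ∫⁻ x, ENNReal.ofReal (x ^ 2) ∂(giniLaw (ρ 0)) ≠ ⊤ ∧
      ∫ x, (x - μ) ^ 2 ∂(giniLaw (ρ 0)) ≤ C := by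
  have := S.prob le_rfl
  set ν := giniLaw (ρ 0)
  have hid : Integrable (fun x : ℝ => x) ν := S.integrable_id le_rfl
  have hidμ : ∫ x, x ∂ν = μ := S.integral_id le_rfl
  have hi : Integrable (fun x : ℝ => (x - x₀) ^ 2) ν := by
    refine ⟨by fun_prop, ?_⟩
    rw [hasFiniteIntegral_iff_ofReal (ae_of_all _ fun x => sq_nonneg _)]
    exact h.trans_lt ENNReal.ofReal_lt_top
  have hle : ∫ x, (x - x₀) ^ 2 ∂ν ≤ C := by
    rw [← ENNReal.ofReal_le_ofReal_iff hC,
      ofReal_integral_eq_lintegral_ofReal hi (ae_of_all _ fun x => sq_nonneg _)]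
    exact h
  have hlin : ∀ a b : ℝ, Integrable (fun x : ℝ => x * a + b) ν := fun a b =>
    (hid.mul_const a).add (integrable_const b)
  constructor
  · have hi2 : Integrable (fun x : ℝ => x ^ 2) ν :=
      (hi.add (hlin (2 * x₀) (-x₀ ^ 2))).congr
        (ae_of_all _ fun x => by simp only [Pi.add_apply]; ring)
    have := hi2.2
    rw [hasFiniteIntegral_iff_ofReal (ae_of_all _ fun x => sq_nonneg _)] at this
    exact this.ne
  · have e : ∫ x, (x - μ) ^ 2 ∂ν =
        ∫ x, ((x - x₀) ^ 2 + (x * (2 * (x₀ - μ)) + (μ ^ 2 - x₀ ^ 2))) ∂ν := by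
      congr 1; ext x; ring
    rw [e, integral_add hi (hlin _ _), integral_add (hid.mul_const _) (integrable_const _),
      integral_mul_const, hidμ]
    simp only [integral_const, probReal_univ, one_smul]
    nlinarith [sq_nonneg (x₀ - μ)]

/-- The dissipation is cubic in the law, so `e⁻ᵗ ν₀ ≤ νₜ` keeps at least `e⁻³ᵗ` of the initial
dissipation. -/
lemma dissipation_lower {M t : ℝ} (hM : 0 < M)
    (hν : giniLaw (ρ 0) ≤ ENNReal.ofReal M • volume) (ht : 0 ≤ t) :
    Real.exp (-(3 * t)) / (72 * M) ≤ (dissipation (giniLaw (ρ t))).toReal := by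
  have := S.prob ht
  have := S.prob le_rfl
  have htop : dissipation (giniLaw (ρ t)) ≠ ⊤ := dissipation_ne_top (S.integrable_id ht)
  rw [← ENNReal.ofReal_le_iff_le_toReal htop]
  refine le_trans ?_ (dissipation_smul_le ENNReal.ofReal_ne_top (S.smul_le ht))
  calc ENNReal.ofReal (Real.exp (-(3 * t)) / (72 * M))
      = ENNReal.ofReal (Real.exp (-t)) ^ 3 * ENNReal.ofReal (1 / (72 * M)) := by
        rw [← ENNReal.ofReal_pow (Real.exp_pos _).le, ← ENNReal.ofReal_mul (by positivity),
          ← Real.exp_nat_mul]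
        congr 1
        rw [mul_one_div]
        congr 2
        push_cast
        ring
    _ ≤ _ := by
        gcongr
        exact dissipation_ge hM hν

/-- Integrating the dissipation bound: the mean distance drops by at least
`(1 - e⁻³ᵗ) / (108 M)`. -/
lemma meanDist_drop {M t : ℝ} (hM : 0 < M)
    (hν : giniLaw (ρ 0) ≤ ENNReal.ofReal M • volume)
    (hdiff : ∀ t ≥ (0:ℝ), HasDerivAt
      (fun s => (1/(2*μ)) *
        ∫ x in Set.Ici (0:ℝ), ∫ y in Set.Ici (0:ℝ), ρ s x * ρ s y * |x - y|)
      ((1/(2*μ)) * ∫ x in Set.Ici (0:ℝ), ∫ y in Set.Ici (0:ℝ),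
        ((gainDensity (ρ t) x - ρ t x) * ρ t y +
          ρ t x * (gainDensity (ρ t) y - ρ t y)) * |x - y|) t) (ht : 0 ≤ t) :
    ∫ x in Set.Ici (0:ℝ), ∫ y in Set.Ici (0:ℝ), ρ t x * ρ t y * |x - y| ≤
      (∫ x in Set.Ici (0:ℝ), ∫ y in Set.Ici (0:ℝ), ρ 0 x * ρ 0 y * |x - y|) -
        (1 - Real.exp (-(3 * t))) / (108 * M) := by
  set g : ℝ → ℝ := fun s => ∫ x in Set.Ici (0:ℝ), ∫ y in Set.Ici (0:ℝ), ρ s x * ρ s y * |x - y|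
    with hg
  have hμ := S.mean_pos
  have hder : ∀ s ≥ (0:ℝ), HasDerivAt g (-2 * (dissipation (giniLaw (ρ s))).toReal) s := by
    intro s hs
    have h := (hdiff s hs).const_mul (2 * μ)
    rw [integral_derivative_eq (S.nonneg s hs) (S.mass s hs) (S.integrable_id hs)] at h
    have e : ∀ z : ℝ, 2 * μ * (1 / (2 * μ) * z) = z := fun z => by field_simp
    simpa only [e] using h
  have hder2 : ∀ s ≥ (0:ℝ), HasDerivAt (fun s => g s - Real.exp (-(3 * s)) / (108 * M))
      (-2 * (dissipation (giniLaw (ρ s))).toReal + Real.exp (-(3 * s)) / (36 * M)) s := by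
    intro s hs
    have h1 : HasDerivAt (fun s : ℝ => Real.exp (-(3 * s))) (Real.exp (-(3 * s)) * -(3 * 1)) s :=
      (((hasDerivAt_id s).const_mul 3).neg).exp
    refine ((hder s hs).sub (h1.div_const (108 * M))).congr_deriv ?_
    field_simp
    ring
  have hanti := antitoneOn_of_deriv_nonpos (convex_Ici (0:ℝ))
    (f := fun s => g s - Real.exp (-(3 * s)) / (108 * M))
    (fun s hs => (hder2 s hs).continuousAt.continuousWithinAt)
    (fun s hs => by
      rw [interior_Ici] at hs
      exact (hder2 s (le_of_lt hs)).differentiableAt.differentiableWithinAt)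
    (fun s hs => by
      rw [interior_Ici] at hs
      rw [(hder2 s (le_of_lt hs)).deriv]
      have h := S.dissipation_lower hM hν (le_of_lt hs)
      have e : Real.exp (-(3 * s)) / (36 * M) = 2 * (Real.exp (-(3 * s)) / (72 * M)) := by
        field_simp; norm_num
      rw [e]
      linarith)
  have h := hanti Set.self_mem_Ici ht ht
  simp only [mul_zero, neg_zero, Real.exp_zero] at h
  rw [sub_div]
  linarith

end IsAveragingSolution

/-- For a classical solution `ρ(t,x)` of
`∂ₜ ρ(t,x) = 2(ρ(t)*ρ(t))(2x) - ρ(t,x)` on `t ≥ 0`, `x ≥ 0`, with initial condition a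
log-concave probability density on `[0,∞)` with mean `μ > 0`, the Gini index
`G[ρ(t)] = (1/(2μ)) ∬ ρ(t,x)ρ(t,y)|x-y| dx dy` decays exponentially:
`G[ρ(t)] ≤ G[ρ(0)] e^{-t/14434}` for all `t ≥ 0`. -/
theorem gini_exponential_decay (ρ : ℝ → ℝ → ℝ) (μ : ℝ) (hμ : 0 < μ)
    (hnonneg : ∀ t ≥ (0:ℝ), ∀ x ≥ (0:ℝ), 0 ≤ ρ t x)
    (hPDE : ∀ t ≥ (0:ℝ), ∀ x ≥ (0:ℝ), HasDerivAt (fun s => ρ s x)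
      (2 * (∫ y in (0:ℝ)..(2*x), ρ t y * ρ t (2*x - y)) - ρ t x) t)
    (hmass : ∀ t ≥ (0:ℝ), ∫ x in Set.Ici (0:ℝ), ρ t x = 1)
    (hmean : ∀ t ≥ (0:ℝ), ∫ x in Set.Ici (0:ℝ), x * ρ t x = μ)
    (hlogconc : ∀ x ≥ (0:ℝ), ∀ y ≥ (0:ℝ), ∀ lam : ℝ, 0 ≤ lam → lam ≤ 1 →
      ρ 0 x ^ lam * ρ 0 y ^ (1 - lam) ≤ ρ 0 (lam * x + (1 - lam) * y))
    (hint : ∀ t ≥ (0:ℝ), Integrable (fun p : ℝ × ℝ => ρ t p.1 * ρ t p.2 * |p.1 - p.2|)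
      ((volume.restrict (Set.Ici 0)).prod (volume.restrict (Set.Ici 0))))
    (hdiff : ∀ t ≥ (0:ℝ), HasDerivAt
      (fun s => (1/(2*μ)) *
        ∫ x in Set.Ici (0:ℝ), ∫ y in Set.Ici (0:ℝ), ρ s x * ρ s y * |x - y|)
      ((1/(2*μ)) * ∫ x in Set.Ici (0:ℝ), ∫ y in Set.Ici (0:ℝ),
        ((2 * (∫ z in (0:ℝ)..(2*x), ρ t z * ρ t (2*x - z)) - ρ t x) * ρ t y +
          ρ t x * (2 * (∫ z in (0:ℝ)..(2*y), ρ t z * ρ t (2*y - z)) - ρ t y)) * |x - y|) t) :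
    ∀ t ≥ (0:ℝ),
      (1/(2*μ)) * (∫ x in Set.Ici (0:ℝ), ∫ y in Set.Ici (0:ℝ), ρ t x * ρ t y * |x - y|) ≤
        ((1/(2*μ)) * ∫ x in Set.Ici (0:ℝ), ∫ y in Set.Ici (0:ℝ), ρ 0 x * ρ 0 y * |x - y|) *
          Real.exp (-(t/14434)) := by
  have S : IsAveragingSolution ρ μ := ⟨hnonneg, hPDE, hmass, hμ, hmean⟩
  obtain ⟨M, hM, hν, x₀, hx₀⟩ :=
    logConcave_sup_and_spread (hnonneg 0 le_rfl) (hmass 0 le_rfl) hlogconc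
  obtain ⟨hfin, hV₀⟩ := S.initial_variance (by positivity) hx₀
  have hlong : ∀ t ≥ (0:ℝ),
      ∫ x in Set.Ici (0:ℝ), ∫ y in Set.Ici (0:ℝ), ρ t x * ρ t y * |x - y| ≤
        49 / M * Real.exp (-(9 / 40 * t)) := by
    intro t ht
    rw [integral_mul_mul_dist (hnonneg t ht) (hmass t ht)]
    have := S.prob ht
    refine integral_dist_le_of_variance (by positivity) (S.integrable_id ht) (S.integral_id ht)
      (S.integrable_sq hfin ht) ?_
    have hV := S.variance_bound hfin ht
    have he : Real.exp (-(9 / 40 * t)) ^ 2 = Real.exp (-(9 / 20 * t)) := by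
      rw [← Real.exp_nat_mul]; congr 1; push_cast; ring
    calc 2 * ∫ x, (x - μ) ^ 2 ∂(giniLaw (ρ t))
        ≤ 2 * (Real.exp (-(9 / 20 * t)) * (1200 / M ^ 2)) := by
          refine mul_le_mul_of_nonneg_left (hV.trans ?_) (by norm_num)
          gcongr
      _ = 2400 / M ^ 2 * Real.exp (-(9 / 20 * t)) := by ring
      _ ≤ 2401 / M ^ 2 * Real.exp (-(9 / 20 * t)) := by gcongr; norm_num
      _ = (49 / M * Real.exp (-(9 / 40 * t))) ^ 2 := by rw [mul_pow, he]; ring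
  intro t ht
  rw [mul_assoc]
  refine mul_le_mul_of_nonneg_left ?_ (by positivity)
  refine exp_bound_of_two_bounds hM ht ?_ ?_
    (S.meanDist_drop hM hν hdiff ht) (hlong t ht)
  · rw [integral_mul_mul_dist (hnonneg 0 le_rfl) (hmass 0 le_rfl)]
    exact integral_nonneg fun _ => integral_nonneg fun _ => abs_nonneg _
  · simpa using hlong 0 le_rfl
end

section
/- Let ρ be a log-concave probability density on ℝ with finite first moment. Then ∭_{ℝ³} ρ(v)ρ(w)ρ(y) ( (|v−y| + |w−y|)/2 − |(v+w)/2 − y| ) dv dw dy ≥ (1/(24(e+1)³(1 + 3e + e²/3))) · (1/2) ∬_{ℝ²} ρ(x)ρ(y)|x−y| dx dy. -/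
/-!
The proof compares both sides with the inverse of the height of the density.

Let `m` be a point where `ρ m` is nearly maximal, `ρ ≤ M := (51/50) ρ m` (`exists_near_peak`; `ρ` is
bounded by `bddAbove_density`).

* By log-concavity `ρ` decays exponentially beyond distance `3 / ρ m` from `m` (`decay`), so the mean
  absolute deviation from `m` is at most `21 / ρ m` (`deviation_le`). By the triangle inequality it
  bounds `(1/2) ∬ ρ(x)ρ(y)|x-y|` (`gini_le_deviation`).
* The kernel of the dissipation equals `min (y - v) (w - y)` for `v ≤ y ≤ w`. Let `v` lie below the
  lower tercile, `w` above the upper tercile and `y` between them, at distance at least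
  `δ = 1 / (12 M)` from both. As `ρ ≤ M`, such `y` have mass at least `1/6`, so the dissipation is at
  least `δ / 54 = 1 / (648 M)` (`le_dissipation`).

The ratio of the two bounds is `1 / (648 * 21 * 51/50)`, which is larger than `1 / 13900` and hence
than the claimed constant.
-/

open MeasureTheory

/-! ### Log-concave densities: boundedness and exponential decay -/

/-- Log-concavity of a nonnegative function on `ℝ`, in the multiplicative form
`f x ^ l * f y ^ (1 - l) ≤ f (l * x + (1 - l) * y)`. -/
def LogConc (f : ℝ → ℝ) : Prop :=
  ∀ x y l : ℝ, 0 ≤ l → l ≤ 1 → f x ^ l * f y ^ (1 - l) ≤ f (l * x + (1 - l) * y)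

lemma integrable_of_mass_s9 {f : ℝ → ℝ} (h1 : ∫ x, f x = 1) : Integrable f := by
  by_contra h
  rw [integral_undef h] at h1
  norm_num at h1

lemma interval_mass_le {f : ℝ → ℝ} (h0 : ∀ x, 0 ≤ f x) (h1 : ∫ x, f x = 1)
    {a b c : ℝ} (hab : a ≤ b) (hc : ∀ x ∈ Set.Icc a b, c ≤ f x) : (b - a) * c ≤ 1 := by
  have hi := integrable_of_mass_s9 h1
  have h := setIntegral_ge_of_const_le (μ := volume) measurableSet_Icc (by simp) hc
    hi.integrableOn
  rw [Real.volume_real_Icc_of_le hab, smul_eq_mul] at h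
  exact h.trans ((setIntegral_le_integral hi (Filter.Eventually.of_forall h0)).trans h1.le)

/-- The density is at least `η` on an interval `[p, q]`, so at every point `x` it is at least
`√(ρ x * η)` on the interval of midpoints between `x` and `[p, q]`; unit mass bounds `ρ x`. -/
lemma bddAbove_density {f : ℝ → ℝ} (h0 : ∀ x, 0 ≤ f x) (h1 : ∫ x, f x = 1)
    (hl : LogConc f) : BddAbove (Set.range f) := by
  obtain ⟨p, q, hpq, hp, hq⟩ : ∃ p q, p < q ∧ 0 < f p ∧ 0 < f q := by
    by_contra! hne
    have hs : (Function.support f).Subsingleton := by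
      intro x hx y hy
      have hx' : 0 < f x := lt_of_le_of_ne (h0 x) (Ne.symm hx)
      have hy' : 0 < f y := lt_of_le_of_ne (h0 y) (Ne.symm hy)
      rcases lt_trichotomy x y with h | h | h
      · exact absurd hy' (not_lt.2 (hne x y h hx'))
      · exact h
      · exact absurd hx' (not_lt.2 (hne y x h hy'))
    have hz : volume (Function.support f) = 0 := hs.measure_zero volume
    have : f =ᵐ[volume] 0 := by
      rw [Filter.EventuallyEq, ae_iff]
      exact hz
    rw [integral_congr_ae this] at h1
    simp at h1
  set η := min (f p) (f q) with hη
  have hηpos : 0 < η := lt_min hp hq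
  have hlow : ∀ z ∈ Set.Icc p q, η ≤ f z := by
    intro z hz
    have hd : 0 < q - p := sub_pos.2 hpq
    set l := (q - z) / (q - p) with hldef
    have hl0 : 0 ≤ l := div_nonneg (by linarith [hz.2]) hd.le
    have hl1 : l ≤ 1 := by rw [hldef, div_le_one hd]; linarith [hz.1]
    have hzl : l * p + (1 - l) * q = z := by rw [hldef]; field_simp; ring
    have := hl p q l hl0 hl1
    rw [hzl] at this
    refine le_trans ?_ this
    calc η = η ^ l * η ^ (1 - l) := by
          rw [← Real.rpow_add hηpos]; simp
      _ ≤ f p ^ l * f q ^ (1 - l) :=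
          mul_le_mul (Real.rpow_le_rpow hηpos.le (min_le_left _ _) hl0)
            (Real.rpow_le_rpow hηpos.le (min_le_right _ _) (by linarith))
            (by positivity) (Real.rpow_nonneg (h0 p) _)
  refine ⟨4 / (η * (q - p) ^ 2), ?_⟩
  rintro _ ⟨x, rfl⟩
  have hmid : ∀ u ∈ Set.Icc ((x + p) / 2) ((x + q) / 2), √(f x) * √η ≤ f u := by
    intro u hu
    have hz : 2 * u - x ∈ Set.Icc p q := ⟨by linarith [hu.1], by linarith [hu.2]⟩
    have := hl x (2 * u - x) (1 / 2) (by norm_num) (by norm_num)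
    have e : (1 / 2 : ℝ) * x + (1 - 1 / 2) * (2 * u - x) = u := by ring
    rw [e, show (1 - 1 / 2 : ℝ) = 1 / 2 by norm_num, ← Real.sqrt_eq_rpow,
      ← Real.sqrt_eq_rpow] at this
    refine le_trans ?_ this
    gcongr
    exact hlow _ hz
  have hm := interval_mass_le h0 h1 (by linarith) hmid
  have hd : 0 < q - p := sub_pos.2 hpq
  rw [le_div_iff₀ (by positivity)]
  have e1 := Real.sq_sqrt (h0 x)
  have e2 := Real.sq_sqrt hηpos.le
  have hm' : (q - p) * (√(f x) * √η) ≤ 2 := by linarith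
  have hn : 0 ≤ (q - p) * (√(f x) * √η) := by positivity
  calc f x * (η * (q - p) ^ 2) = ((q - p) * (√(f x) * √η)) ^ 2 := by
        rw [mul_pow, mul_pow, e1, e2]; ring
    _ ≤ 2 ^ 2 := by gcongr
    _ = 4 := by norm_num

/-- The supremum of the density need not be attained, hence the factor `51 / 50`. -/
lemma exists_near_peak {f : ℝ → ℝ} (h0 : ∀ x, 0 ≤ f x) (h1 : ∫ x, f x = 1)
    (hl : LogConc f) : ∃ m, 0 < f m ∧ ∀ x, f x ≤ 51 / 50 * f m := by
  have hb := bddAbove_density h0 h1 hl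
  have hpos : ∃ x, 0 < f x := by
    by_contra! h
    have : f = fun _ => 0 := funext fun x => le_antisymm (h x) (h0 x)
    rw [this] at h1
    simp at h1
  obtain ⟨x, hx⟩ := hpos
  have hS : 0 < ⨆ x, f x := hx.trans_le (le_ciSup hb x)
  obtain ⟨m, hm⟩ := exists_lt_of_lt_ciSup (show 50 / 51 * (⨆ x, f x) < ⨆ x, f x by linarith)
  refine ⟨m, by linarith, fun y => ?_⟩
  have := le_ciSup hb y
  linarith

/-- Beyond distance `3 / f 0` the density decays exponentially. Otherwise log-concavity would keep
`f` above `f 0 / e` on all of `[0, 3 / f 0]`, an amount of mass at least `3 / e > 1`. -/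
lemma decay {f : ℝ → ℝ} (h0 : ∀ x, 0 ≤ f x) (h1 : ∫ x, f x = 1)
    (hl : LogConc f) (hK : 0 < f 0) {t : ℝ} (ht : 3 / f 0 < t) :
    f t ≤ f 0 * Real.exp (-(f 0 / 3 * t)) := by
  by_contra! hlt
  have hL : 0 < 3 / f 0 := by positivity
  have htp : 0 < t := hL.trans ht
  have hc : ∀ s ∈ Set.Icc 0 (3 / f 0), f 0 * Real.exp (-1) ≤ f s := by
    intro s hs
    have hl0 : 0 ≤ s / t := div_nonneg hs.1 htp.le
    have hl1 : s / t ≤ 1 := by rw [div_le_one htp]; linarith [hs.2]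
    have := hl t 0 (s / t) hl0 hl1
    rw [mul_zero, add_zero, div_mul_cancel₀ _ htp.ne'] at this
    refine le_trans ?_ this
    have hs1 : f 0 / 3 * s ≤ 1 := by
      have := mul_le_mul_of_nonneg_left hs.2 (show 0 ≤ f 0 / 3 by positivity)
      rwa [show f 0 / 3 * (3 / f 0) = 1 by field_simp] at this
    calc f 0 * Real.exp (-1) ≤ f 0 * Real.exp (-(f 0 / 3 * s)) := by gcongr
      _ = (f 0 * Real.exp (-(f 0 / 3 * t))) ^ (s / t) * f 0 ^ (1 - s / t) := by
          rw [Real.mul_rpow hK.le (Real.exp_pos _).le, ← Real.exp_mul, mul_right_comm,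
            ← Real.rpow_add hK]
          rw [show s / t + (1 - s / t) = 1 by ring, Real.rpow_one]
          congr 2
          field_simp
      _ ≤ f t ^ (s / t) * f 0 ^ (1 - s / t) := by
          gcongr
  have hm := interval_mass_le h0 h1 hL.le hc
  rw [sub_zero, ← mul_assoc, div_mul_cancel₀ _ hK.ne', Real.exp_neg, ← div_eq_mul_inv,
    div_le_one (Real.exp_pos 1)] at hm
  linarith [Real.exp_one_lt_three]

lemma decay_two_sided {f : ℝ → ℝ} (h0 : ∀ x, 0 ≤ f x) (h1 : ∫ x, f x = 1)
    (hl : LogConc f) {m : ℝ} (hK : 0 < f m) {x : ℝ} (hx : 3 / f m < |x - m|) :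
    f x ≤ f m * Real.exp (-(f m / 3 * |x - m|)) := by
  rcases le_total 0 (x - m) with h | h
  · rw [abs_of_nonneg h] at hx ⊢
    have := decay (f := fun u => f (m + u)) (fun u => h0 _)
      (by rw [integral_add_left_eq_self (μ := volume) f m, h1])
      (fun a b l hl0 hl1 => by
        have := hl (m + a) (m + b) l hl0 hl1
        rwa [show l * (m + a) + (1 - l) * (m + b) = m + (l * a + (1 - l) * b) by ring] at this)
      (by simpa using hK) (t := x - m) (by simpa using hx)
    simpa using this
  · rw [abs_of_nonpos h] at hx ⊢
    have := decay (f := fun u => f (m - u)) (fun u => h0 _)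
      (by rw [integral_sub_left_eq_self f volume m, h1])
      (fun a b l hl0 hl1 => by
        have := hl (m - a) (m - b) l hl0 hl1
        rwa [show l * (m - a) + (1 - l) * (m - b) = m - (l * a + (1 - l) * b) by ring] at this)
      (by simpa using hK) (t := -(x - m)) (by simpa using hx)
    simpa using this

/-- The half-line integral is `Γ(2) / r ^ 2 = 1 / r ^ 2`. -/
lemma integral_abs_mul_exp {r : ℝ} (hr : 0 < r) :
    ∫ t : ℝ, |t| * Real.exp (-(r * |t|)) = 2 / r ^ 2 := by
  rw [integral_comp_abs (f := fun t => t * Real.exp (-(r * t)))]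
  have h := Real.integral_rpow_mul_exp_neg_mul_Ioi (a := 2) (by norm_num) hr
  norm_num at h
  rw [h]
  field_simp

lemma integrable_abs_mul_exp {r : ℝ} (hr : 0 < r) :
    Integrable fun t : ℝ => |t| * Real.exp (-(r * |t|)) := by
  -- The Bochner integral of a non-integrable function is `0`, but this one is positive.
  by_contra h
  have := integral_abs_mul_exp hr
  rw [integral_undef h] at this
  have : 0 < 2 / r ^ 2 := by positivity
  linarith

/-- The mean absolute deviation from `m` is at most `L + 2 f(m) L²` with `L = 3 / f m`. -/
lemma deviation_le {f : ℝ → ℝ} (h0 : ∀ x, 0 ≤ f x) (h1 : ∫ x, f x = 1)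
    (hl : LogConc f) {m : ℝ} (hK : 0 < f m) :
    ∫ x, |x - m| * f x ≤ 21 / f m := by
  have hi := integrable_of_mass_s9 h1
  have hr : 0 < f m / 3 := by positivity
  have he : Integrable fun x : ℝ => |x - m| * Real.exp (-(f m / 3 * |x - m|)) :=
    (integrable_abs_mul_exp hr).comp_sub_right m
  have hev : ∫ x : ℝ, |x - m| * Real.exp (-(f m / 3 * |x - m|)) = 2 / (f m / 3) ^ 2 := by
    rw [← integral_abs_mul_exp hr]
    exact integral_sub_right_eq_self (fun t : ℝ => |t| * Real.exp (-(f m / 3 * |t|))) m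
  have hle : ∀ x, |x - m| * f x ≤
      3 / f m * f x + f m * (|x - m| * Real.exp (-(f m / 3 * |x - m|))) := by
    intro x
    rcases le_or_gt (|x - m|) (3 / f m) with h | h
    · have := mul_le_mul_of_nonneg_right h (h0 x)
      have h2 : 0 ≤ f m * (|x - m| * Real.exp (-(f m / 3 * |x - m|))) := by positivity
      linarith
    · have := mul_le_mul_of_nonneg_left (decay_two_sided h0 h1 hl hK h) (abs_nonneg (x - m))
      have h2 : 0 ≤ 3 / f m * f x := mul_nonneg (by positivity) (h0 x)
      linarith
  calc ∫ x, |x - m| * f x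
      ≤ ∫ x, (3 / f m * f x + f m * (|x - m| * Real.exp (-(f m / 3 * |x - m|)))) :=
        integral_mono_of_nonneg
          (Filter.Eventually.of_forall fun x => mul_nonneg (abs_nonneg _) (h0 x))
          ((hi.const_mul _).add (he.const_mul _)) (Filter.Eventually.of_forall hle)
    _ = 3 / f m * 1 + f m * (2 / (f m / 3) ^ 2) := by
        rw [integral_add (hi.const_mul _) (he.const_mul _), integral_const_mul,
          integral_const_mul, h1, hev]
    _ = 21 / f m := by field_simp; norm_num

/-! ### The Gini mean difference and the mean deviation -/

lemma integrable_deviation {f : ℝ → ℝ} (hi : Integrable f)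
    (hmom : Integrable fun x => |x| * f x) (m : ℝ) : Integrable fun x => |x - m| * f x := by
  refine (hmom.norm.add (hi.norm.const_mul |m|)).mono'
    ((Continuous.aestronglyMeasurable (by fun_prop)).mul hi.1)
    (Filter.Eventually.of_forall fun x => ?_)
  simp only [Pi.add_apply, norm_mul, Real.norm_eq_abs, abs_abs]
  have := mul_le_mul_of_nonneg_right (abs_sub x m) (abs_nonneg (f x))
  linarith

lemma gini_le_deviation {f : ℝ → ℝ} (h0 : ∀ x, 0 ≤ f x) (h1 : ∫ x, f x = 1)
    (hmom : Integrable fun x => |x| * f x) (m : ℝ) :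
    (1 / 2) * ∫ x, ∫ y, f x * f y * |x - y| ≤ ∫ x, |x - m| * f x := by
  have hi := integrable_of_mass_s9 h1
  have hd := integrable_deviation hi hmom m
  set A := ∫ x, |x - m| * f x with hA
  have hin : ∀ x, ∫ y, f x * f y * |x - y| ≤ |x - m| * f x + f x * A := by
    intro x
    calc ∫ y, f x * f y * |x - y| ≤ ∫ y, ((|x - m| * f x) * f y + f x * (|y - m| * f y)) := by
          refine integral_mono_of_nonneg (Filter.Eventually.of_forall fun y => ?_)
            ((hi.const_mul _).add (hd.const_mul _)) (Filter.Eventually.of_forall fun y => ?_)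
          · exact mul_nonneg (mul_nonneg (h0 x) (h0 y)) (abs_nonneg _)
          · have h2 : |x - y| ≤ |x - m| + |y - m| := by
              rw [abs_sub_comm y m]; exact abs_sub_le x m y
            have := mul_le_mul_of_nonneg_left h2 (mul_nonneg (h0 x) (h0 y))
            simp only
            linarith
      _ = |x - m| * f x + f x * A := by
          rw [integral_add (hi.const_mul _) (hd.const_mul _), integral_const_mul,
            integral_const_mul, h1, mul_one]
  have : ∫ x, ∫ y, f x * f y * |x - y| ≤ ∫ x, (|x - m| * f x + f x * A) :=
    integral_mono_of_nonneg
      (Filter.Eventually.of_forall fun x => integral_nonneg fun y =>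
        mul_nonneg (mul_nonneg (h0 x) (h0 y)) (abs_nonneg _))
      (hd.add (hi.mul_const A)) (Filter.Eventually.of_forall hin)
  rw [integral_add hd (hi.mul_const A), integral_mul_const, h1, ← hA] at this
  linarith

/-! ### Lower bound for the dissipation -/

lemma exists_quantile {f : ℝ → ℝ} (h1 : ∫ x, f x = 1) {c : ℝ} (hc0 : 0 < c) (hc1 : c < 1) :
    ∃ a, ∫ x in Set.Iic a, f x = c := by
  have hi := integrable_of_mass_s9 h1
  have hcont : Continuous fun a => ∫ x in Set.Iic a, f x := by
    have : (fun a => ∫ x in Set.Iic a, f x) =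
        fun a => (∫ x in Set.Iic 0, f x) + ∫ x in (0 : ℝ)..a, f x := by
      funext a
      rw [← intervalIntegral.integral_Iic_sub_Iic hi.integrableOn hi.integrableOn]
      ring
    rw [this]
    exact continuous_const.add
      (intervalIntegral.continuous_primitive (fun _ _ => hi.intervalIntegrable) 0)
  have hT : Filter.Tendsto (fun a => ∫ x in Set.Iic a, f x) Filter.atTop (nhds 1) := by
    rw [← h1]
    exact (aecover_Iic Filter.tendsto_id).integral_tendsto_of_countably_generated hi
  have hB : Filter.Tendsto (fun a => ∫ x in Set.Ioi a, f x) Filter.atBot (nhds 1) := by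
    rw [← h1]
    exact (aecover_Ioi Filter.tendsto_id).integral_tendsto_of_countably_generated hi
  obtain ⟨u, hu⟩ := (hT.eventually (lt_mem_nhds hc1)).exists
  obtain ⟨l, hlow⟩ := (hB.eventually (lt_mem_nhds (show 1 - c < 1 by linarith))).exists
  refine mem_range_of_exists_le_of_exists_ge hcont ⟨l, ?_⟩ ⟨u, hu.le⟩
  have := intervalIntegral.integral_Iic_add_Ioi (b := l) hi.integrableOn hi.integrableOn
  linarith

/-- The integrand equals `min (y - v) (w - y)` when `v ≤ y ≤ w`. -/
lemma le_kernel {v w y a b δ : ℝ} (hv : v ≤ a) (hw : b ≤ w) (hy1 : a + δ ≤ y)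
    (hy2 : y ≤ b - δ) (hδ : 0 ≤ δ) : δ ≤ (|v - y| + |w - y|) / 2 - |(v + w) / 2 - y| := by
  rw [abs_of_nonpos (show v - y ≤ 0 by linarith), abs_of_nonneg (show 0 ≤ w - y by linarith)]
  rcases abs_cases ((v + w) / 2 - y) with h | h <;> linarith [h.1]

lemma kernel_nonneg (v w y : ℝ) : 0 ≤ (|v - y| + |w - y|) / 2 - |(v + w) / 2 - y| := by
  have := abs_add_le (v - y) (w - y)
  rw [show (v + w) / 2 - y = ((v - y) + (w - y)) / 2 by ring, abs_div, abs_two]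
  linarith

lemma kernel_le (v w y : ℝ) : (|v - y| + |w - y|) / 2 - |(v + w) / 2 - y| ≤ |v| + |y| := by
  have h1 := abs_sub v y
  have h2 := abs_sub_abs_le_abs_sub (w - y) (-(v - y))
  rw [abs_neg, show w - y - -(v - y) = ((v + w) / 2 - y) * 2 by ring, abs_mul, abs_two] at h2
  linarith

/-- Removing an interval of length `δ` at each end of `(a, b]` costs at most `2 M δ` of its mass,
where `M` bounds the density. The removed intervals may overlap. -/
lemma center_mass {f : ℝ → ℝ} (h0 : ∀ x, 0 ≤ f x) (hi : Integrable f) {M a b δ : ℝ}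
    (hM : ∀ x, f x ≤ M) (hδ : 0 ≤ δ) :
    (∫ x in Set.Ioc a b, f x) - 2 * (M * δ) ≤ ∫ x in Set.Icc (a + δ) (b - δ), f x := by
  have hM0 : 0 ≤ M := (h0 0).trans (hM 0)
  have hc : ∀ s t : ℝ, Integrable ((Set.Icc s t).indicator fun _ : ℝ => M) := fun s t =>
    (integrable_indicator_iff measurableSet_Icc).2 (integrableOn_const (by simp))
  have hiC := hi.indicator (measurableSet_Icc (a := a + δ) (b := b - δ))
  have key : ∫ x, (Set.Ioc a b).indicator f x ≤
      ∫ x, ((Set.Icc (a + δ) (b - δ)).indicator f x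
        + (Set.Icc a (a + δ)).indicator (fun _ => M) x
        + (Set.Icc (b - δ) b).indicator (fun _ => M) x) := by
    refine integral_mono (hi.indicator measurableSet_Ioc) ((hiC.add (hc _ _)).add (hc _ _)) ?_
    intro x
    beta_reduce
    have p1 : 0 ≤ (Set.Icc (a + δ) (b - δ)).indicator f x :=
      Set.indicator_nonneg (fun x _ => h0 x) x
    have p2 : 0 ≤ (Set.Icc a (a + δ)).indicator (fun _ => M) x :=
      Set.indicator_nonneg (fun _ _ => hM0) x
    have p3 : 0 ≤ (Set.Icc (b - δ) b).indicator (fun _ => M) x :=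
      Set.indicator_nonneg (fun _ _ => hM0) x
    by_cases hx : x ∈ Set.Ioc a b
    · rw [Set.indicator_of_mem hx]
      rcases le_or_gt x (a + δ) with h | h
      · rw [Set.indicator_of_mem (show x ∈ Set.Icc a (a + δ) from ⟨hx.1.le, h⟩)] at p2 ⊢
        linarith [hM x]
      rcases le_or_gt (b - δ) x with h' | h'
      · rw [Set.indicator_of_mem (show x ∈ Set.Icc (b - δ) b from ⟨h', hx.2⟩)] at p3 ⊢
        linarith [hM x]
      · rw [Set.indicator_of_mem (show x ∈ Set.Icc (a + δ) (b - δ) from ⟨h.le, h'.le⟩)] at p1 ⊢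
        linarith
    · rw [Set.indicator_of_notMem hx]
      linarith
  have hsum : Integrable fun x => (Set.Icc (a + δ) (b - δ)).indicator f x
      + (Set.Icc a (a + δ)).indicator (fun _ => M) x := hiC.add (hc _ _)
  rw [integral_add hsum (hc _ _), integral_add hiC (hc _ _),
    integral_indicator measurableSet_Ioc, integral_indicator measurableSet_Icc,
    integral_indicator_const _ measurableSet_Icc, integral_indicator_const _ measurableSet_Icc,
    Real.volume_real_Icc_of_le (by linarith), Real.volume_real_Icc_of_le (by linarith),
    smul_eq_mul, smul_eq_mul] at key
  linarith

/-- If `v` lies in the lower third, `w` in the upper third, and `y` in the middle third at distance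
at least `δ = 1 / (12 M)` from its endpoints, the integrand is at least `δ`; these events have
probabilities `1/3`, `1/3` and at least `1/6`. -/
lemma le_dissipation {f : ℝ → ℝ} (h0 : ∀ x, 0 ≤ f x) (h1 : ∫ x, f x = 1)
    (hmom : Integrable fun x => |x| * f x) {M : ℝ} (hM0 : 0 < M) (hM : ∀ x, f x ≤ M) :
    1 / (648 * M) ≤
      ∫ v, ∫ w, ∫ y, f v * f w * f y * ((|v - y| + |w - y|) / 2 - |(v + w) / 2 - y|) := by
  have hi := integrable_of_mass_s9 h1
  obtain ⟨a, ha⟩ := exists_quantile h1 (c := 1 / 3) (by norm_num) (by norm_num)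
  obtain ⟨b, hb⟩ := exists_quantile h1 (c := 2 / 3) (by norm_num) (by norm_num)
  have hab : a ≤ b := by
    by_contra! h
    have := setIntegral_mono_set hi.integrableOn (Filter.Eventually.of_forall h0)
      (Set.Iic_subset_Iic.2 h.le).eventuallyLE
    rw [ha, hb] at this
    norm_num at this
  have hmid : ∫ x in Set.Ioc a b, f x = 1 / 3 := by
    rw [← intervalIntegral.integral_of_le hab,
      ← intervalIntegral.integral_Iic_sub_Iic hi.integrableOn hi.integrableOn, ha, hb]
    norm_num
  have hup : ∫ x in Set.Ioi b, f x = 1 / 3 := by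
    have := intervalIntegral.integral_Iic_add_Ioi (b := b) hi.integrableOn hi.integrableOn
    linarith
  set δ := 1 / (12 * M) with hδ
  have hδ0 : 0 < δ := by positivity
  have hMδ : M * δ = 1 / 12 := by rw [hδ]; field_simp
  have hC := center_mass (a := a) (b := b) h0 hi hM hδ0.le
  rw [hmid, hMδ] at hC
  set A := (Set.Iic a).indicator f with hAdef
  set B := (Set.Ioi b).indicator f with hBdef
  set C := (Set.Icc (a + δ) (b - δ)).indicator f with hCdef
  have hAi : Integrable A := hi.indicator measurableSet_Iic
  have hBi : Integrable B := hi.indicator measurableSet_Ioi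
  have hCi : Integrable C := hi.indicator measurableSet_Icc
  have hAv : ∫ x, A x = 1 / 3 := by rw [hAdef, integral_indicator measurableSet_Iic, ha]
  have hBv : ∫ x, B x = 1 / 3 := by rw [hBdef, integral_indicator measurableSet_Ioi, hup]
  have hCv : 1 / 6 ≤ ∫ x, C x := by
    rw [hCdef, integral_indicator measurableSet_Icc]; linarith
  set F : ℝ × ℝ × ℝ → ℝ := fun z => f z.1 * f z.2.1 * f z.2.2 *
    ((|z.1 - z.2.2| + |z.2.1 - z.2.2|) / 2 - |(z.1 + z.2.1) / 2 - z.2.2|) with hF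
  have hFnn : ∀ z, 0 ≤ F z := fun z =>
    mul_nonneg (mul_nonneg (mul_nonneg (h0 _) (h0 _)) (h0 _)) (kernel_nonneg _ _ _)
  have hFi : Integrable F (volume.prod (volume.prod volume)) := by
    have g1 := hmom.mul_prod (hi.mul_prod hi)
    have g2 := hi.mul_prod (hi.mul_prod hmom)
    refine (g1.add g2).mono' ?_ (Filter.Eventually.of_forall fun z => ?_)
    · have hk : Continuous fun z : ℝ × ℝ × ℝ =>
          (|z.1 - z.2.2| + |z.2.1 - z.2.2|) / 2 - |(z.1 + z.2.1) / 2 - z.2.2| := by fun_prop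
      refine AEStronglyMeasurable.mul ?_ hk.aestronglyMeasurable
      have := (hi.mul_prod (hi.mul_prod hi)).1
      refine this.congr (Filter.Eventually.of_forall fun z => ?_)
      simp only
      ring
    · rw [Real.norm_of_nonneg (hFnn z)]
      have := mul_le_mul_of_nonneg_left (kernel_le z.1 z.2.1 z.2.2)
        (mul_nonneg (mul_nonneg (h0 z.1) (h0 z.2.1)) (h0 z.2.2))
      simp only [hF, Pi.add_apply]
      linarith
  have hFint : ∫ z, F z ∂(volume.prod (volume.prod volume)) =
      ∫ v, ∫ w, ∫ y, f v * f w * f y * ((|v - y| + |w - y|) / 2 - |(v + w) / 2 - y|) := by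
    rw [integral_prod F hFi]
    refine integral_congr_ae ?_
    filter_upwards [hFi.prod_right_ae] with v hv
    exact integral_prod _ hv
  rw [← hFint]
  have hlow : ∀ z : ℝ × ℝ × ℝ, δ * (A z.1 * (B z.2.1 * C z.2.2)) ≤ F z := by
    rintro ⟨v, w, y⟩
    by_cases hv : v ∈ Set.Iic a
    swap
    · simpa [hAdef, Set.indicator_of_notMem hv] using hFnn (v, w, y)
    by_cases hw : w ∈ Set.Ioi b
    swap
    · simpa [hBdef, Set.indicator_of_notMem hw] using hFnn (v, w, y)
    by_cases hy : y ∈ Set.Icc (a + δ) (b - δ)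
    swap
    · simpa [hCdef, Set.indicator_of_notMem hy] using hFnn (v, w, y)
    simp only [hAdef, hBdef, hCdef, Set.indicator_of_mem hv, Set.indicator_of_mem hw,
      Set.indicator_of_mem hy, hF]
    have := mul_le_mul_of_nonneg_left
      (le_kernel hv (le_of_lt hw) hy.1 hy.2 hδ0.le)
      (mul_nonneg (mul_nonneg (h0 v) (h0 w)) (h0 y))
    linarith
  have hABC := hAi.mul_prod (hBi.mul_prod hCi)
  calc 1 / (648 * M) = δ * (1 / 3 * (1 / 3 * (1 / 6))) := by rw [hδ]; field_simp; norm_num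
    _ ≤ δ * ((∫ x, A x) * ((∫ x, B x) * ∫ x, C x)) := by rw [hAv, hBv]; gcongr
    _ = ∫ z : ℝ × ℝ × ℝ, δ * (A z.1 * (B z.2.1 * C z.2.2)) ∂(volume.prod (volume.prod volume)) := by
        rw [integral_const_mul, ← integral_prod_mul B C,
          ← integral_prod_mul A (fun q : ℝ × ℝ => B q.1 * C q.2)]
    _ ≤ _ := integral_mono (hABC.const_mul δ) hFi hlow

/-- For a log-concave probability density `ρ` on `ℝ` with finite first
moment, `∭ ρ(v)ρ(w)ρ(y)((|v-y|+|w-y|)/2 - |(v+w)/2-y|) dv dw dy ≥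
(1/(24(e+1)³(1+3e+e²/3))) · (1/2) ∬ ρ(x)ρ(y)|x-y| dx dy`. -/
theorem dissipation_dominates_gini (ρ : ℝ → ℝ)
    (hmeas : Measurable ρ) (hnonneg : ∀ x, 0 ≤ ρ x)
    (hmass : ∫ x, ρ x = 1)
    (hmoment : Integrable (fun x => |x| * ρ x))
    (hlogconc : ∀ x y lam : ℝ, 0 ≤ lam → lam ≤ 1 →
      ρ x ^ lam * ρ y ^ (1 - lam) ≤ ρ (lam * x + (1 - lam) * y)) :
    (1 / (24 * (Real.exp 1 + 1)^3 * (1 + 3 * Real.exp 1 + (Real.exp 1)^2 / 3))) *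
        ((1/2) * ∫ x, ∫ y, ρ x * ρ y * |x - y|) ≤
      ∫ v, ∫ w, ∫ y, ρ v * ρ w * ρ y * ((|v - y| + |w - y|)/2 - |(v + w)/2 - y|) := by
  obtain ⟨m, hm, hpeak⟩ := exists_near_peak hnonneg hmass hlogconc
  have hG := (gini_le_deviation hnonneg hmass hmoment m).trans
    (deviation_le hnonneg hmass hlogconc hm)
  refine le_trans ?_ (le_dissipation hnonneg hmass hmoment (by positivity) hpeak)
  -- What remains is `21 * 648 * (51 / 50) ≤ 24 (e+1)³ (1 + 3e + e²/3)`.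
  have hc : (13900 : ℝ) ≤
      24 * (Real.exp 1 + 1)^3 * (1 + 3 * Real.exp 1 + (Real.exp 1)^2 / 3) := by
    have he : (2.718 : ℝ) ≤ Real.exp 1 := by linarith [Real.exp_one_gt_d9]
    calc (13900 : ℝ) ≤ 24 * (2.718 + 1)^3 * (1 + 3 * 2.718 + 2.718^2 / 3) := by norm_num
      _ ≤ _ := by gcongr
  calc _ ≤ 1 / 13900 * (21 / ρ m) := by
        refine mul_le_mul (one_div_le_one_div_of_le (by norm_num) hc) hG ?_ (by norm_num)
        exact mul_nonneg (by norm_num) (integral_nonneg fun x => integral_nonneg fun y =>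
          mul_nonneg (mul_nonneg (hnonneg x) (hnonneg y)) (abs_nonneg _))
    _ ≤ 1 / (648 * (51 / 50 * ρ m)) := by
        rw [div_mul_div_comm, div_le_div_iff₀ (by positivity) (by positivity)]
        linarith
end

section
/- Let ρ be a positive, continuous, log-concave probability density on ℝ attaining its maximum value ρ* = ρ(c) at a point c, and let a < c < b satisfy ρ(a) = ρ(b) = ρ*/e. Then ρ* ≤ e/(b−a) and ρ* ≥ 1/((b−a)(1 + 1/e)). -/
open MeasureTheory

/-!
By concavity, `log ρ` is at least `log ρ(c) - 1` on `[a, b]`, so integrating over `[a, b]` alone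
gives `(b - a) ρ(c) / e ≤ 1`. Conversely, to the right of `b` the graph of `log ρ` lies below the
chord through `c` and `b`, extended, which has slope `-1 / (b - c)`; hence the mass of `(b, ∞)` is
at most `(b - c) ρ(c) / e` (`integral_Ioi_le_of_logconcave`). By reflection the mass of `(-∞, a]`
is at most `(c - a) ρ(c) / e`, and the mass of `(a, b]` is at most `(b - a) ρ(c)`. Adding up,
`1 ≤ (b - a) (1 + 1 / e) ρ(c)`.
-/

/-- The chord of `log f` through `c` and `b`, prolonged past `b`, dominates `log f` there. -/
lemma le_exp_chord_of_logconcave {f : ℝ → ℝ} {b c x : ℝ} (hpos : ∀ x, 0 < f x)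
    (hlog : ConcaveOn ℝ Set.univ (fun x => Real.log (f x))) (hcb : c < b)
    (hb : f b = f c / Real.exp 1) (hx : b < x) :
    f x ≤ f c * Real.exp (c / (b - c)) * Real.exp (-(1 / (b - c)) * x) := by
  have hbc : 0 < b - c := sub_pos.2 hcb
  have h := hlog.slope_anti_adjacent (Set.mem_univ c) (Set.mem_univ x) hcb hx
  have hlb : Real.log (f b) = Real.log (f c) - 1 := by
    rw [hb, Real.log_div (hpos c).ne' (Real.exp_pos 1).ne', Real.log_exp]
  have hs : Real.log (f x) ≤ Real.log (f c) + c / (b - c) + -(1 / (b - c)) * x := by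
    simp only [hlb] at h
    rw [div_le_div_iff₀ (sub_pos.2 hx) hbc] at h
    have e : Real.log (f c) + c / (b - c) + -(1 / (b - c)) * x
        = (Real.log (f c) * (b - c) + c - x) / (b - c) := by
      field_simp
      ring
    rw [e, le_div_iff₀ hbc]
    linarith
  calc f x = Real.exp (Real.log (f x)) := (Real.exp_log (hpos x)).symm
    _ ≤ _ := Real.exp_le_exp.2 hs
    _ = _ := by rw [Real.exp_add, Real.exp_add, Real.exp_log (hpos c)]

lemma integral_Ioi_le_of_logconcave {f : ℝ → ℝ} {b c : ℝ} (hpos : ∀ x, 0 < f x)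
    (hlog : ConcaveOn ℝ Set.univ (fun x => Real.log (f x))) (hf : Integrable f) (hcb : c < b)
    (hb : f b = f c / Real.exp 1) :
    ∫ x in Set.Ioi b, f x ≤ (b - c) * (f c / Real.exp 1) := by
  have hbc : 0 < b - c := sub_pos.2 hcb
  have hneg : -(1 / (b - c)) < 0 := neg_lt_zero.2 (by positivity)
  calc ∫ x in Set.Ioi b, f x
      ≤ ∫ x in Set.Ioi b, f c * Real.exp (c / (b - c)) * Real.exp (-(1 / (b - c)) * x) :=
        setIntegral_mono_on hf.integrableOn ((integrableOn_exp_mul_Ioi hneg b).const_mul _)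
          measurableSet_Ioi fun x hx => le_exp_chord_of_logconcave hpos hlog hcb hb hx
    _ = (b - c) * (f c * (Real.exp (c / (b - c)) * Real.exp (-(1 / (b - c)) * b))) := by
        rw [integral_const_mul, integral_exp_mul_Ioi hneg]
        field_simp
    _ = (b - c) * (f c / Real.exp 1) := by
        have e : c / (b - c) + -(1 / (b - c)) * b = -1 := by
          field_simp
          ring
        rw [← Real.exp_add, e, Real.exp_neg, div_eq_mul_inv]

/-- Let `ρ` be a positive, continuous, log-concave probability density on
`ℝ` with maximum `ρ* = ρ(c)`, and `a < c < b` with `ρ(a) = ρ(b) = ρ*/e`. Then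
`ρ* ≤ e/(b-a)` and `ρ* ≥ 1/((b-a)(1+1/e))`. -/
theorem max_density_bounds (ρ : ℝ → ℝ) (a b c : ℝ)
    (hpos : ∀ x, 0 < ρ x) (hcont : Continuous ρ)
    (hlogconc : ConcaveOn ℝ Set.univ (fun x => Real.log (ρ x)))
    (hmass : ∫ x, ρ x = 1)
    (hmax : ∀ x, ρ x ≤ ρ c)
    (hac : a < c) (hcb : c < b)
    (ha : ρ a = ρ c / Real.exp 1) (hb : ρ b = ρ c / Real.exp 1) :
    ρ c ≤ Real.exp 1 / (b - a) ∧ 1 / ((b - a) * (1 + 1 / Real.exp 1)) ≤ ρ c := by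
  have hab : a < b := hac.trans hcb
  have hba : 0 < b - a := sub_pos.2 hab
  have he : 0 < Real.exp 1 := Real.exp_pos 1
  -- A non-integrable `ρ` would have Bochner integral `0`.
  have hint : Integrable ρ := by
    by_contra h
    rw [integral_undef h] at hmass
    exact zero_ne_one hmass
  have hvol : volume.real (Set.Ioc a b) = b - a := Real.volume_real_Ioc_of_le hab.le
  have hconst (k : ℝ) : ∫ _ in Set.Ioc a b, k = (b - a) * k := by
    rw [setIntegral_const, hvol, smul_eq_mul]
  have hconstInt (k : ℝ) : IntegrableOn (fun _ : ℝ => k) (Set.Ioc a b) :=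
    integrableOn_const (by simp)
  constructor
  · have hlow : ∀ x ∈ Set.Ioc a b, ρ c / Real.exp 1 ≤ ρ x := fun x hx => by
      have h := hlogconc.min_le_of_mem_Icc (Set.mem_univ a) (Set.mem_univ b)
        (Set.Ioc_subset_Icc_self hx)
      simp only [ha, hb, min_self] at h
      exact (Real.log_le_log_iff (div_pos (hpos c) he) (hpos x)).1 h
    have h1 : (b - a) * (ρ c / Real.exp 1) ≤ 1 := by
      rw [← hconst]
      refine le_of_le_of_eq ?_ hmass
      exact (setIntegral_mono_on (hconstInt _) hint.integrableOn measurableSet_Ioc hlow).trans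
        (setIntegral_le_integral hint (ae_of_all _ fun x => (hpos x).le))
    rw [le_div_iff₀ hba]
    rw [← mul_div_assoc, div_le_one he] at h1
    linarith
  · have hright := integral_Ioi_le_of_logconcave hpos hlogconc hint hcb hb
    have hleft : ∫ x in Set.Iic a, ρ x ≤ (c - a) * (ρ c / Real.exp 1) := by
      have hlog' : ConcaveOn ℝ Set.univ (fun x => Real.log (ρ (-x))) := by
        exact hlogconc.comp_linearMap (-LinearMap.id : ℝ →ₗ[ℝ] ℝ)
      have h := integral_Ioi_le_of_logconcave (f := fun x => ρ (-x)) (b := -a) (c := -c)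
        (fun x => hpos _) hlog' hint.comp_neg (neg_lt_neg hac) (by simpa using ha)
      rw [integral_comp_neg_Ioi] at h
      simp only [neg_neg] at h
      linarith
    have hmid : ∫ x in Set.Ioc a b, ρ x ≤ (b - a) * ρ c := by
      rw [← hconst]
      exact setIntegral_mono hint.integrableOn (hconstInt _) hmax
    have hsplit : (∫ x in Set.Iic a, ρ x) + (∫ x in Set.Ioc a b, ρ x)
        + ∫ x in Set.Ioi b, ρ x = 1 := by
      rw [← setIntegral_union (Set.Iic_disjoint_Ioc le_rfl) measurableSet_Ioc
        hint.integrableOn hint.integrableOn, Set.Iic_union_Ioc_eq_Iic hab.le,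
        intervalIntegral.integral_Iic_add_Ioi hint.integrableOn hint.integrableOn, hmass]
    rw [div_le_iff₀ (by positivity)]
    have e : ρ c * ((b - a) * (1 + 1 / Real.exp 1))
        = (b - a) * ρ c + (c - a) * (ρ c / Real.exp 1) + (b - c) * (ρ c / Real.exp 1) := by
      ring
    linarith
end

section
/- For real numbers 0 < c < b and ρ* > 0, let q(x) = ρ* exp(−(x−c)/(−c)) for x < 0, q(x) = ρ* for 0 ≤ x < b, and q(x) = ρ* exp(−(x−c)/(b−c)) for x ≥ b. Then ∬_{ℝ²} q(x)q(y)|x−y| dx dy = ρ*² (e²b³ + 9eb³ + 3b³ + 3b²c − 12eb²c − 3bc² + 12ebc²)/(3e²), and consequently ∬_{ℝ²} q(x)q(y)|x−y| dx dy ≤ ρ*² (1 + 3e + e²/3) b³ / e². -/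
/-!
The line is cut at `0` and `b`. With `d = b - c`, the function `q` is `(r/e) exp (-t/c)` at the point
`-t`, equals `r` on `[0, b)`, and is `(r/e) exp (-t/d)` at the point `b + t`
(`integral_eq_three_pieces`). In the inner integral each exponential tail contributes
`∫ t in (0,∞), exp (-t/k) |t - u|`, where `u` is the signed coordinate of the other point, measured
outwards from the endpoint of the tail (`exp_abs_pos`, `exp_abs_nonpos`), and the plateau contributes the quadratic
`∫ y in 0..b, |x - y|`. The resulting inner potential is affine plus an exponential on each tail and
quadratic on the plateau, so the outer integral reduces to integrals of an exponential
times an affine function (`exp_affine`). Finally, the claimed upper bound minus the exact value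
is a positive multiple of `b c (b - c) (4 e - 1)`.
-/

open MeasureTheory
open Set Filter Asymptotics

/-- Every improper integral in the computation is a combination of integrals of this form. -/
lemma exp_affine (k a α β : ℝ) (hk : 0 < k) :
    IntegrableOn (fun t => Real.exp (-(t / k)) * (α + β * t)) (Ioi a) ∧
    ∫ t in Ioi a, Real.exp (-(t / k)) * (α + β * t) =
      k * Real.exp (-(a / k)) * (α + β * a + β * k) := by
  have hb : 0 < 1 / (2 * k) := by positivity
  -- Half of the exponential decay absorbs the affine factor.
  have key : ∀ α β : ℝ, (fun t => Real.exp (-(t / k)) * (α + β * t))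
      =O[atTop] fun t => Real.exp (-(1 / (2 * k)) * t) := by
    intro α β
    have h0 : (fun t : ℝ => α + β * t) =O[atTop] fun t => Real.exp (1 / (2 * k) * t) := by
      have h1 := (isLittleO_pow_exp_pos_mul_atTop 0 hb).isBigO.const_mul_left α
      have h2 := (isLittleO_pow_exp_pos_mul_atTop 1 hb).isBigO.const_mul_left β
      simpa using h1.add h2
    have h3 := (isBigO_refl (fun t : ℝ => Real.exp (-(t / k))) atTop).mul h0
    refine h3.congr_right fun t => ?_
    rw [← Real.exp_add]
    congr 1
    field_simp
    ring
  have hint : IntegrableOn (fun t => Real.exp (-(t / k)) * (α + β * t)) (Ioi a) :=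
    integrable_of_isBigO_exp_neg hb (by fun_prop) (key α β)
  refine ⟨hint, ?_⟩
  have hexp : Tendsto (fun t : ℝ => Real.exp (-(1 / (2 * k)) * t)) atTop (nhds 0) := by
    have h := Real.tendsto_exp_neg_atTop_nhds_zero.comp (tendsto_id.const_mul_atTop hb)
    refine h.congr fun t => ?_
    simp
  have hlim := (key (-k * (α + β * k)) (-k * β)).trans_tendsto hexp
  have hder : ∀ t ∈ Ici a, HasDerivAt
      (fun t => Real.exp (-(t / k)) * (-k * (α + β * k) + -k * β * t))
      (Real.exp (-(t / k)) * (α + β * t)) t := by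
    intro t _
    have h1 : HasDerivAt (fun t : ℝ => Real.exp (-(t / k)))
        (Real.exp (-(t / k)) * (-(1 / k))) t :=
      (((hasDerivAt_id t).div_const k).neg).exp
    have h2 : HasDerivAt (fun t : ℝ => -k * (α + β * k) + -k * β * t) (-k * β * 1) t :=
      ((hasDerivAt_id t).const_mul (-k * β)).const_add _
    refine (h1.mul h2).congr_deriv ?_
    field_simp
    ring
  rw [integral_Ioi_of_hasDerivAt_of_tendsto' hder hint hlim]
  ring

lemma exp_abs_nonpos (k u : ℝ) (hk : 0 < k) (hu : u ≤ 0) :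
    IntegrableOn (fun t => Real.exp (-(t / k)) * |t - u|) (Ioi 0) ∧
    ∫ t in Ioi 0, Real.exp (-(t / k)) * |t - u| = k * (k - u) := by
  have he : EqOn (fun t => Real.exp (-(t / k)) * (-u + 1 * t))
      (fun t => Real.exp (-(t / k)) * |t - u|) (Ioi 0) := by
    intro t ht
    have ht' : 0 < t := ht
    simp only
    rw [abs_of_nonneg (by linarith)]
    ring
  obtain ⟨h1, h2⟩ := exp_affine k 0 (-u) 1 hk
  refine ⟨h1.congr_fun he measurableSet_Ioi, ?_⟩
  rw [← setIntegral_congr_fun measurableSet_Ioi he, h2]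
  simp only [zero_div, neg_zero, Real.exp_zero]
  ring

lemma exp_abs_pos (k u : ℝ) (hk : 0 < k) (hu : 0 < u) :
    IntegrableOn (fun t => Real.exp (-(t / k)) * |t - u|) (Ioi 0) ∧
    ∫ t in Ioi 0, Real.exp (-(t / k)) * |t - u| =
      2 * k ^ 2 * Real.exp (-(u / k)) + k * u - k ^ 2 := by
  have he : EqOn (fun t => Real.exp (-(t / k)) * (-u + 1 * t))
      (fun t => Real.exp (-(t / k)) * |t - u|) (Ioi u) := by
    intro t ht
    have ht' : u < t := ht
    simp only
    rw [abs_of_nonneg (by linarith)]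
    ring
  obtain ⟨h1, h2⟩ := exp_affine k u (-u) 1 hk
  have h1' := h1.congr_fun he measurableSet_Ioi
  have hc : Continuous (fun t => Real.exp (-(t / k)) * |t - u|) := by fun_prop
  have hI : IntegrableOn (fun t => Real.exp (-(t / k)) * |t - u|) (Ioi 0) := by
    rw [← Ioc_union_Ioi_eq_Ioi hu.le]
    exact (hc.integrableOn_Ioc).union h1'
  refine ⟨hI, ?_⟩
  rw [← intervalIntegral.integral_interval_add_Ioi hI h1',
    ← setIntegral_congr_fun measurableSet_Ioi he, h2]
  have he2 : ∫ t in (0:ℝ)..u, Real.exp (-(t / k)) * |t - u|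
      = ∫ t in (0:ℝ)..u, Real.exp (-(t / k)) * (u + (-1) * t) := by
    refine intervalIntegral.integral_congr fun t ht => ?_
    rw [uIcc_of_le hu.le] at ht
    rw [abs_of_nonpos (by linarith [ht.2])]
    ring
  obtain ⟨h3, h4⟩ := exp_affine k 0 u (-1) hk
  obtain ⟨h5, h6⟩ := exp_affine k u u (-1) hk
  have h7 := intervalIntegral.integral_interval_add_Ioi h3 h5
  rw [h4, h6] at h7
  rw [he2]
  simp only [zero_div, neg_zero, Real.exp_zero] at h7
  linear_combination h7

lemma integral_abs_sub_mid (b x : ℝ) (h0 : 0 ≤ x) (hb : x ≤ b) :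
    ∫ y in (0:ℝ)..b, |x - y| = (x ^ 2 + (b - x) ^ 2) / 2 := by
  have hc : Continuous (fun y : ℝ => |x - y|) := by fun_prop
  rw [← intervalIntegral.integral_add_adjacent_intervals
    (hc.intervalIntegrable 0 x) (hc.intervalIntegrable x b)]
  have e1 : ∫ y in (0:ℝ)..x, |x - y| = ∫ y in (0:ℝ)..x, (x - y) := by
    refine intervalIntegral.integral_congr fun t ht => ?_
    rw [uIcc_of_le h0] at ht
    exact abs_of_nonneg (by linarith [ht.2])
  have e2 : ∫ y in x..b, |x - y| = ∫ y in x..b, (y - x) := by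
    refine intervalIntegral.integral_congr fun t ht => ?_
    rw [uIcc_of_le hb] at ht
    rw [abs_of_nonpos (by linarith [ht.1])]
    ring
  rw [e1, e2, intervalIntegral.integral_sub (by simp) (by simp),
    intervalIntegral.integral_sub (by simp) (by simp)]
  simp
  ring

lemma integral_abs_sub_left (b x : ℝ) (h0 : x ≤ 0) (hb : 0 ≤ b) :
    ∫ y in (0:ℝ)..b, |x - y| = b ^ 2 / 2 - b * x := by
  have e2 : ∫ y in (0:ℝ)..b, |x - y| = ∫ y in (0:ℝ)..b, (y - x) := by
    refine intervalIntegral.integral_congr fun t ht => ?_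
    rw [uIcc_of_le hb] at ht
    rw [abs_of_nonpos (by linarith [ht.1])]
    ring
  rw [e2, intervalIntegral.integral_sub (by simp) (by simp)]
  simp

lemma integral_abs_sub_right (b x : ℝ) (h0 : b ≤ x) (hb : 0 ≤ b) :
    ∫ y in (0:ℝ)..b, |x - y| = b * x - b ^ 2 / 2 := by
  have e2 : ∫ y in (0:ℝ)..b, |x - y| = ∫ y in (0:ℝ)..b, (x - y) := by
    refine intervalIntegral.integral_congr fun t ht => ?_
    rw [uIcc_of_le hb] at ht
    exact abs_of_nonneg (by linarith [ht.2])
  rw [e2, intervalIntegral.integral_sub (by simp) (by simp)]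
  simp

/-- Cuts an integral over `ℝ` at `0` and `b`, with both tails parametrised by `t > 0`, the distance
to the nearer endpoint. The values of `f` at `0` and `b` are irrelevant. -/
lemma integral_eq_three_pieces (f g₁ g₂ g₃ : ℝ → ℝ) (b : ℝ) (hb : 0 ≤ b)
    (h₁ : IntegrableOn g₁ (Ioi 0)) (h₂ : Continuous g₂) (h₃ : IntegrableOn g₃ (Ioi 0))
    (e₁ : ∀ t, 0 < t → f (-t) = g₁ t) (e₂ : ∀ x, 0 < x → x < b → f x = g₂ x)
    (e₃ : ∀ t, 0 < t → f (b + t) = g₃ t) :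
    ∫ x, f x = (∫ t in Ioi 0, g₁ t) + (∫ x in (0:ℝ)..b, g₂ x) + ∫ t in Ioi 0, g₃ t := by
  have E₁ : EqOn g₁ (fun t => f (-t)) (Ioi 0) := fun t ht => (e₁ t ht).symm
  have E₃ : EqOn g₃ (fun t => f (b + t)) (Ioi 0) := fun t ht => (e₃ t ht).symm
  have E₂ : EqOn g₂ f (Ioo 0 b) := fun t ht => (e₂ t ht.1 ht.2).symm
  have hp : (fun t => b + t) ⁻¹' Ioi b = Ioi (0:ℝ) := by
    ext t
    simp
  have mp := measurePreserving_add_left (volume : Measure ℝ) b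
  have me : MeasurableEmbedding (fun t : ℝ => b + t) := measurableEmbedding_addLeft b
  have i₁ : IntegrableOn f (Iic 0) := by
    rw [integrableOn_Iic_iff_integrableOn_Iio]
    have h := (Measure.measurePreserving_neg (volume : Measure ℝ)).integrableOn_comp_preimage
      (Homeomorph.neg ℝ).measurableEmbedding (f := f) (s := Iio 0)
    refine h.1 ?_
    simpa [Function.comp_def] using h₁.congr_fun E₁ measurableSet_Ioi
  have i₃ : IntegrableOn f (Ioi b) := by
    refine (mp.integrableOn_comp_preimage me).1 ?_
    rw [hp]
    exact h₃.congr_fun E₃ measurableSet_Ioi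
  have i₂ : IntegrableOn f (Ioc 0 b) := by
    rw [integrableOn_Ioc_iff_integrableOn_Ioo]
    exact (h₂.integrableOn_Ioc.mono_set Ioo_subset_Ioc_self).congr_fun E₂ measurableSet_Ioo
  have i₂₃ : IntegrableOn f (Ioi 0) := by
    rw [← Ioc_union_Ioi_eq_Ioi hb]
    exact i₂.union i₃
  rw [← intervalIntegral.integral_Iic_add_Ioi i₁ i₂₃,
    ← intervalIntegral.integral_interval_add_Ioi i₂₃ i₃,
    setIntegral_congr_fun measurableSet_Ioi E₁, setIntegral_congr_fun measurableSet_Ioi E₃,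
    integral_comp_neg_Ioi, neg_zero]
  have e3 : ∫ t in Ioi 0, f (b + t) = ∫ x in Ioi b, f x := by
    rw [← mp.setIntegral_preimage_emb me f (Ioi b), hp]
  have e2 : ∫ x in (0:ℝ)..b, g₂ x = ∫ x in (0:ℝ)..b, f x := by
    rw [intervalIntegral.integral_of_le hb, intervalIntegral.integral_of_le hb,
      integral_Ioc_eq_integral_Ioo, integral_Ioc_eq_integral_Ioo]
    exact setIntegral_congr_fun measurableSet_Ioo E₂
  rw [e3, e2]
  ring

/-- The outer integrand on a tail: an exponential times the sum of an affine function and the same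
exponential. -/
lemma exp_affine_exp (k A α β γ : ℝ) (hk : 0 < k) :
    IntegrableOn (fun t => A * Real.exp (-(t / k)) * (α + β * t + γ * Real.exp (-(t / k))))
      (Ioi 0) ∧
    ∫ t in Ioi 0, A * Real.exp (-(t / k)) * (α + β * t + γ * Real.exp (-(t / k))) =
      A * (k * α + k ^ 2 * β + k * γ / 2) := by
  obtain ⟨h1, h2⟩ := exp_affine k 0 α β hk
  obtain ⟨h3, h4⟩ := exp_affine (k / 2) 0 γ 0 (by positivity)
  have he : (fun t => A * Real.exp (-(t / k)) * (α + β * t + γ * Real.exp (-(t / k)))) =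
      fun t => A * (Real.exp (-(t / k)) * (α + β * t) +
        Real.exp (-(t / (k / 2))) * (γ + 0 * t)) := by
    funext t
    have : Real.exp (-(t / (k / 2))) = Real.exp (-(t / k)) * Real.exp (-(t / k)) := by
      rw [← Real.exp_add]
      congr 1
      field_simp
      ring
    rw [this]
    ring
  rw [he]
  refine ⟨(h1.add h3).const_mul A, ?_⟩
  rw [integral_const_mul, integral_add h1 h3, h2, h4]
  simp only [zero_div, neg_zero, Real.exp_zero]
  ring

/-- For `0 < c < b` and `ρ* > 0`, the envelope function `q` (with `a = 0`)
satisfies `∬ q(x)q(y)|x-y| dx dy = ρ*²(e²b³+9eb³+3b³+3b²c-12eb²c-3bc²+12ebc²)/(3e²)`,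
and consequently `∬ q(x)q(y)|x-y| dx dy ≤ ρ*²(1+3e+e²/3)b³/e²`. -/
theorem envelope_double_integral (b c r : ℝ) (hc : 0 < c) (hcb : c < b) (hr : 0 < r)
    (q : ℝ → ℝ)
    (hq : ∀ x, q x =
      if x < 0 then r * Real.exp (-((x - c)/(0 - c)))
      else if x < b then r
      else r * Real.exp (-((x - c)/(b - c)))) :
    (∫ x, ∫ y, q x * q y * |x - y|) =
      r^2 * ((Real.exp 1)^2 * b^3 + 9 * Real.exp 1 * b^3 + 3 * b^3 + 3 * b^2 * c
        - 12 * Real.exp 1 * b^2 * c - 3 * b * c^2 + 12 * Real.exp 1 * b * c^2)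
        / (3 * (Real.exp 1)^2) ∧
    (∫ x, ∫ y, q x * q y * |x - y|) ≤
      r^2 * (1 + 3 * Real.exp 1 + (Real.exp 1)^2 / 3) * b^3 / (Real.exp 1)^2 := by
  have hb : 0 < b := hc.trans hcb
  obtain ⟨d, hd⟩ : ∃ d, d = b - c := ⟨_, rfl⟩
  have hd0 : 0 < d := by linarith
  have he1 : (1:ℝ) ≤ Real.exp 1 := Real.one_le_exp zero_le_one
  obtain ⟨e, he⟩ : ∃ e, e = Real.exp 1 := ⟨_, rfl⟩
  rw [← he] at he1 ⊢
  have hepos : 0 < e := by linarith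
  have q1 : ∀ t, 0 < t → q (-t) = r / e * Real.exp (-(t / c)) := by
    intro t ht
    rw [hq, if_pos (by linarith),
      show -((-t - c) / (0 - c)) = -(t / c) - 1 by rw [zero_sub, div_neg]; field_simp, Real.exp_sub, ← he]
    ring
  have q2 : ∀ x, 0 < x → x < b → q x = r := by
    intro x h0 h1
    rw [hq, if_neg (by linarith), if_pos h1]
  have q3 : ∀ t, 0 < t → q (b + t) = r / e * Real.exp (-(t / d)) := by
    intro t ht
    rw [hq, if_neg (by linarith), if_neg (by linarith), ← hd,
      show b + t - c = t + d by rw [hd]; ring,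
      show -((t + d) / d) = -(t / d) - 1 by field_simp; ring, Real.exp_sub, ← he]
    ring
  -- The inner potential at `x`; `V` and `W` are the contributions of the left and right tails.
  have inner : ∀ x V W,
      (IntegrableOn (fun t => Real.exp (-(t / c)) * |t - (-x)|) (Ioi 0) ∧
        ∫ t in Ioi 0, Real.exp (-(t / c)) * |t - (-x)| = V) →
      (IntegrableOn (fun t => Real.exp (-(t / d)) * |t - (x - b)|) (Ioi 0) ∧
        ∫ t in Ioi 0, Real.exp (-(t / d)) * |t - (x - b)| = W) →
      ∫ y, q x * q y * |x - y| =
        q x * (r / e * V + r * (∫ y in (0:ℝ)..b, |x - y|) + r / e * W) := by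
    rintro x V W ⟨hV, rfl⟩ ⟨hW, rfl⟩
    simp only [mul_assoc (q x)]
    rw [integral_const_mul]
    congr 1
    rw [integral_eq_three_pieces (fun y => q y * |x - y|)
      (fun t => r / e * (Real.exp (-(t / c)) * |t - (-x)|)) (fun y => r * |x - y|)
      (fun t => r / e * (Real.exp (-(t / d)) * |t - (x - b)|)) b hb.le
      (hV.const_mul _) (by fun_prop) (hW.const_mul _)]
    · rw [integral_const_mul, integral_const_mul, intervalIntegral.integral_const_mul]
    · intro t ht
      rw [q1 t ht, show x - -t = t - -x by ring]
      ring
    · intro y h0 h1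
      rw [q2 y h0 h1]
    · intro t ht
      rw [q3 t ht, abs_sub_comm, show b + t - x = t - (x - b) by ring]
      ring
  obtain ⟨L1, L2⟩ := exp_affine_exp c (r / e)
    (r / e * (-c ^ 2) + r * (b ^ 2 / 2) + r / e * (d * (d + b)))
    (r / e * c + r * b + r / e * d) (r / e * (2 * c ^ 2)) hc
  obtain ⟨R1, R2⟩ := exp_affine_exp d (r / e)
    (r / e * (-d ^ 2) + r * (b ^ 2 / 2) + r / e * (c * (c + b)))
    (r / e * d + r * b + r / e * c) (r / e * (2 * d ^ 2)) hd0
  have total : (∫ x, ∫ y, q x * q y * |x - y|) =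
      r^2 * (e^2 * b^3 + 9 * e * b^3 + 3 * b^3 + 3 * b^2 * c
        - 12 * e * b^2 * c - 3 * b * c^2 + 12 * e * b * c^2) / (3 * e^2) := by
    rw [integral_eq_three_pieces (fun x => ∫ y, q x * q y * |x - y|) _
      (fun x => r * (r / e * (c * (c + x)) + r * ((x ^ 2 + (b - x) ^ 2) / 2)
        + r / e * (d * (d + b - x)))) _ b hb.le L1 (by fun_prop) R1, L2, R2]
    · -- The plateau integrand is a quadratic polynomial, written by its coefficients.
      have hpoly : ∫ x in (0:ℝ)..b, r * (r / e * (c * (c + x)) + r * ((x ^ 2 + (b - x) ^ 2) / 2)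
          + r / e * (d * (d + b - x))) =
          ∫ x in (0:ℝ)..b, ((r * (r / e * c ^ 2 + r * (b ^ 2 / 2) + r / e * (d * (d + b))) +
            r * (r / e * c - r * b - r / e * d) * x) + r ^ 2 * x ^ 2) := by
        congr 1
        funext x
        ring
      rw [hpoly, intervalIntegral.integral_add
          (Continuous.intervalIntegrable (by fun_prop) _ _)
          (Continuous.intervalIntegrable (by fun_prop) _ _),
        intervalIntegral.integral_add
          (Continuous.intervalIntegrable (by fun_prop) _ _)
          (Continuous.intervalIntegrable (by fun_prop) _ _),
        intervalIntegral.integral_const_mul (r ^ 2),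
        intervalIntegral.integral_const_mul (r * (r / e * c - r * b - r / e * d)),
        intervalIntegral.integral_const, integral_id, integral_pow]
      simp only [smul_eq_mul, hd]
      push_cast
      field_simp
      ring
    · intro t ht
      rw [inner (-t) _ _ (exp_abs_pos c (-(-t)) hc (by linarith))
        (exp_abs_nonpos d (-t - b) hd0 (by linarith)),
        integral_abs_sub_left b (-t) (by linarith) hb.le, q1 t ht, neg_neg]
      ring
    · intro x h0 h1
      rw [inner x _ _ (exp_abs_nonpos c (-x) hc (by linarith))
        (exp_abs_nonpos d (x - b) hd0 (by linarith)),
        integral_abs_sub_mid b x h0.le h1.le, q2 x h0 h1]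
      ring
    · intro t ht
      rw [inner (b + t) _ _ (exp_abs_nonpos c (-(b + t)) hc (by linarith))
        (exp_abs_pos d (b + t - b) hd0 (by linarith)),
        integral_abs_sub_right b (b + t) (by linarith) hb.le, q3 t ht, add_sub_cancel_left]
      ring
  refine ⟨total, ?_⟩
  rw [total, div_le_div_iff₀ (by positivity) (by positivity)]
  have hgap : 0 ≤ r ^ 2 * e ^ 2 * (3 * (b * c * (b - c) * (4 * e - 1))) := by
    have h1 : 0 ≤ b - c := by linarith
    have h2 : 0 ≤ 4 * e - 1 := by linarith
    positivity
  linarith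
end

section
/- For every real b > 0, ∭_{[0,b]³} ( (|x−z| + |y−z|)/2 − |(x + y)/2 − z| ) dx dy dz = b⁴/24. -/
open MeasureTheory

/-!
The functions `uⁿ|u|` are continuous and `uⁿ⁺¹|u|` is everywhere differentiable with derivative
`(n + 2) uⁿ|u|`, also across the corner at `0`. Hence each of the three iterated integrals has an
explicit global antiderivative, a combination of such functions composed with affine maps, and the
fundamental theorem of calculus applies without splitting the cube into regions.
-/

/-- Away from `0` this is the product rule; at `0` the difference quotient is `uⁿ|u| → 0ⁿ|0|`. -/
lemma hasDerivAt_pow_succ_mul_abs (n : ℕ) (u : ℝ) :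
    HasDerivAt (fun t : ℝ => t ^ (n + 1) * |t|) ((n + 2) * u ^ n * |u|) u := by
  rcases eq_or_ne u 0 with rfl | hu
  · rw [hasDerivAt_iff_tendsto_slope]
    have hc : Filter.Tendsto (fun t : ℝ => t ^ n * |t|) (nhdsWithin 0 {0}ᶜ)
        (nhds ((0 : ℝ) ^ n * |(0 : ℝ)|)) :=
      (Continuous.tendsto (by fun_prop) 0).mono_left nhdsWithin_le_nhds
    simp only [abs_zero, mul_zero] at hc ⊢
    refine hc.congr' ?_
    filter_upwards [self_mem_nhdsWithin] with t ht
    have ht' : t ≠ 0 := ht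
    simp only [slope_def_field, abs_zero, mul_zero, sub_zero]
    field_simp
    ring
  · refine ((hasDerivAt_pow (n + 1) u).mul (hasDerivAt_abs hu)).congr_deriv ?_
    have hs : u * (SignType.sign u : ℝ) = |u| := self_mul_sign u
    push_cast
    rw [pow_succ, mul_assoc (u ^ n), hs]
    ring

/-- Chain rule for `uⁿ⁺¹|u|` along an affine map of slope `k`. -/
lemma hasDerivAt_pow_succ_mul_abs_comp (n : ℕ) {g : ℝ → ℝ} {k x : ℝ} (hg : HasDerivAt g k x) :
    HasDerivAt (fun t : ℝ => g t ^ (n + 1) * |g t|) ((n + 2) * g x ^ n * |g x| * k) x :=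
  (hasDerivAt_pow_succ_mul_abs n (g x)).comp x hg

lemma integral_x (b y z : ℝ) :
    (∫ x in (0:ℝ)..b, ((|x - z| + |y - z|)/2 - |(x + y)/2 - z|)) =
      ((b - z) * |b - z| + z * |z|) / 4 + b * |y - z| / 2
        - ((b + y)/2 - z) * |(b + y)/2 - z| + (y/2 - z) * |y/2 - z| := by
  rw [intervalIntegral.integral_eq_sub_of_hasDerivAt
    (f := fun x => (x - z) ^ (0 + 1) * |x - z| / 4 + x * (|y - z| / 2)
      - ((x + y)/2 - z) ^ (0 + 1) * |(x + y)/2 - z|)]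
  · simp only [zero_sub, abs_neg, zero_add]
    ring
  · intro x _
    have h1 := hasDerivAt_pow_succ_mul_abs_comp 0 ((hasDerivAt_id' x).sub_const z)
    have h2 := hasDerivAt_pow_succ_mul_abs_comp 0
      ((((hasDerivAt_id' x).add_const y).div_const 2).sub_const z)
    refine (((h1.div_const 4).add ((hasDerivAt_id' x).mul_const (|y - z| / 2))).sub
      h2).congr_deriv ?_
    push_cast
    ring
  · exact Continuous.intervalIntegrable (by fun_prop) _ _

lemma integral_y (b z : ℝ) :
    (∫ y in (0:ℝ)..b, (((b - z) * |b - z| + z * |z|) / 4 + b * |y - z| / 2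
        - ((b + y)/2 - z) * |(b + y)/2 - z| + (y/2 - z) * |y/2 - z|)) =
      b * ((b - z) * |b - z| + z * |z|) / 2
        - 2 / 3 * ((b - z) ^ 2 * |b - z|) + 4 / 3 * ((b/2 - z) ^ 2 * |b/2 - z|)
        - 2 / 3 * (z ^ 2 * |z|) := by
  rw [intervalIntegral.integral_eq_sub_of_hasDerivAt
    (f := fun y => y * (((b - z) * |b - z| + z * |z|) / 4)
      + b / 4 * ((y - z) ^ (0 + 1) * |y - z|)
      - 2 / 3 * (((b + y)/2 - z) ^ (1 + 1) * |(b + y)/2 - z|)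
      + 2 / 3 * ((y/2 - z) ^ (1 + 1) * |y/2 - z|))]
  · have hb : (b + b) / 2 = b := by ring
    simp only [hb, add_zero, zero_div, zero_sub, abs_neg, zero_add]
    ring
  · intro y _
    have h1 := hasDerivAt_pow_succ_mul_abs_comp 0 ((hasDerivAt_id' y).sub_const z)
    have h2 := hasDerivAt_pow_succ_mul_abs_comp 1
      ((((hasDerivAt_id' y).const_add b).div_const 2).sub_const z)
    have h3 := hasDerivAt_pow_succ_mul_abs_comp 1
      (((hasDerivAt_id' y).div_const 2).sub_const z)
    refine (((((hasDerivAt_id' y).mul_const (((b - z) * |b - z| + z * |z|) / 4)).add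
      (h1.const_mul (b / 4))).sub (h2.const_mul (2 / 3))).add
      (h3.const_mul (2 / 3))).congr_deriv ?_
    push_cast
    ring
  · exact Continuous.intervalIntegrable (by fun_prop) _ _

/-- For every `b > 0`,
`∭_{[0,b]³} ((|x-z|+|y-z|)/2 - |(x+y)/2 - z|) dx dy dz = b⁴/24`. -/
theorem cube_dissipation_integral (b : ℝ) (hb : 0 < b) :
    (∫ z in (0:ℝ)..b, ∫ y in (0:ℝ)..b, ∫ x in (0:ℝ)..b,
      ((|x - z| + |y - z|)/2 - |(x + y)/2 - z|)) = b^4 / 24 := by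
  simp only [integral_x, integral_y]
  rw [intervalIntegral.integral_eq_sub_of_hasDerivAt
    (f := fun z => b / 6 * (z ^ (1 + 1) * |z| - (b - z) ^ (1 + 1) * |b - z|)
      + 1 / 6 * ((b - z) ^ (2 + 1) * |b - z|)
      - 1 / 3 * ((b/2 - z) ^ (2 + 1) * |b/2 - z|)
      - 1 / 6 * (z ^ (2 + 1) * |z|))]
  · have h2 : b / 2 - b = -(b / 2) := by ring
    have h3 : |b / 2| = b / 2 := abs_of_pos (by positivity)
    simp only [h2, abs_neg, h3, sub_self, sub_zero, abs_zero, abs_of_pos hb]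
    ring
  · intro z _
    have h1 := hasDerivAt_pow_succ_mul_abs_comp 1 (hasDerivAt_id' z)
    have h2 := hasDerivAt_pow_succ_mul_abs_comp 1 ((hasDerivAt_id' z).const_sub b)
    have h3 := hasDerivAt_pow_succ_mul_abs_comp 2 ((hasDerivAt_id' z).const_sub b)
    have h4 := hasDerivAt_pow_succ_mul_abs_comp 2 ((hasDerivAt_id' z).const_sub (b / 2))
    have h5 := hasDerivAt_pow_succ_mul_abs_comp 2 (hasDerivAt_id' z)
    refine (((((h1.sub h2).const_mul (b / 6)).add (h3.const_mul (1 / 6))).sub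
      (h4.const_mul (1 / 3))).sub (h5.const_mul (1 / 6))).congr_deriv ?_
    push_cast
    ring
  · exact Continuous.intervalIntegrable (by fun_prop) _ _
end
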